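/- A(1/10;n) ∼ √2·(√5−1)·cosh(3π√(8n−1)/20)/√(8n−1) as n → ∞; that is, the quotient A(1/10;n)·√(8n−1)/(√2·(√5−1)·cosh(3π√(8n−1)/20)) tends to 1 as n → ∞. -/

import Mathlib

open scoped Classical

/-- The M2-rank of a partition: ⌈ℓ/2⌉ − s, where ℓ is the largest part
(0 for the empty partition) and s is the number of parts. -/
def m2Rank {n : ℕ} (P : n.Partition) : ℤ :=
  (((P.parts.sup + 1) / 2 : ℕ) : ℤ) - (Multiset.card P.parts : ℤ)

/-- A partition has no repeated odd parts. -/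
def NoRepeatedOddParts {n : ℕ} (P : n.Partition) : Prop :=
  ∀ j : ℕ, Odd j → P.parts.count j ≤ 1

/-- `N2 r m n` is the number of partitions of `n` without repeated odd parts whose
M2-rank is congruent to `r` modulo `m`. -/
noncomputable def N2 (r : ℤ) (m n : ℕ) : ℕ :=
  Nat.card {P : n.Partition // NoRepeatedOddParts P ∧ m2Rank P ≡ r [ZMOD (m : ℤ)]}

/-- `Acoef a c n = Σ_{r=0}^{c−1} N2(r,c,n)·e^{2πiar/c}`, the coefficient of `q^n`
in the M2-rank generating function `R2(e^{2πia/c};q)`. -/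
noncomputable def Acoef (a : ℤ) (c n : ℕ) : ℂ :=
  ∑ r ∈ Finset.range c,
    (N2 (r : ℤ) c n : ℂ) * Complex.exp (2 * Real.pi * Complex.I * (a : ℂ) * (r : ℂ) / (c : ℂ))

/-!
The generating function `R2(z; q)` of the M2-rank is the product `P(q)` that generates the
partitions without repeated odd parts times an Appell–Lerch sum. Linear recurrences between the
generating functions of partitions of bounded M2-rank express these as `P(q)` times partial theta
series, and summation over the rank gives the Appell–Lerch sum.

Put `z = exp (2 * i * φ)` and `q = exp (-τ)`. The Appell–Lerch sum is a sum over the integers of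
values of `exp (-2τw²) / sinh (τw - iφ)` with signs, hence, up to an integral over a rectangle
which is exponentially small, the residue of this function times `π / sin (πw)` at the remaining
pole `w = iφ / τ`. Since `P` is the reciprocal of a theta function, `P(exp (-τ))` is
`exp (π² / (8τ))` up to a factor of size `√τ` as `τ → 0`, and the residue changes the exponent to
`2 (π/4 - φ)² / τ`.

The coefficient of `q ^ n` is the integral of `R2(z; exp (-τ)) exp (nτ)` over a vertical segment
through the saddle point of `exp (2 (π/4 - φ)² / τ + nτ)`. Near the real axis, the rescaled
integrand tends to a Gaussian. On the rest of the segment, the Lambert series of `log P` bounds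
`P`, and with it `R2`, by an exponential with a rate smaller than `2 (π/4 - φ)²` as long as
`φ ≤ π / 10`.
-/

open Filter Topology

/-! ### Partitions without repeated odd parts -/

section Admissible

/-- A multiset of parts of a partition without repeated odd parts. Working with multisets of all
sizes at once, instead of `Nat.Partition n` for each `n`, turns generating functions into sums over
a single type. -/
def OddDistinct (μ : Multiset ℕ) : Prop :=
  0 ∉ μ ∧ ∀ j : ℕ, Odd j → μ.count j ≤ 1

/-- The M2-rank in terms of the multiset of parts. -/
def partsRank (μ : Multiset ℕ) : ℤ :=
  (((μ.sup + 1) / 2 : ℕ) : ℤ) - (Multiset.card μ : ℤ)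

lemma partsRank_le_iff {μ : Multiset ℕ} {m : ℤ} :
    partsRank μ ≤ m ↔ 0 ≤ m + Multiset.card μ ∧ ∀ x ∈ μ, x ≤ 2 * (m + Multiset.card μ).toNat := by
  rw [← Multiset.sup_le, partsRank]
  omega

lemma oddDistinct_cons_of_even {a : ℕ} {μ : Multiset ℕ} (ha : Even a) (ha0 : a ≠ 0) :
    OddDistinct (a ::ₘ μ) ↔ OddDistinct μ := by
  refine and_congr (by simp [ha0.symm]) (forall₂_congr fun j hj => ?_)
  rw [Multiset.count_cons_of_ne]
  rintro rfl
  exact Nat.not_even_iff_odd.2 hj ha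

lemma oddDistinct_cons_of_odd {a : ℕ} {μ : Multiset ℕ} (ha : Odd a) :
    OddDistinct (a ::ₘ μ) ↔ OddDistinct μ ∧ a ∉ μ := by
  have hcount (j : ℕ) :
      (a ::ₘ μ).count j ≤ 1 ↔ μ.count j ≤ 1 ∧ (j = a → a ∉ μ) := by
    rw [← Multiset.count_eq_zero, Multiset.count_cons]
    split_ifs with h
    · subst h; omega
    · simp [h]
  have h0 : 0 ∉ a ::ₘ μ ↔ 0 ∉ μ := by simp [ha.pos.ne]
  constructor
  · rintro ⟨hz, hc⟩
    exact ⟨⟨h0.1 hz, fun j hj => ((hcount j).1 (hc j hj)).1⟩, ((hcount a).1 (hc a ha)).2 rfl⟩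
  · rintro ⟨⟨hz, hc⟩, hn⟩
    exact ⟨h0.2 hz, fun j hj => (hcount j).2 ⟨hc j hj, fun _ => hn⟩⟩

/-- The multisets without zeros and repeated odd members that have `s` members, all at most `b`. -/
noncomputable def boundedParts (b s : ℕ) : Finset (Multiset ℕ) :=
  ((s • Multiset.range (b + 1)).powerset.toFinset).filter
    (fun μ => OddDistinct μ ∧ Multiset.card μ = s ∧ ∀ x ∈ μ, x ≤ b)

lemma mem_boundedParts {b s : ℕ} {μ : Multiset ℕ} :
    μ ∈ boundedParts b s ↔ OddDistinct μ ∧ Multiset.card μ = s ∧ ∀ x ∈ μ, x ≤ b := by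
  rw [boundedParts, Finset.mem_filter, and_iff_right_iff_imp]
  rintro ⟨-, rfl, hb⟩
  rw [Multiset.mem_toFinset, Multiset.mem_powerset, Multiset.le_iff_count]
  intro a
  by_cases ha : a ∈ μ
  · have hrange : (Multiset.range (b + 1)).count a = 1 :=
      Multiset.count_eq_one_of_mem (Multiset.nodup_range _)
        (Multiset.mem_range.2 (Nat.lt_succ_of_le (hb a ha)))
    rw [Multiset.count_nsmul, hrange, mul_one]
    exact Multiset.count_le_card a μ
  · rw [Multiset.count_eq_zero_of_notMem ha]
    exact Nat.zero_le _

lemma boundedParts_zero_right (b : ℕ) : boundedParts b 0 = {0} := by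
  ext μ
  rw [mem_boundedParts, Finset.mem_singleton]
  constructor
  · exact fun h => Multiset.card_eq_zero.1 h.2.1
  · rintro rfl
    simp [OddDistinct]

lemma boundedParts_zero_left (s : ℕ) : boundedParts 0 (s + 1) = ∅ := by
  ext μ
  rw [mem_boundedParts]
  simp only [Finset.notMem_empty, iff_false]
  rintro ⟨h, hcard, hle⟩
  obtain ⟨a, ha⟩ := Multiset.card_pos_iff_exists_mem.1 (hcard ▸ s.succ_pos : 0 < Multiset.card μ)
  exact h.1 (Nat.le_zero.1 (hle a ha) ▸ ha)

lemma pairwise_disjoint_boundedParts (b : ℕ) :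
    Pairwise (Function.onFun Disjoint (boundedParts b)) :=
  fun _ _ hst => Finset.disjoint_left.2 fun _ hs ht =>
    hst ((mem_boundedParts.1 hs).2.1.symm.trans (mem_boundedParts.1 ht).2.1)

end Admissible

section BoundedGF

variable {R : Type*} [CommRing R] (q : R)

/-- The generating polynomial of partitions without repeated odd parts into `s` parts that are all
at most `b`. -/
noncomputable def boundedGF (b s : ℕ) : R := ∑ μ ∈ boundedParts b s, q ^ μ.sum

lemma boundedGF_zero_right (b : ℕ) : boundedGF q b 0 = 1 := by
  simp [boundedGF, boundedParts_zero_right]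

lemma boundedGF_zero_left (s : ℕ) : boundedGF q 0 (s + 1) = 0 := by
  simp [boundedGF, boundedParts_zero_left]

lemma boundedGF_nonneg {r : ℝ} (hr : 0 ≤ r) (b s : ℕ) : 0 ≤ boundedGF r b s :=
  Finset.sum_nonneg fun _ _ => pow_nonneg hr _

lemma boundedGF_succ_succ {b c : ℕ}
    (hc : ∀ ν : Multiset ℕ, OddDistinct ((b + 1) ::ₘ ν) ∧ (∀ x ∈ ν, x ≤ b + 1) ↔
      OddDistinct ν ∧ ∀ x ∈ ν, x ≤ c) (s : ℕ) :
    boundedGF q (b + 1) (s + 1) = boundedGF q b (s + 1) + q ^ (b + 1) * boundedGF q c s := by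
  have hsplit : boundedParts (b + 1) (s + 1) =
      boundedParts b (s + 1) ∪ (boundedParts c s).image (Multiset.cons (b + 1)) := by
    ext μ
    simp only [Finset.mem_union, Finset.mem_image, mem_boundedParts]
    by_cases hμ : b + 1 ∈ μ
    · obtain ⟨ν, rfl⟩ := Multiset.exists_cons_of_mem hμ
      have hlt : ¬ b + 1 ≤ b := (Nat.lt_succ_self b).not_ge
      simp only [Multiset.card_cons, Multiset.mem_cons, forall_eq_or_imp, Multiset.cons_inj_right,
        exists_eq_right, Nat.add_right_cancel_iff, hlt, le_refl, true_and, false_and, and_false,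
        false_or]
      rw [and_left_comm, hc, and_left_comm]
    · have hle : (∀ x ∈ μ, x ≤ b + 1) ↔ ∀ x ∈ μ, x ≤ b :=
        forall₂_congr fun x hx => by
          have : x ≠ b + 1 := fun h => hμ (h ▸ hx)
          omega
      rw [hle, or_iff_left]
      rintro ⟨ν, -, rfl⟩
      exact hμ (Multiset.mem_cons_self _ _)
  have hdisj : Disjoint (boundedParts b (s + 1))
      ((boundedParts c s).image (Multiset.cons (b + 1))) := by
    refine Finset.disjoint_left.2 fun μ h₁ h₂ => ?_
    obtain ⟨ν, -, rfl⟩ := Finset.mem_image.1 h₂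
    exact (Nat.lt_succ_self b).not_ge ((mem_boundedParts.1 h₁).2.2 _ (Multiset.mem_cons_self _ _))
  rw [boundedGF, hsplit, Finset.sum_union hdisj,
    Finset.sum_image fun _ _ _ _ h => (Multiset.cons_inj_right _).1 h]
  simp only [boundedGF, Multiset.sum_cons, pow_add, Finset.mul_sum]

lemma boundedGF_succ_of_even {b : ℕ} (hb : Even (b + 1)) (s : ℕ) :
    boundedGF q (b + 1) (s + 1) = boundedGF q b (s + 1) + q ^ (b + 1) * boundedGF q (b + 1) s :=
  boundedGF_succ_succ q
    (fun _ => and_congr_left' (oddDistinct_cons_of_even hb b.succ_ne_zero)) s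

lemma boundedGF_succ_of_odd {b : ℕ} (hb : Odd (b + 1)) (s : ℕ) :
    boundedGF q (b + 1) (s + 1) = boundedGF q b (s + 1) + q ^ (b + 1) * boundedGF q b s := by
  refine boundedGF_succ_succ q (fun ν => ?_) s
  rw [oddDistinct_cons_of_odd hb, and_assoc]
  refine and_congr_right' ⟨fun h x hx => ?_, fun h => ⟨fun hmem => ?_, fun x hx => ?_⟩⟩
  · have : x ≠ b + 1 := fun hxb => h.1 (hxb ▸ hx)
    have := h.2 x hx
    omega
  · exact (Nat.lt_succ_self b).not_ge (h _ hmem)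
  · exact (h x hx).trans b.le_succ

lemma boundedGF_even_succ (M s : ℕ) :
    boundedGF q (2 * (M + 1)) (s + 1) = q ^ (2 * M + 2) * boundedGF q (2 * (M + 1)) s +
      boundedGF q (2 * M) (s + 1) + q ^ (2 * M + 1) * boundedGF q (2 * M) s := by
  have hev := boundedGF_succ_of_even q (b := 2 * M + 1) ⟨M + 1, by ring⟩ s
  have hodd := boundedGF_succ_of_odd q (b := 2 * M) ⟨M, rfl⟩ s
  rw [show 2 * (M + 1) = 2 * M + 1 + 1 by ring]
  linear_combination hev + hodd

/-- Dual to `boundedGF_even_succ`: here the exponents are governed by the number of parts, as if one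
added `2` to every part instead of adding a new largest part. -/
lemma boundedGF_succ_even (M s : ℕ) :
    q ^ (2 * s + 2) * boundedGF q (2 * M) (s + 1) + q ^ (2 * s + 1) * boundedGF q (2 * M) s =
      boundedGF q (2 * (M + 1)) (s + 1) - q ^ 2 * boundedGF q (2 * (M + 1)) s := by
  induction M generalizing s with
  | zero =>
    rw [boundedGF_even_succ]
    cases s <;> simp [boundedGF_zero_left, boundedGF_zero_right]
  | succ M ihM =>
    induction s with
    | zero =>
      have hM := boundedGF_even_succ q M 0
      have hM' := boundedGF_even_succ q (M + 1) 0
      have ih := ihM 0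
      simp only [boundedGF_zero_right] at *
      linear_combination ih - hM' + q ^ 2 * hM
    | succ s ihs =>
      linear_combination q ^ 2 * boundedGF_even_succ q (M + 1) s
        - boundedGF_even_succ q (M + 1) (s + 1) + ihM (s + 1) + q ^ (2 * M + 4) * ihs
        + q ^ (2 * s + 4) * boundedGF_even_succ q M (s + 1) + q ^ (2 * M + 3) * ihM s
        + q ^ (2 * s + 3) * boundedGF_even_succ q M s

end BoundedGF

section Summability

variable {r : ℝ}

lemma boundedGF_mono_left (hr : 0 ≤ r) (s : ℕ) : Monotone (fun b => boundedGF r b s) := by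
  refine fun b c hbc => Finset.sum_le_sum_of_subset_of_nonneg (fun μ hμ => ?_)
    fun _ _ _ => pow_nonneg hr _
  obtain ⟨hodd, hcard, hle⟩ := mem_boundedParts.1 hμ
  exact mem_boundedParts.2 ⟨hodd, hcard, fun x hx => (hle x hx).trans hbc⟩

lemma boundedGF_succ_succ_le (hr : 0 ≤ r) (b s : ℕ) :
    boundedGF r (b + 1) (s + 1) ≤ boundedGF r b (s + 1) + r ^ (b + 1) * boundedGF r (b + 1) s := by
  rcases Nat.even_or_odd (b + 1) with hb | hb
  · exact (boundedGF_succ_of_even r hb s).le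
  · rw [boundedGF_succ_of_odd r hb]
    gcongr
    exact boundedGF_mono_left hr s b.le_succ

lemma sum_boundedGF_le_prod (h0 : 0 ≤ r) (h1 : r < 1) (S b : ℕ) :
    ∑ s ∈ Finset.range (S + 1), boundedGF r b s ≤ ∏ j ∈ Finset.range b, (1 - r ^ (j + 1))⁻¹ := by
  induction b with
  | zero =>
    rw [Finset.sum_range_succ']
    simp [boundedGF_zero_left, boundedGF_zero_right]
  | succ b ih =>
    have hpos : 0 < 1 - r ^ (b + 1) := sub_pos.2 (pow_lt_one₀ h0 h1 b.succ_ne_zero)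
    have hstep : ∑ s ∈ Finset.range (S + 1), boundedGF r (b + 1) s ≤
        ∑ s ∈ Finset.range (S + 1), boundedGF r b s +
          r ^ (b + 1) * ∑ s ∈ Finset.range S, boundedGF r (b + 1) s := by
      rw [Finset.sum_range_succ' _ S, Finset.sum_range_succ' _ S, boundedGF_zero_right,
        boundedGF_zero_right, Finset.mul_sum, add_right_comm, ← Finset.sum_add_distrib]
      gcongr
      exact boundedGF_succ_succ_le h0 b _
    have htrunc : ∑ s ∈ Finset.range S, boundedGF r (b + 1) s ≤
        ∑ s ∈ Finset.range (S + 1), boundedGF r (b + 1) s := by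
      rw [Finset.sum_range_succ]
      exact le_add_of_nonneg_right (boundedGF_nonneg h0 _ _)
    rw [Finset.prod_range_succ, ← div_eq_mul_inv, le_div_iff₀ hpos]
    linarith [mul_le_mul_of_nonneg_left htrunc (pow_nonneg h0 (b + 1))]

lemma prod_inv_one_sub_pow_le (h0 : 0 ≤ r) (h1 : r < 1) (b : ℕ) :
    ∏ j ∈ Finset.range b, (1 - r ^ (j + 1))⁻¹ ≤ Real.exp ((1 - r)⁻¹ * (1 - r)⁻¹) := by
  have hr : 0 < 1 - r := sub_pos.2 h1
  have hfactor (j : ℕ) : (1 - r ^ (j + 1))⁻¹ ≤ Real.exp ((1 - r)⁻¹ * r ^ j) := by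
    have hpow : r ^ (j + 1) ≤ r := pow_le_of_le_one h0 h1.le j.succ_ne_zero
    have hpos : 0 < 1 - r ^ (j + 1) := by linarith
    calc (1 - r ^ (j + 1))⁻¹ = r ^ (j + 1) / (1 - r ^ (j + 1)) + 1 := by field_simp; ring
      _ ≤ r ^ j / (1 - r) + 1 := by
        gcongr ?_ + 1
        exact div_le_div₀ (pow_nonneg h0 j) (pow_le_pow_of_le_one h0 h1.le j.le_succ) hr
          (by linarith)
      _ = (1 - r)⁻¹ * r ^ j + 1 := by rw [div_eq_inv_mul]
      _ ≤ Real.exp ((1 - r)⁻¹ * r ^ j) := Real.add_one_le_exp _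
  calc ∏ j ∈ Finset.range b, (1 - r ^ (j + 1))⁻¹
      ≤ ∏ j ∈ Finset.range b, Real.exp ((1 - r)⁻¹ * r ^ j) :=
        Finset.prod_le_prod (fun j _ => inv_nonneg.2
          (sub_nonneg.2 (pow_le_one₀ h0 h1.le))) fun j _ => hfactor j
    _ = Real.exp ((1 - r)⁻¹ * ∑ j ∈ Finset.range b, r ^ j) := by
        rw [← Real.exp_sum, Finset.mul_sum]
    _ ≤ Real.exp ((1 - r)⁻¹ * (1 - r)⁻¹) := by
        gcongr
        rw [← tsum_geometric_of_lt_one h0 h1]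
        exact (summable_geometric_of_lt_one h0 h1).sum_le_tsum _ fun _ _ => pow_nonneg h0 _

lemma summable_pow_sum_oddDistinct (h0 : 0 ≤ r) (h1 : r < 1) :
    Summable (fun μ : Multiset ℕ => if OddDistinct μ then r ^ μ.sum else 0) := by
  refine summable_of_sum_le (c := Real.exp ((1 - r)⁻¹ * (1 - r)⁻¹)) (fun μ => by positivity)
    fun u => ?_
  set S := u.sup Multiset.card
  set b := u.sup Multiset.sum
  calc ∑ μ ∈ u, (if OddDistinct μ then r ^ μ.sum else 0)
      = ∑ μ ∈ u with OddDistinct μ, r ^ μ.sum := (Finset.sum_filter _ _).symm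
    _ ≤ ∑ μ ∈ (Finset.range (S + 1)).biUnion (boundedParts b), r ^ μ.sum := by
        refine Finset.sum_le_sum_of_subset_of_nonneg (fun μ hμ => ?_) fun _ _ _ => pow_nonneg h0 _
        obtain ⟨hu, hodd⟩ := Finset.mem_filter.1 hμ
        refine Finset.mem_biUnion.2 ⟨Multiset.card μ,
          Finset.mem_range.2 (Nat.lt_succ_of_le (Finset.le_sup (f := Multiset.card) hu)),
          mem_boundedParts.2 ⟨hodd, rfl, fun x hx => ?_⟩⟩
        exact (Multiset.single_le_sum (fun _ _ => Nat.zero_le _) x hx).trans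
          (Finset.le_sup (f := Multiset.sum) hu)
    _ = ∑ s ∈ Finset.range (S + 1), boundedGF r b s :=
        Finset.sum_biUnion fun _ _ _ _ h => pairwise_disjoint_boundedParts b h
    _ ≤ Real.exp ((1 - r)⁻¹ * (1 - r)⁻¹) :=
        (sum_boundedGF_le_prod h0 h1 S b).trans (prod_inv_one_sub_pow_le h0 h1 b)

end Summability

section GeneratingFunction

variable {q : ℂ}

/-- The term contributed by `μ` to the generating function of partitions without repeated odd
parts. -/
noncomputable def oddDistinctWeight (q : ℂ) (μ : Multiset ℕ) : ℂ :=
  if OddDistinct μ then q ^ μ.sum else 0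

/-- The generating function of partitions without repeated odd parts. -/
noncomputable def oddDistinctGF (q : ℂ) : ℂ := ∑' μ, oddDistinctWeight q μ

lemma norm_oddDistinctWeight (μ : Multiset ℕ) :
    ‖oddDistinctWeight q μ‖ = if OddDistinct μ then ‖q‖ ^ μ.sum else 0 := by
  unfold oddDistinctWeight
  split_ifs <;> simp

lemma summable_norm_oddDistinctWeight (hq : ‖q‖ < 1) :
    Summable (fun μ => ‖oddDistinctWeight q μ‖) := by
  simp only [norm_oddDistinctWeight]
  exact summable_pow_sum_oddDistinct (norm_nonneg _) hq

lemma summable_ite_oddDistinctWeight (hq : ‖q‖ < 1) (p : Multiset ℕ → Prop) [DecidablePred p] :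
    Summable (fun μ => if p μ then oddDistinctWeight q μ else 0) := by
  refine Summable.of_norm_bounded (summable_norm_oddDistinctWeight hq) fun μ => ?_
  split_ifs <;> simp

lemma norm_tsum_ite_oddDistinctWeight_le (hq : ‖q‖ < 1) (p : Multiset ℕ → Prop)
    [DecidablePred p] :
    ‖∑' μ, if p μ then oddDistinctWeight q μ else 0‖ ≤ ∑' μ, ‖oddDistinctWeight q μ‖ := by
  refine tsum_of_norm_bounded (summable_norm_oddDistinctWeight hq).hasSum fun μ => ?_
  split_ifs <;> simp

lemma tendsto_tsum_ite_oddDistinctWeight (hq : ‖q‖ < 1) {p : ℕ → Multiset ℕ → Prop}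
    [∀ m, DecidablePred (p m)] (hp : ∀ μ, ∀ᶠ m in atTop, p m μ) :
    Tendsto (fun m => ∑' μ, if p m μ then oddDistinctWeight q μ else 0) atTop
      (𝓝 (oddDistinctGF q)) := by
  refine tendsto_tsum_of_dominated_convergence (summable_norm_oddDistinctWeight hq) (fun μ => ?_)
    (Eventually.of_forall fun m μ => ?_)
  · exact tendsto_const_nhds.congr' ((hp μ).mono fun m hm => (if_pos hm).symm)
  · split_ifs <;> simp

lemma tsum_card_fiber_oddDistinctWeight (p : Multiset ℕ → Prop) [DecidablePred p]
    (b s : ℕ) (hp : ∀ μ : Multiset ℕ, Multiset.card μ = s → (p μ ↔ ∀ x ∈ μ, x ≤ b)) :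
    ∑' μ : (Multiset.card ⁻¹' {s} : Set (Multiset ℕ)),
      (if p μ then oddDistinctWeight q μ else 0) = boundedGF q b s := by
  rw [tsum_subtype (Multiset.card ⁻¹' {s} : Set (Multiset ℕ))
    (fun μ => if p μ then oddDistinctWeight q μ else 0), tsum_eq_sum (s := boundedParts b s)]
  · refine Finset.sum_congr rfl fun μ hμ => ?_
    obtain ⟨hodd, hcard, hle⟩ := mem_boundedParts.1 hμ
    rw [Set.indicator_of_mem (by simpa using hcard), if_pos ((hp μ hcard).2 hle),
      oddDistinctWeight, if_pos hodd]
  · intro μ hμ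
    refine Set.indicator_apply_eq_zero.2 fun hcard => ite_eq_right_iff.2 fun hpμ => if_neg ?_
    exact fun hodd => hμ (mem_boundedParts.2 ⟨hodd, hcard, (hp μ hcard).1 hpμ⟩)

end GeneratingFunction

section RankRecurrence

variable {q : ℂ}

/-- The generating function of partitions without repeated odd parts of M2-rank at most `m`. -/
noncomputable def rankLEGF (q : ℂ) (m : ℤ) : ℂ :=
  ∑' μ, if partsRank μ ≤ m then oddDistinctWeight q μ else 0

/-- `boundedGF q (2 * M) s` extended to `M : ℤ` by zero: no partition, not even the empty one, has a
negative bound on its parts. With this convention `M = m + s` encodes rank at most `m`. -/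
noncomputable def boundedGFInt (q : ℂ) (M : ℤ) (s : ℕ) : ℂ :=
  if 0 ≤ M then boundedGF q (2 * M.toNat) s else 0

lemma boundedGFInt_natCast (k s : ℕ) : boundedGFInt q k s = boundedGF q (2 * k) s := by
  simp [boundedGFInt]

lemma boundedGFInt_of_neg {M : ℤ} (hM : M < 0) (s : ℕ) : boundedGFInt q M s = 0 :=
  if_neg hM.not_ge

lemma hasSum_rankLEGF (hq : ‖q‖ < 1) (m : ℤ) :
    HasSum (fun s : ℕ => boundedGFInt q (m + s) s) (rankLEGF q m) := by
  have hfiber := (summable_ite_oddDistinctWeight hq (partsRank · ≤ m)).hasSum.tsum_fiberwise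
    Multiset.card
  refine hfiber.congr_fun fun s => ?_
  by_cases hM : 0 ≤ m + s
  · rw [boundedGFInt, if_pos hM]
    refine (tsum_card_fiber_oddDistinctWeight (partsRank · ≤ m) _ s fun μ hμ => ?_).symm
    rw [partsRank_le_iff, hμ, and_iff_right hM]
  · rw [boundedGFInt, if_neg hM]
    refine ((tsum_congr fun μ => if_neg fun hμ => hM ?_).trans tsum_zero).symm
    have hcard : Multiset.card (μ : Multiset ℕ) = s := μ.2
    exact hcard ▸ (partsRank_le_iff.1 hμ).1

lemma boundedGFInt_succ (M : ℤ) (s : ℕ) :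
    boundedGFInt q M (s + 1) = q ^ (2 * M) * boundedGFInt q M s + boundedGFInt q (M - 1) (s + 1) +
      q ^ (2 * M - 1) * boundedGFInt q (M - 1) s - (if M = 0 ∧ s = 0 then 1 else 0) := by
  rcases lt_trichotomy M 0 with h | rfl | h
  · simp [boundedGFInt_of_neg h, boundedGFInt_of_neg (show M - 1 < 0 by omega), h.ne]
  · cases s <;> simp [boundedGFInt, boundedGF_zero_left, boundedGF_zero_right]
  · obtain ⟨k, rfl⟩ : ∃ k : ℕ, M = k + 1 := ⟨(M - 1).toNat, by omega⟩
    rw [if_neg (by omega), add_sub_cancel_right, show 2 * ((k : ℤ) + 1) - 1 = (2 * k + 1 : ℕ) by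
      push_cast; ring, show 2 * ((k : ℤ) + 1) = (2 * k + 2 : ℕ) by push_cast; ring,
      ← Nat.cast_succ]
    simp only [zpow_natCast, boundedGFInt_natCast, Nat.succ_eq_add_one, boundedGF_even_succ]
    ring

lemma boundedGFInt_zero (M : ℤ) :
    boundedGFInt q M 0 = boundedGFInt q (M - 1) 0 + (if M = 0 then 1 else 0) := by
  unfold boundedGFInt
  simp only [boundedGF_zero_right]
  split_ifs <;> first | omega | simp

lemma boundedGFInt_add_one (M : ℤ) (s : ℕ) :
    q ^ (2 * s + 2) * boundedGFInt q M (s + 1) + q ^ (2 * s + 1) * boundedGFInt q M s =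
      boundedGFInt q (M + 1) (s + 1) - q ^ 2 * boundedGFInt q (M + 1) s +
        (if M = -1 ∧ s = 0 then q ^ 2 else 0) := by
  rcases lt_trichotomy M (-1) with h | rfl | h
  · simp [boundedGFInt_of_neg (show M < 0 by omega), boundedGFInt_of_neg (show M + 1 < 0 by omega),
      h.ne]
  · cases s <;> simp [boundedGFInt, boundedGF_zero_left, boundedGF_zero_right]
  · obtain ⟨k, rfl⟩ : ∃ k : ℕ, M = k := ⟨M.toNat, by omega⟩
    rw [if_neg (by omega), add_zero, ← Nat.cast_succ]
    simp only [boundedGFInt_natCast]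
    exact boundedGF_succ_even q k s

/-- The generating function of partitions of M2-rank at most `m`, where each partition with `s`
parts is weighted by an additional part `2 * (m + s)`, the largest one allowed. It is eliminated
between the two recurrences `rankLEGF_sub_pred` and `mul_largestPartGF_add`. -/
noncomputable def largestPartGF (q : ℂ) (m : ℤ) : ℂ :=
  ∑' s : ℕ, q ^ (2 * (m + s)) * boundedGFInt q (m + s) s

lemma hasSum_largestPartGF (hq : ‖q‖ < 1) (m : ℤ) :
    HasSum (fun s : ℕ => q ^ (2 * (m + s)) * boundedGFInt q (m + s) s) (largestPartGF q m) := by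
  refine (Summable.of_norm_bounded (hasSum_rankLEGF hq m).summable.norm fun s => ?_).hasSum
  rcases lt_or_ge (m + s) 0 with h | h
  · simp [boundedGFInt_of_neg h]
  · obtain ⟨k, hk⟩ := Int.eq_ofNat_of_zero_le h
    rw [hk, norm_mul, show (2 * (k : ℤ)) = (2 * k : ℕ) by push_cast; ring, zpow_natCast, norm_pow]
    exact mul_le_of_le_one_left (norm_nonneg _) (pow_le_one₀ (norm_nonneg _) hq.le)

lemma hasSum_ite_and_eq_zero (p : Prop) [Decidable p] (f : ℕ → Prop)
    [DecidablePred f] (hf : f 0 ↔ p) (x : ℂ) :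
    HasSum (fun s : ℕ => if f s ∧ s = 0 then x else 0) (if p then x else 0) := by
  convert hasSum_ite_eq (0 : ℕ) (if p then x else 0) using 2 with s
  rcases eq_or_ne s 0 with rfl | hs
  · simp [hf]
  · simp [hs]

lemma rankLEGF_sub_pred (hq : ‖q‖ < 1) (hq0 : q ≠ 0) (m : ℤ) :
    rankLEGF q m - rankLEGF q (m - 1) = largestPartGF q (m + 1) + q * largestPartGF q m +
      (if m = 0 then 1 else 0) - (if m = -1 then 1 else 0) := by
  have hterm (s : ℕ) : boundedGFInt q (m + (s + 1 : ℕ)) (s + 1) -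
        boundedGFInt q (m - 1 + (s + 1 : ℕ)) (s + 1) =
      q ^ (2 * (m + 1 + s)) * boundedGFInt q (m + 1 + s) s +
        q * (q ^ (2 * (m + s)) * boundedGFInt q (m + s) s) -
        (if m + 1 + s = 0 ∧ s = 0 then 1 else 0) := by
    have h := boundedGFInt_succ (q := q) (m + 1 + s) s
    rw [show m + 1 + s - 1 = m + (s : ℤ) by ring,
      show 2 * (m + 1 + s) - 1 = 1 + 2 * (m + (s : ℤ)) by ring, zpow_add₀ hq0, zpow_one] at h
    rw [show m + ((s + 1 : ℕ) : ℤ) = m + 1 + s by push_cast; ring,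
      show m - 1 + ((s + 1 : ℕ) : ℤ) = m + s by push_cast; ring]
    linear_combination h
  have hlhs := ((hasSum_nat_add_iff' 1).2 (hasSum_rankLEGF hq m)).sub
    ((hasSum_nat_add_iff' 1).2 (hasSum_rankLEGF hq (m - 1)))
  have hrhs := ((hasSum_largestPartGF hq (m + 1)).add ((hasSum_largestPartGF hq m).mul_left q)).sub
    (hasSum_ite_and_eq_zero (m = -1) (fun s => m + 1 + s = 0) (by simp; omega) 1)
  have heq := hlhs.unique (by simpa only [hterm] using hrhs)
  simp only [Finset.range_one, Finset.sum_singleton, Nat.cast_zero, add_zero] at heq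
  linear_combination heq + boundedGFInt_zero (q := q) m

lemma mul_largestPartGF_add (hq : ‖q‖ < 1) (hq0 : q ≠ 0) (m : ℤ) :
    q * (largestPartGF q (m + 1) + q * largestPartGF q m) =
      q ^ (2 * m + 2) * (rankLEGF q (m + 1) - q ^ 2 * rankLEGF q (m + 2)
        + (if m = -2 then q ^ 2 else 0) - (if m = -1 then 1 else 0)) := by
  have hterm (s : ℕ) :
      q * (q ^ (2 * (m + 1 + s)) * boundedGFInt q (m + 1 + s) s) +
        q ^ 2 * (q ^ (2 * (m + (s + 1 : ℕ))) * boundedGFInt q (m + (s + 1 : ℕ)) (s + 1)) =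
      q ^ (2 * m + 2) * (boundedGFInt q (m + 1 + (s + 1 : ℕ)) (s + 1) -
        q ^ 2 * boundedGFInt q (m + 2 + s) s +
        (if m + 1 + s = -1 ∧ s = 0 then q ^ 2 else 0)) := by
    have h := boundedGFInt_add_one (q := q) (m + 1 + s) s
    rw [show m + ((s + 1 : ℕ) : ℤ) = m + 1 + s by push_cast; ring,
      show m + 1 + ((s + 1 : ℕ) : ℤ) = m + 1 + s + 1 by push_cast; ring,
      show m + 2 + (s : ℤ) = m + 1 + s + 1 by ring, ← h,
      show 2 * (m + 1 + (s : ℤ)) = 2 * m + 2 + ((2 * s : ℕ) : ℤ) by push_cast; ring,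
      zpow_add₀ hq0, zpow_natCast]
    ring
  have hlhs := ((hasSum_largestPartGF hq (m + 1)).mul_left q).add
    (((hasSum_nat_add_iff' 1).2 (hasSum_largestPartGF hq m)).mul_left (q ^ 2))
  have hrhs := ((((hasSum_nat_add_iff' 1).2 (hasSum_rankLEGF hq (m + 1))).sub
    ((hasSum_rankLEGF hq (m + 2)).mul_left (q ^ 2))).add (hasSum_ite_and_eq_zero (m = -2)
      (fun s => m + 1 + s = -1) (by simp; omega) (q ^ 2))).mul_left (q ^ (2 * m + 2))
  have heq := hlhs.unique (by simpa only [hterm] using hrhs)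
  simp only [Finset.range_one, Finset.sum_singleton, Nat.cast_zero, add_zero] at heq
  have hzero := boundedGFInt_zero (q := q) (m + 1)
  simp only [add_sub_cancel_right, show m + 1 = 0 ↔ m = -1 by omega] at hzero
  have hpow : q ^ (2 * m + 2) = q ^ (2 * m) * q ^ 2 := by
    rw [zpow_add₀ hq0]
    norm_cast
  linear_combination heq - q ^ (2 * m + 2) * hzero - boundedGFInt q m 0 * hpow

/-- The combination of rank generating functions that, by `rankInvariant_pred`, does not depend on
`m` except for jumps at `m = 0, -1, -2`, which are caused by the empty partition. -/
noncomputable def rankInvariant (q : ℂ) (m : ℤ) : ℂ :=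
  q * rankLEGF q m + q ^ (2 * m + 4) * rankLEGF q (m + 2)

lemma rankInvariant_pred (hq : ‖q‖ < 1) (hq0 : q ≠ 0) (m : ℤ) :
    rankInvariant q (m - 1) = rankInvariant q m -
      (if m = 0 then q else 0) + (if m = -1 then q + 1 else 0) - (if m = -2 then 1 else 0) := by
  have hX := rankLEGF_sub_pred hq hq0 m
  have hY := mul_largestPartGF_add hq hq0 m
  have hpow : q ^ (2 * m + 4) = q ^ (2 * m + 2) * q ^ 2 := by
    rw [show 2 * m + 4 = 2 * m + 2 + (2 : ℕ) by push_cast; ring, zpow_add₀ hq0, zpow_natCast]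
  unfold rankInvariant
  rw [show 2 * (m - 1) + 4 = 2 * m + 2 by ring, show m - 1 + 2 = m + 1 by ring, hpow]
  rcases eq_or_ne m 0 with rfl | h₀
  · norm_num at hX hY ⊢
    linear_combination -q * hX - hY
  rcases eq_or_ne m (-1) with rfl | h₁
  · norm_num at hX hY ⊢
    linear_combination -q * hX - hY
  rcases eq_or_ne m (-2) with rfl | h₂
  · norm_num at hX hY ⊢
    field_simp at hX hY ⊢
    linear_combination -q ^ 3 * hX - hY
  simp only [h₀, h₁, h₂, if_false] at hX hY ⊢
  linear_combination -q * hX - hY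

end RankRecurrence

section PartialTheta

variable {q : ℂ}

lemma norm_rankLEGF_le (hq : ‖q‖ < 1) (m : ℤ) :
    ‖rankLEGF q m‖ ≤ ∑' μ, ‖oddDistinctWeight q μ‖ :=
  norm_tsum_ite_oddDistinctWeight_le hq _

lemma tendsto_rankLEGF (hq : ‖q‖ < 1) :
    Tendsto (fun m : ℕ => rankLEGF q m) atTop (𝓝 (oddDistinctGF q)) := by
  refine tendsto_tsum_ite_oddDistinctWeight hq fun μ => ?_
  filter_upwards [eventually_ge_atTop (partsRank μ).toNat] with m hm
  omega

lemma tendsto_rankInvariant (hq : ‖q‖ < 1) :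
    Tendsto (fun m : ℕ => rankInvariant q m) atTop (𝓝 (q * oddDistinctGF q)) := by
  rw [← add_zero (q * _)]
  refine ((tendsto_rankLEGF hq).const_mul q).add ?_
  refine squeeze_zero_norm (a := fun m : ℕ => ‖q‖ ^ m * ∑' μ, ‖oddDistinctWeight q μ‖)
    (fun m => ?_) ?_
  · rw [norm_mul, show 2 * (m : ℤ) + 4 = (2 * m + 4 : ℕ) by push_cast; ring, zpow_natCast, norm_pow]
    exact mul_le_mul (pow_le_pow_of_le_one (norm_nonneg _) hq.le (by omega))
      (norm_rankLEGF_le hq _) (norm_nonneg _) (by positivity)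
  · simpa using (tendsto_pow_atTop_nhds_zero_of_lt_one (norm_nonneg _) hq).mul_const _

lemma rankInvariant_natCast (hq : ‖q‖ < 1) (hq0 : q ≠ 0) (m : ℕ) :
    rankInvariant q m = q * oddDistinctGF q := by
  have hconst (m : ℕ) : rankInvariant q m = rankInvariant q 0 := by
    induction m with
    | zero => simp
    | succ m ih =>
      have h := rankInvariant_pred hq hq0 ((m : ℤ) + 1)
      rw [if_neg (by omega), if_neg (by omega), if_neg (by omega), add_sub_cancel_right, ih] at h
      push_cast
      linear_combination -h
  rw [hconst]
  exact tendsto_nhds_unique (tendsto_const_nhds.congr fun m => (hconst m).symm)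
    (tendsto_rankInvariant hq)

lemma rankInvariant_neg_sub_three (hq : ‖q‖ < 1) (hq0 : q ≠ 0) (d : ℕ) :
    rankInvariant q (-(d : ℤ) - 3) = q * oddDistinctGF q := by
  induction d with
  | zero =>
    have h := rankInvariant_natCast hq hq0 0
    have h₀ := rankInvariant_pred hq hq0 0
    have h₁ := rankInvariant_pred hq hq0 (-1)
    have h₂ := rankInvariant_pred hq hq0 (-2)
    norm_num at h h₀ h₁ h₂ ⊢
    linear_combination h + h₀ + h₁ + h₂
  | succ d ih =>
    have h := rankInvariant_pred hq hq0 (-(d : ℤ) - 3)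
    rw [if_neg (by omega), if_neg (by omega), if_neg (by omega), ih] at h
    push_cast
    rw [show -((d : ℤ) + 1) - 3 = -(d : ℤ) - 3 - 1 by ring]
    linear_combination h

lemma oddDistinctGF_eq_rankLEGF (hq : ‖q‖ < 1) (hq0 : q ≠ 0) :
    oddDistinctGF q = rankLEGF q (-1) + q * rankLEGF q 1 + 1 := by
  have h := rankInvariant_natCast hq hq0 0
  have h₀ := rankInvariant_pred hq hq0 0
  norm_num at h h₀
  rw [h] at h₀
  norm_num [rankInvariant] at h₀
  apply mul_left_cancel₀ hq0
  linear_combination -h₀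

lemma oddDistinctGF_sub_rankLEGF_rec (hq : ‖q‖ < 1) (hq0 : q ≠ 0) (m : ℕ) :
    oddDistinctGF q - rankLEGF q m = q ^ (2 * m + 3) * rankLEGF q ((m + 2 : ℕ) : ℤ) := by
  have h := rankInvariant_natCast hq hq0 m
  rw [rankInvariant, show 2 * (m : ℤ) + 4 = (2 * m + 4 : ℕ) by push_cast; ring, zpow_natCast] at h
  apply mul_left_cancel₀ hq0
  push_cast
  linear_combination -h

lemma rankLEGF_neg_rec (hq : ‖q‖ < 1) (hq0 : q ≠ 0) (m : ℕ) :
    rankLEGF q (-(m : ℤ) - 1) =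
      q ^ (2 * m + 3) * (oddDistinctGF q - rankLEGF q (-((m + 2 : ℕ) : ℤ) - 1)) := by
  have h := rankInvariant_neg_sub_three hq hq0 m
  have hpow : q ^ (2 * (-(m : ℤ) - 3) + 4) * q ^ (2 * m + 2) = 1 := by
    rw [← zpow_natCast, ← zpow_add₀ hq0,
      show 2 * (-(m : ℤ) - 3) + 4 + ((2 * m + 2 : ℕ) : ℤ) = 0 by push_cast; ring, zpow_zero]
  rw [rankInvariant, show -(m : ℤ) - 3 + 2 = -(m : ℤ) - 1 by ring] at h
  rw [show -((m + 2 : ℕ) : ℤ) - 1 = -(m : ℤ) - 3 by push_cast; ring]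
  linear_combination q ^ (2 * m + 2) * h - rankLEGF q (-(m : ℤ) - 1) * hpow

/-- The `k`-th term of a partial theta series, the sum of
`(-1) ^ (j - 1) * q ^ (j * (2 * j + 1) + 2 * m * j)` over `j = k + 1 ≥ 1`. Its product with
`oddDistinctGF q` counts the partitions of M2-rank above `m`. -/
noncomputable def partialThetaTerm (q : ℂ) (m k : ℕ) : ℂ :=
  (-1) ^ k * q ^ ((k + 1) * (2 * (k + 1) + 1) + 2 * m * (k + 1))

lemma norm_partialThetaTerm_le (hq : ‖q‖ < 1) (m k : ℕ) :
    ‖partialThetaTerm q m k‖ ≤ ‖q‖ ^ m * ‖q‖ ^ k := by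
  rw [partialThetaTerm, norm_mul, norm_pow, norm_neg, norm_one, one_pow, one_mul, norm_pow,
    ← pow_add]
  exact pow_le_pow_of_le_one (norm_nonneg _) hq.le (by nlinarith)

lemma summable_partialThetaTerm (hq : ‖q‖ < 1) (m : ℕ) : Summable (partialThetaTerm q m) :=
  .of_norm_bounded ((summable_geometric_of_lt_one (norm_nonneg q) hq).mul_left (‖q‖ ^ m))
    (norm_partialThetaTerm_le hq m)

lemma norm_tsum_partialThetaTerm_le (hq : ‖q‖ < 1) (m : ℕ) :
    ‖∑' k, partialThetaTerm q m k‖ ≤ (1 - ‖q‖)⁻¹ :=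
  tsum_of_norm_bounded (hasSum_geometric_of_lt_one (norm_nonneg q) hq) fun k =>
    (norm_partialThetaTerm_le hq m k).trans
      (mul_le_of_le_one_left (by positivity) (pow_le_one₀ (norm_nonneg _) hq.le))

lemma tsum_partialThetaTerm_rec (hq : ‖q‖ < 1) (m : ℕ) :
    ∑' k, partialThetaTerm q m k =
      q ^ (2 * m + 3) * (1 - ∑' k, partialThetaTerm q (m + 2) k) := by
  rw [(summable_partialThetaTerm hq m).tsum_eq_zero_add, mul_sub, ← tsum_mul_left, mul_one,
    sub_eq_add_neg, ← tsum_neg]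
  congr 1
  · rw [partialThetaTerm]
    ring_nf
  · refine tsum_congr fun k => ?_
    simp only [partialThetaTerm]
    ring

lemma eq_of_rec_of_norm_sub_le (hq : ‖q‖ < 1) {x y : ℕ → ℂ} {p : ℂ} {B : ℝ}
    (hx : ∀ m, x m = q ^ (2 * m + 3) * (p - x (m + 2)))
    (hy : ∀ m, y m = q ^ (2 * m + 3) * (p - y (m + 2)))
    (hB : ∀ m, ‖x m - y m‖ ≤ B) (m : ℕ) : x m = y m := by
  have hdecay (j : ℕ) : ∀ m, ‖x m - y m‖ ≤ ‖q‖ ^ j * B := by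
    induction j with
    | zero => simpa using hB
    | succ j ih =>
      intro m
      have hstep : x m - y m = -(q ^ (2 * m + 3) * (x (m + 2) - y (m + 2))) := by
        rw [hx m, hy m]; ring
      rw [hstep, norm_neg, norm_mul, norm_pow, pow_succ' _ j, mul_assoc]
      exact mul_le_mul (pow_le_of_le_one (norm_nonneg _) hq.le (by omega)) (ih _) (norm_nonneg _)
        (norm_nonneg _)
  have hlim : Tendsto (fun j : ℕ => ‖q‖ ^ j * B) atTop (𝓝 0) := by
    simpa using (tendsto_pow_atTop_nhds_zero_of_lt_one (norm_nonneg _) hq).mul_const B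
  exact sub_eq_zero.1 (norm_le_zero_iff.1 (ge_of_tendsto' hlim fun j => hdecay j m))

lemma eq_oddDistinctGF_mul_tsum (hq : ‖q‖ < 1) {x : ℕ → ℂ} {B : ℝ}
    (hx : ∀ m, x m = q ^ (2 * m + 3) * (oddDistinctGF q - x (m + 2))) (hB : ∀ m, ‖x m‖ ≤ B)
    (m : ℕ) : x m = oddDistinctGF q * ∑' k, partialThetaTerm q m k := by
  refine eq_of_rec_of_norm_sub_le (y := fun m => oddDistinctGF q * ∑' k, partialThetaTerm q m k)
    (B := B + ‖oddDistinctGF q‖ * (1 - ‖q‖)⁻¹) hq hx (fun m => ?_) (fun m => ?_) m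
  · rw [tsum_partialThetaTerm_rec hq]
    ring
  · refine (norm_sub_le _ _).trans (add_le_add (hB m) ?_)
    rw [norm_mul]
    gcongr
    exact norm_tsum_partialThetaTerm_le hq m

lemma oddDistinctGF_sub_rankLEGF (hq : ‖q‖ < 1) (hq0 : q ≠ 0) (m : ℕ) :
    oddDistinctGF q - rankLEGF q m = oddDistinctGF q * ∑' k, partialThetaTerm q m k := by
  refine eq_oddDistinctGF_mul_tsum (x := fun m => oddDistinctGF q - rankLEGF q m)
    (B := ‖oddDistinctGF q‖ + ∑' μ, ‖oddDistinctWeight q μ‖) hq (fun m => ?_) (fun m => ?_) m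
  · rw [oddDistinctGF_sub_rankLEGF_rec hq hq0, sub_sub_cancel]
  · exact (norm_sub_le _ _).trans (add_le_add le_rfl (norm_rankLEGF_le hq _))

lemma rankLEGF_neg (hq : ‖q‖ < 1) (hq0 : q ≠ 0) (m : ℕ) :
    rankLEGF q (-(m : ℤ) - 1) = oddDistinctGF q * ∑' k, partialThetaTerm q m k :=
  eq_oddDistinctGF_mul_tsum (x := fun m : ℕ => rankLEGF q (-(m : ℤ) - 1)) hq
    (rankLEGF_neg_rec hq hq0) (fun _ => norm_rankLEGF_le hq _) m

/-- The second factor is `∑ (-1) ^ j * q ^ (j * (2 * j + 1))` over `j : ℤ`, so this is Gauss's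
identity. -/
lemma oddDistinctGF_mul_theta (hq : ‖q‖ < 1) (hq0 : q ≠ 0) :
    oddDistinctGF q *
      (1 - q - ∑' k, partialThetaTerm q 0 k + q * ∑' k, partialThetaTerm q 1 k) = 1 := by
  have hneg := rankLEGF_neg hq hq0 0
  have hpos := oddDistinctGF_sub_rankLEGF hq hq0 1
  norm_num at hneg hpos
  linear_combination oddDistinctGF_eq_rankLEGF hq hq0 + hneg - q * hpos

end PartialTheta

section RankGF

variable {q z : ℂ}

/-- The two-variable generating function `R2(z; q)` of partitions without repeated odd parts, with
`z` marking the M2-rank. -/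
noncomputable def rankGF (z q : ℂ) : ℂ := ∑' μ, oddDistinctWeight q μ * z ^ partsRank μ

/-- The coefficient of `q ^ n` in `R2(z; q)`. -/
noncomputable def rankSum (z : ℂ) (n : ℕ) : ℂ :=
  ∑ P : n.Partition, if NoRepeatedOddParts P then z ^ m2Rank P else 0

lemma summable_rankGF (hz : ‖z‖ = 1) (hq : ‖q‖ < 1) :
    Summable (fun μ => oddDistinctWeight q μ * z ^ partsRank μ) := by
  refine .of_norm_bounded (summable_norm_oddDistinctWeight hq) fun μ => ?_
  rw [norm_mul, norm_zpow, hz, one_zpow, mul_one]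

lemma oddDistinct_parts_iff {n : ℕ} (P : n.Partition) :
    OddDistinct P.parts ↔ NoRepeatedOddParts P :=
  and_iff_right fun h0 => (P.parts_pos h0).false

lemma tsum_sum_fiber_oddDistinctWeight (n : ℕ) :
    ∑' μ : (Multiset.sum ⁻¹' {n} : Set (Multiset ℕ)),
      oddDistinctWeight q μ * z ^ partsRank μ = rankSum z n * q ^ n := by
  have hinj : Function.Injective (fun P : n.Partition => P.parts) := fun _ _ => Nat.Partition.ext
  rw [tsum_subtype (Multiset.sum ⁻¹' {n} : Set (Multiset ℕ))
    (fun μ => oddDistinctWeight q μ * z ^ partsRank μ), ← hinj.tsum_eq, tsum_fintype, rankSum,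
    Finset.sum_mul]
  · refine Finset.sum_congr rfl fun P _ => ?_
    rw [Set.indicator_of_mem (by simp [P.parts_sum])]
    simp only [oddDistinctWeight, oddDistinct_parts_iff, P.parts_sum, ite_mul, zero_mul]
    exact if_congr Iff.rfl (mul_comm _ _) rfl
  · intro μ hμ
    obtain ⟨hsum, hne⟩ := Set.indicator_apply_ne_zero.1 hμ
    have hodd : OddDistinct μ := by
      by_contra h
      simp [oddDistinctWeight, h] at hne
    exact ⟨⟨μ, fun {i} hi => Nat.pos_of_ne_zero fun h => hodd.1 (h ▸ hi), by simpa using hsum⟩, rfl⟩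

lemma hasSum_rankSum (hz : ‖z‖ = 1) (hq : ‖q‖ < 1) :
    HasSum (fun n : ℕ => rankSum z n * q ^ n) (rankGF z q) :=
  ((summable_rankGF hz hq).hasSum.tsum_fiberwise Multiset.sum).congr_fun fun n =>
    (tsum_sum_fiber_oddDistinctWeight n).symm

lemma natCast_N2 (r : ℤ) (m n : ℕ) : (N2 r m n : ℂ) =
    ∑ P : n.Partition, if NoRepeatedOddParts P ∧ m2Rank P ≡ r [ZMOD m] then 1 else 0 := by
  rw [N2, Nat.card_eq_fintype_card, Fintype.card_subtype, Finset.card_filter]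
  push_cast
  rfl

lemma zpow_eq_of_modEq {c : ℕ} (hz : z ^ c = 1) (hz0 : z ≠ 0) {k r : ℤ} (h : k ≡ r [ZMOD c]) :
    z ^ k = z ^ r := by
  obtain ⟨j, hj⟩ := h.symm.dvd
  rw [show k = r + c * j by omega, zpow_add₀ hz0, zpow_mul, zpow_natCast, hz, one_zpow, mul_one]

lemma sum_range_ite_modEq_mul_pow {c : ℕ} (hc : c ≠ 0) (hz : z ^ c = 1) (hz0 : z ≠ 0) (k : ℤ) :
    ∑ r ∈ Finset.range c, (if k ≡ (r : ℤ) [ZMOD c] then 1 else 0) * z ^ r = z ^ k := by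
  have hc' : (c : ℤ) ≠ 0 := by exact_mod_cast hc
  obtain ⟨r, hr⟩ := Int.eq_ofNat_of_zero_le (Int.emod_nonneg k hc')
  have hrc : r < c := by
    have := Int.emod_lt_of_pos k (by omega : (0 : ℤ) < c)
    omega
  have hmod : k ≡ (r : ℤ) [ZMOD c] := hr ▸ (Int.mod_modEq k c).symm
  rw [Finset.sum_eq_single_of_mem r (Finset.mem_range.2 hrc), if_pos hmod, one_mul,
    zpow_eq_of_modEq hz hz0 hmod, zpow_natCast]
  intro s hs hne
  rw [if_neg, zero_mul]
  intro h
  have hsr : s ≡ r [MOD c] := (Int.natCast_modEq_iff).1 (h.symm.trans hmod)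
  exact hne (hsr.eq_of_lt_of_lt (Finset.mem_range.1 hs) hrc)

lemma Acoef_eq_rankSum (a : ℤ) {c : ℕ} (hc : c ≠ 0) (n : ℕ) :
    Acoef a c n = rankSum (Complex.exp (2 * (Real.pi * a / c : ℝ) * Complex.I)) n := by
  have hc' : (c : ℂ) ≠ 0 := by exact_mod_cast hc
  set z := Complex.exp (2 * (Real.pi * a / c : ℝ) * Complex.I) with hz
  have hzc : z ^ c = 1 := by
    rw [hz, ← Complex.exp_nat_mul, ← Complex.exp_int_mul_two_pi_mul_I a]
    congr 1
    push_cast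
    field_simp
  have hexp (r : ℕ) : Complex.exp (2 * Real.pi * Complex.I * a * (r : ℂ) / c) = z ^ r := by
    rw [hz, ← Complex.exp_nat_mul]
    congr 1
    push_cast
    ring
  simp only [Acoef, natCast_N2, hexp, Finset.sum_mul]
  rw [Finset.sum_comm, rankSum]
  refine Finset.sum_congr rfl fun P _ => ?_
  split_ifs with hP
  · simpa only [hP, true_and] using
      sum_range_ite_modEq_mul_pow hc hzc (Complex.exp_ne_zero _) (m2Rank P)
  · simp [hP]

lemma hasSum_zpow_mul_rankLEGF_sub (hz : ‖z‖ = 1) (hq : ‖q‖ < 1) :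
    HasSum (fun m : ℤ => z ^ m * (rankLEGF q m - rankLEGF q (m - 1))) (rankGF z q) := by
  refine ((summable_rankGF hz hq).hasSum.tsum_fiberwise partsRank).congr_fun fun m => ?_
  rw [tsum_subtype (partsRank ⁻¹' {m} : Set (Multiset ℕ))
      (fun μ => oddDistinctWeight q μ * z ^ partsRank μ), rankLEGF, rankLEGF,
    ← (summable_ite_oddDistinctWeight hq _).tsum_sub (summable_ite_oddDistinctWeight hq _),
    ← tsum_mul_left]
  refine tsum_congr fun μ => ?_
  rw [Set.indicator_apply, Set.mem_preimage, Set.mem_singleton_iff]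
  rcases lt_trichotomy (partsRank μ) m with h | h | h
  · simp [h.le, Int.le_sub_one_iff.2 h, h.ne]
  · simp [h, mul_comm]
  · simp [h.not_ge, (show ¬ partsRank μ ≤ m - 1 by omega), h.ne']

end RankGF

section AppellLerch

variable {q z : ℂ}

/-- The `k`-th term of the series that the partial theta series with `m = n` produce when their
successive differences are weighted by `z ^ (n + 1)`. -/
noncomputable def lerchTerm (z q : ℂ) (k : ℕ) : ℂ :=
  partialThetaTerm q 0 k * (1 - q ^ (2 * (k + 1))) * (z / (1 - z * q ^ (2 * (k + 1))))

/-- The `k`-th term of the Appell–Lerch sum that represents `R2(z; q)`. -/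
noncomputable def appellTerm (z q : ℂ) (k : ℕ) : ℂ :=
  partialThetaTerm q 0 k * ((z - 1) / (1 - z * q ^ (2 * (k + 1))) +
    (z⁻¹ - 1) / (1 - z⁻¹ * q ^ (2 * (k + 1))))

lemma partialThetaTerm_eq_mul_pow (m k : ℕ) :
    partialThetaTerm q m k = partialThetaTerm q 0 k * (q ^ (2 * (k + 1))) ^ m := by
  simp only [partialThetaTerm]
  ring

lemma norm_mul_pow_lt_one (hz : ‖z‖ = 1) (hq : ‖q‖ < 1) (k : ℕ) :
    ‖z * q ^ (2 * (k + 1))‖ < 1 := by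
  rw [norm_mul, hz, one_mul, norm_pow]
  exact pow_lt_one₀ (norm_nonneg _) hq (by omega)

lemma one_sub_mul_pow_ne_zero (hz : ‖z‖ = 1) (hq : ‖q‖ < 1) (k : ℕ) :
    1 - z * q ^ (2 * (k + 1)) ≠ 0 := by
  refine sub_ne_zero.2 fun h => (norm_mul_pow_lt_one hz hq k).ne ?_
  rw [← h, norm_one]

lemma summable_pow_mul_partialThetaTerm (hz : ‖z‖ = 1) (hq : ‖q‖ < 1) :
    Summable (fun p : ℕ × ℕ =>
      z ^ (p.1 + 1) * (partialThetaTerm q p.1 p.2 * (1 - q ^ (2 * (p.2 + 1))))) := by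
  have hgeom := summable_geometric_of_lt_one (norm_nonneg q) hq
  refine .of_norm_bounded ((hgeom.mul_of_nonneg hgeom (fun _ => by positivity)
    fun _ => by positivity).mul_right 2) fun p => ?_
  rw [norm_mul, norm_mul, norm_pow, hz, one_pow, one_mul]
  refine mul_le_mul (norm_partialThetaTerm_le hq _ _) ((norm_sub_le _ _).trans ?_) (norm_nonneg _)
    (by positivity)
  rw [norm_one, norm_pow]
  linarith [pow_le_one₀ (n := 2 * (p.2 + 1)) (norm_nonneg q) hq.le]

lemma hasSum_lerchTerm (hz : ‖z‖ = 1) (hq : ‖q‖ < 1) :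
    HasSum (lerchTerm z q) (∑' p : ℕ × ℕ,
      z ^ (p.1 + 1) * (partialThetaTerm q p.1 p.2 * (1 - q ^ (2 * (p.2 + 1))))) := by
  refine ((Equiv.prodComm ℕ ℕ).hasSum_iff.2
    (summable_pow_mul_partialThetaTerm hz hq).hasSum).prod_fiberwise fun k => ?_
  have hgeom := (hasSum_geometric_of_norm_lt_one (norm_mul_pow_lt_one hz hq k)).mul_left
    (partialThetaTerm q 0 k * (1 - q ^ (2 * (k + 1))) * z)
  rw [lerchTerm, div_eq_mul_inv, ← mul_assoc]
  refine hgeom.congr_fun fun n => ?_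
  simp only [Function.comp, Equiv.prodComm_apply, Prod.swap]
  rw [partialThetaTerm_eq_mul_pow n k, mul_pow]
  ring

lemma hasSum_pow_mul_tsum_partialThetaTerm_sub (hz : ‖z‖ = 1) (hq : ‖q‖ < 1) :
    HasSum (fun n : ℕ => z ^ (n + 1) *
        (∑' k, partialThetaTerm q n k - ∑' k, partialThetaTerm q (n + 1) k))
      (∑' k, lerchTerm z q k) := by
  rw [(hasSum_lerchTerm hz hq).tsum_eq]
  refine (summable_pow_mul_partialThetaTerm hz hq).hasSum.prod_fiberwise fun n => ?_
  have hdiff := (summable_partialThetaTerm hq n).hasSum.sub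
    (summable_partialThetaTerm hq (n + 1)).hasSum
  refine (hdiff.mul_left (z ^ (n + 1))).congr_fun fun k => ?_
  simp only [partialThetaTerm_eq_mul_pow n k, partialThetaTerm_eq_mul_pow (n + 1) k]
  ring

lemma appellTerm_eq (hz : ‖z‖ = 1) (hq : ‖q‖ < 1) (k : ℕ) :
    appellTerm z q k = lerchTerm z q k + lerchTerm z⁻¹ q k - 2 * partialThetaTerm q 0 k := by
  have hsplit {x : ℂ} (hx : ‖x‖ = 1) : (x - 1) / (1 - x * q ^ (2 * (k + 1))) =
      (1 - q ^ (2 * (k + 1))) * (x / (1 - x * q ^ (2 * (k + 1)))) - 1 := by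
    have hne := one_sub_mul_pow_ne_zero hx hq k
    field_simp
    ring
  rw [appellTerm, lerchTerm, lerchTerm, hsplit hz, hsplit (by rw [norm_inv, hz, inv_one])]
  ring

lemma hasSum_appellTerm (hz : ‖z‖ = 1) (hq : ‖q‖ < 1) :
    HasSum (appellTerm z q)
      (∑' k, lerchTerm z q k + ∑' k, lerchTerm z⁻¹ q k - 2 * ∑' k, partialThetaTerm q 0 k) := by
  have hz' : ‖z⁻¹‖ = 1 := by rw [norm_inv, hz, inv_one]
  refine HasSum.congr_fun ?_ (appellTerm_eq hz hq)
  exact ((hasSum_lerchTerm hz hq).summable.hasSum.add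
    (hasSum_lerchTerm hz' hq).summable.hasSum).sub
      ((summable_partialThetaTerm hq 0).hasSum.mul_left 2)

lemma hasSum_pow_mul_rankLEGF_sub (hz : ‖z‖ = 1) (hq : ‖q‖ < 1) (hq0 : q ≠ 0) :
    HasSum (fun n : ℕ => z ^ (n : ℤ) * (rankLEGF q n - rankLEGF q ((n : ℤ) - 1)))
      (oddDistinctGF q * (1 + ∑' k, lerchTerm z q k - 2 * ∑' k, partialThetaTerm q 0 k)) := by
  rw [← hasSum_nat_add_iff' 1]
  have hsum := (hasSum_pow_mul_tsum_partialThetaTerm_sub hz hq).mul_left (oddDistinctGF q)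
  have hzero := oddDistinctGF_sub_rankLEGF hq hq0 0
  have hneg := rankLEGF_neg hq hq0 0
  simp only [Nat.cast_zero, neg_zero, zero_sub] at hzero hneg
  convert! hsum using 1
  · ext n
    rw [show ((n + 1 : ℕ) : ℤ) - 1 = n by push_cast; ring, zpow_natCast]
    linear_combination z ^ (n + 1) *
      (oddDistinctGF_sub_rankLEGF hq hq0 n - oddDistinctGF_sub_rankLEGF hq hq0 (n + 1))
  · simp only [Finset.range_one, Finset.sum_singleton, Nat.cast_zero, zpow_zero, zero_sub]
    linear_combination hzero + hneg

lemma hasSum_zpow_neg_mul_rankLEGF_sub (hz : ‖z‖ = 1) (hq : ‖q‖ < 1) (hq0 : q ≠ 0) :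
    HasSum (fun n : ℕ => z ^ (-((n : ℤ) + 1)) *
        (rankLEGF q (-((n : ℤ) + 1)) - rankLEGF q (-((n : ℤ) + 1) - 1)))
      (oddDistinctGF q * ∑' k, lerchTerm z⁻¹ q k) := by
  have hz' : ‖z⁻¹‖ = 1 := by rw [norm_inv, hz, inv_one]
  refine ((hasSum_pow_mul_tsum_partialThetaTerm_sub hz' hq).mul_left _).congr_fun fun n => ?_
  have hn := rankLEGF_neg hq hq0 n
  have hn' := rankLEGF_neg hq hq0 (n + 1)
  rw [show z ^ (-((n : ℤ) + 1)) = z⁻¹ ^ (n + 1) by rw [zpow_neg, inv_pow]; norm_cast,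
    show -((n : ℤ) + 1) = -(n : ℤ) - 1 by ring, hn,
    show -(n : ℤ) - 1 - 1 = -((n + 1 : ℕ) : ℤ) - 1 by push_cast; ring, hn']
  ring

lemma rankGF_eq_oddDistinctGF_mul (hz : ‖z‖ = 1) (hq : ‖q‖ < 1) (hq0 : q ≠ 0) :
    rankGF z q = oddDistinctGF q * (1 + ∑' k, appellTerm z q k) := by
  have hint := (hasSum_zpow_mul_rankLEGF_sub hz hq).unique
    ((hasSum_pow_mul_rankLEGF_sub hz hq hq0).of_nat_of_neg_add_one
      (hasSum_zpow_neg_mul_rankLEGF_sub hz hq hq0))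
  rw [hint, (hasSum_appellTerm hz hq).tsum_eq]
  ring

end AppellLerch

/-! ### The product formula -/

section ProductFormula

variable {q : ℂ}

/-- The generating function of partitions without repeated odd parts into parts that are at most
`b`. -/
noncomputable def cappedGF (q : ℂ) (b : ℕ) : ℂ :=
  ∑' μ : Multiset ℕ, if ∀ x ∈ μ, x ≤ b then oddDistinctWeight q μ else 0

lemma hasSum_cappedGF (hq : ‖q‖ < 1) (b : ℕ) :
    HasSum (fun s : ℕ => boundedGF q b s) (cappedGF q b) :=
  ((summable_ite_oddDistinctWeight hq fun μ => ∀ x ∈ μ, x ≤ b).hasSum.tsum_fiberwise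
    Multiset.card).congr_fun fun s =>
      (tsum_card_fiber_oddDistinctWeight _ b s fun _ _ => Iff.rfl).symm

lemma tendsto_cappedGF (hq : ‖q‖ < 1) : Tendsto (cappedGF q) atTop (𝓝 (oddDistinctGF q)) := by
  refine tendsto_tsum_ite_oddDistinctWeight hq fun μ => ?_
  filter_upwards [eventually_ge_atTop μ.sup] with b hb
  exact Multiset.sup_le.1 hb

lemma hasSum_cappedGF_sub_one (hq : ‖q‖ < 1) (b : ℕ) :
    HasSum (fun s : ℕ => boundedGF q b (s + 1)) (cappedGF q b - 1) := by
  simpa [boundedGF_zero_right] using (hasSum_nat_add_iff' 1).2 (hasSum_cappedGF hq b)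

lemma cappedGF_zero (hq : ‖q‖ < 1) : cappedGF q 0 = 1 := by
  have h := hasSum_cappedGF_sub_one hq 0
  simp only [boundedGF_zero_left] at h
  exact sub_eq_zero.1 (h.unique hasSum_zero)

lemma cappedGF_succ_of_even (hq : ‖q‖ < 1) {b : ℕ} (hb : Even (b + 1)) :
    cappedGF q (b + 1) * (1 - q ^ (b + 1)) = cappedGF q b := by
  have h := (hasSum_cappedGF_sub_one hq (b + 1)).unique
    (((hasSum_cappedGF_sub_one hq b).add ((hasSum_cappedGF hq (b + 1)).mul_left
      (q ^ (b + 1)))).congr_fun (boundedGF_succ_of_even q hb))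
  linear_combination h

lemma cappedGF_succ_of_odd (hq : ‖q‖ < 1) {b : ℕ} (hb : Odd (b + 1)) :
    cappedGF q (b + 1) = cappedGF q b * (1 + q ^ (b + 1)) := by
  have h := (hasSum_cappedGF_sub_one hq (b + 1)).unique
    (((hasSum_cappedGF_sub_one hq b).add ((hasSum_cappedGF hq b).mul_left
      (q ^ (b + 1)))).congr_fun (boundedGF_succ_of_odd q hb))
  linear_combination h

lemma norm_neg_pow_lt_one (hq : ‖q‖ < 1) {k : ℕ} (hk : k ≠ 0) : ‖(-q) ^ k‖ < 1 := by
  rw [norm_pow, norm_neg]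
  exact pow_lt_one₀ (norm_nonneg _) hq hk

lemma one_sub_ne_zero_of_norm_lt_one {w : ℂ} (hw : ‖w‖ < 1) : 1 - w ≠ 0 :=
  sub_ne_zero.2 fun h => by simp [← h] at hw

lemma cappedGF_eq_exp (hq : ‖q‖ < 1) (b : ℕ) : cappedGF q b =
    Complex.exp (∑ n ∈ Finset.range b, (-1) ^ n * Complex.log (1 - (-q) ^ (n + 1))) := by
  induction b with
  | zero => simp [cappedGF_zero hq]
  | succ b ih =>
    have hne := one_sub_ne_zero_of_norm_lt_one (norm_neg_pow_lt_one hq b.add_one_ne_zero)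
    rw [Finset.sum_range_succ, Complex.exp_add, ← ih]
    rcases Nat.even_or_odd b with hb | hb
    · rw [hb.neg_one_pow, one_mul, Complex.exp_log hne, hb.add_one.neg_pow, sub_neg_eq_add]
      exact cappedGF_succ_of_odd hq hb.add_one
    · rw [hb.neg_one_pow, neg_one_mul, Complex.exp_neg, Complex.exp_log hne,
        ← cappedGF_succ_of_even hq hb.add_one, hb.add_one.neg_pow]
      rw [hb.add_one.neg_pow] at hne
      exact (mul_inv_cancel_right₀ hne _).symm

/-- The `k`-th term of the Lambert series for the logarithm of `oddDistinctGF q`. For `k = 0` it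
vanishes since `x / 0 = 0`. -/
noncomputable def lambertTerm (q : ℂ) (k : ℕ) : ℂ :=
  -((-q) ^ k / (1 + (-q) ^ k)) / k

lemma summable_logSeries (hq : ‖q‖ < 1) :
    Summable (fun p : ℕ × ℕ => (-1) ^ p.1 * -(((-q) ^ (p.1 + 1)) ^ p.2 / p.2)) := by
  have hgeom := summable_geometric_of_lt_one (norm_nonneg q) hq
  refine .of_norm_bounded (hgeom.mul_of_nonneg hgeom (fun _ => by positivity)
    fun _ => by positivity) fun ⟨n, k⟩ => ?_
  rcases Nat.eq_zero_or_pos k with rfl | hk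
  · simp
  simp only [norm_mul, norm_neg, norm_div, norm_pow, norm_one, one_pow, one_mul,
    Complex.norm_natCast]
  refine (div_le_self (by positivity) (by exact_mod_cast hk)).trans ?_
  rw [← pow_mul, ← pow_add]
  exact pow_le_pow_of_le_one (norm_nonneg _) hq.le (by nlinarith)

lemma hasSum_lambertTerm (hq : ‖q‖ < 1) :
    HasSum (lambertTerm q) (∑' p : ℕ × ℕ, (-1) ^ p.1 * -(((-q) ^ (p.1 + 1)) ^ p.2 / p.2)) := by
  refine ((Equiv.prodComm ℕ ℕ).hasSum_iff.2
    (summable_logSeries hq).hasSum).prod_fiberwise fun k => ?_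
  rcases eq_or_ne k 0 with rfl | hk
  · simp [lambertTerm]
  have hnorm : ‖-(-q) ^ k‖ < 1 := by
    rw [norm_neg]
    exact norm_neg_pow_lt_one hq hk
  have hgeom := (hasSum_geometric_of_norm_lt_one hnorm).mul_left (-(-q) ^ k / k)
  rw [sub_neg_eq_add] at hgeom
  convert! hgeom using 1
  · ext n
    simp only [Function.comp, Equiv.prodComm_apply, Prod.swap]
    ring
  · rw [lambertTerm]
    ring

lemma oddDistinctGF_eq_exp (hq : ‖q‖ < 1) :
    oddDistinctGF q = Complex.exp (∑' k, lambertTerm q k) := by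
  have hlog : HasSum (fun n : ℕ => (-1) ^ n * Complex.log (1 - (-q) ^ (n + 1)))
      (∑' k, lambertTerm q k) := by
    rw [(hasSum_lambertTerm hq).tsum_eq]
    refine (summable_logSeries hq).hasSum.prod_fiberwise fun n => ?_
    simpa using ((Complex.hasSum_taylorSeries_neg_log
      (norm_neg_pow_lt_one hq n.succ_ne_zero)).neg).mul_left ((-1) ^ n)
  refine tendsto_nhds_unique (tendsto_cappedGF hq) ?_
  rw [funext (cappedGF_eq_exp hq)]
  exact (Complex.continuous_exp.tendsto _).comp hlog.tendsto_sum_nat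

end ProductFormula

section MinorArcs

variable {q τ z : ℂ} {t : ℝ}

lemma norm_lambertTerm_le_of_le {δ : ℝ} (hδ : 0 < δ) (hq : ‖q‖ ≤ 1) {k : ℕ}
    (h : δ ≤ ‖1 + (-q) ^ k‖) : ‖lambertTerm q k‖ ≤ 1 / δ / k := by
  rw [lambertTerm, norm_div, norm_neg, norm_div, norm_pow, norm_neg, Complex.norm_natCast]
  gcongr
  exact pow_le_one₀ (norm_nonneg _) hq

lemma norm_exp_neg (τ : ℂ) : ‖Complex.exp (-τ)‖ = Real.exp (-τ.re) := by
  rw [Complex.norm_exp, Complex.neg_re]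

lemma norm_exp_neg_lt_one (hτ : 0 < τ.re) : ‖Complex.exp (-τ)‖ < 1 := by
  rw [norm_exp_neg, Real.exp_lt_one_iff]
  exact neg_neg_of_pos hτ

lemma exp_neg_div_one_sub_exp_neg_le (ht : 0 < t) :
    Real.exp (-t) / (1 - Real.exp (-t)) ≤ 1 / t := by
  have hlt : Real.exp (-t) < 1 := Real.exp_lt_one_iff.2 (neg_neg_of_pos ht)
  rw [div_le_div_iff₀ (sub_pos.2 hlt) ht, Real.exp_neg]
  have hexp := Real.add_one_le_exp t
  field_simp
  linarith

lemma norm_lambertTerm_le (ht : 0 < t) (hq : ‖q‖ = Real.exp (-t)) (k : ℕ) :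
    ‖lambertTerm q k‖ ≤ 1 / (k : ℝ) ^ 2 / t := by
  rcases Nat.eq_zero_or_pos k with rfl | hk
  · simp [lambertTerm]
  have hk' : (0 : ℝ) < k := by exact_mod_cast hk
  have hpow : ‖(-q) ^ k‖ = Real.exp (-(k * t)) := by
    rw [norm_pow, norm_neg, hq, ← Real.exp_nat_mul, mul_neg]
  have hlt : Real.exp (-(k * t)) < 1 := Real.exp_lt_one_iff.2 (neg_neg_of_pos (by positivity))
  have hden : 1 - Real.exp (-(k * t)) ≤ ‖1 + (-q) ^ k‖ := by
    simpa [hpow] using norm_sub_norm_le 1 (-(-q) ^ k)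
  rw [lambertTerm, norm_div, norm_neg, norm_div, Complex.norm_natCast, hpow]
  calc Real.exp (-(k * t)) / ‖1 + (-q) ^ k‖ / k
      ≤ Real.exp (-(k * t)) / (1 - Real.exp (-(k * t))) / k := by
        have := sub_pos.2 hlt
        gcongr
    _ ≤ 1 / (k * t) / k :=
        div_le_div_of_nonneg_right (exp_neg_div_one_sub_exp_neg_le (by positivity)) hk'.le
    _ = 1 / (k : ℝ) ^ 2 / t := by field_simp

lemma norm_oddDistinctGF_le (ht : 0 < t) (hq : ‖q‖ = Real.exp (-t)) (S : Finset ℕ) :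
    ‖oddDistinctGF q‖ ≤ Real.exp (∑ k ∈ S, ‖lambertTerm q k‖ +
      (Real.pi ^ 2 / 6 - ∑ k ∈ S, 1 / (k : ℝ) ^ 2) / t) := by
  have hq1 : ‖q‖ < 1 := by
    rw [hq, Real.exp_lt_one_iff]
    exact neg_neg_of_pos ht
  have hs := (hasSum_lambertTerm hq1).summable.norm
  have hzeta := hasSum_zeta_two.div_const t
  have htail := Summable.tsum_le_tsum
    (fun k : ((S : Set ℕ)ᶜ : Set ℕ) => norm_lambertTerm_le ht hq k) (hs.subtype _)
    (hzeta.summable.subtype _)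
  have hsplit := hzeta.summable.sum_add_tsum_compl (s := S)
  rw [hzeta.tsum_eq, ← Finset.sum_div] at hsplit
  rw [oddDistinctGF_eq_exp hq1, Complex.norm_exp]
  refine Real.exp_le_exp.2 ((Complex.re_le_norm _).trans ((norm_tsum_le_tsum_norm hs).trans ?_))
  rw [← hs.sum_add_tsum_compl (s := S), sub_div]
  linarith

lemma exp_neg_mul_sq_le_normSq_one_sub_exp (him : |τ.im| ≤ Real.pi) :
    Real.exp (-τ.re) * (2 * |τ.im| / Real.pi) ^ 2 ≤ ‖1 - Complex.exp (-τ)‖ ^ 2 := by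
  set r := Real.exp (-τ.re) with hr
  have hnorm : ‖1 - Complex.exp (-τ)‖ ^ 2 = (1 - r) ^ 2 + 2 * r * (1 - Real.cos τ.im) := by
    rw [← Complex.normSq_eq_norm_sq, Complex.normSq_apply]
    simp only [Complex.sub_re, Complex.sub_im, Complex.exp_re, Complex.exp_im, Complex.one_re,
      Complex.one_im, Complex.neg_re, Complex.neg_im, Real.cos_neg, Real.sin_neg, ← hr]
    linear_combination r ^ 2 * Real.sin_sq_add_cos_sq τ.im
  have hcos : (2 * |τ.im| / Real.pi) ^ 2 ≤ 2 * (1 - Real.cos τ.im) := by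
    have := Real.cos_le_one_sub_mul_cos_sq him
    rw [div_pow, mul_pow, sq_abs]
    linear_combination 2 * this
  rw [hnorm]
  linarith [mul_le_mul_of_nonneg_left hcos (Real.exp_pos (-τ.re)).le, sq_nonneg (1 - r)]

lemma norm_lambertTerm_exp_neg_one_le (hτ : 0 < τ.re) (him0 : τ.im ≠ 0)
    (him : |τ.im| ≤ Real.pi) :
    ‖lambertTerm (Complex.exp (-τ)) 1‖ ≤ Real.pi / (2 * |τ.im|) := by
  have hsq := exp_neg_mul_sq_le_normSq_one_sub_exp him
  set r := Real.exp (-τ.re) with hr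
  have hr0 : 0 < r := Real.exp_pos _
  have hr1 : r ≤ 1 := Real.exp_le_one_iff.2 (neg_nonpos.2 hτ.le)
  have : 0 < |τ.im| := abs_pos.2 him0
  have hden : r * (2 * |τ.im| / Real.pi) ≤ ‖1 - Complex.exp (-τ)‖ := by
    refine le_of_sq_le_sq ?_ (norm_nonneg _)
    rw [mul_pow]
    refine le_trans ?_ hsq
    gcongr
    exact pow_le_of_le_one hr0.le hr1 two_ne_zero
  have : 0 < r * (2 * |τ.im| / Real.pi) := by positivity
  simp only [lambertTerm, pow_one, Nat.cast_one, div_one, norm_neg, norm_div, norm_exp_neg,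
    ← sub_eq_add_neg, ← hr]
  calc r / ‖1 - Complex.exp (-τ)‖ ≤ r / (r * (2 * |τ.im| / Real.pi)) := by gcongr
    _ = Real.pi / (2 * |τ.im|) := by field_simp

lemma norm_lambertTerm_exp_neg_one_le_of_sector (hτ : 0 < τ.re) (him : |τ.im| ≤ Real.pi)
    (hsec : 1000 * τ.re ≤ |τ.im|) : ‖lambertTerm (Complex.exp (-τ)) 1‖ ≤ 0.002 / τ.re := by
  have him0 : 0 < |τ.im| := by linarith
  refine (norm_lambertTerm_exp_neg_one_le hτ (abs_pos.1 him0) him).trans ?_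
  rw [div_le_div_iff₀ (by positivity) hτ]
  nlinarith [Real.pi_lt_four]

lemma half_le_norm_one_add_pow {y : ℂ} (hy : ‖y‖ ≤ 1) (h : ‖1 + y ^ 2‖ ≤ 1 / 10) {k : ℕ}
    (hk : k ∈ ({3, 4, 5} : Finset ℕ)) : 1 / 2 ≤ ‖1 + y ^ k‖ := by
  set e := 1 + y ^ 2 with he
  have hye : ‖y * e‖ ≤ 1 / 10 := by
    rw [norm_mul]
    exact (mul_le_of_le_one_left (norm_nonneg _) hy).trans h
  have he2 : ‖e - 2‖ ≤ 21 / 10 := by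
    have := norm_sub_le e 2
    norm_num at this ⊢
    linarith
  have hprod : 19 / 10 ≤ ‖1 + y‖ * ‖1 - y‖ := by
    rw [← norm_mul, show (1 + y) * (1 - y) = 2 - e by rw [he]; ring]
    have := norm_sub_norm_le 2 e
    norm_num at this ⊢
    linarith
  have hadd : ‖1 + y‖ ≤ 2 := (norm_add_le _ _).trans (by rw [norm_one]; linarith)
  have hsub : ‖1 - y‖ ≤ 2 := (norm_sub_le _ _).trans (by rw [norm_one]; linarith)
  simp only [Finset.mem_insert, Finset.mem_singleton] at hk
  rcases hk with rfl | rfl | rfl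
  · rw [show 1 + y ^ 3 = (1 - y) - -(y * e) by rw [he]; ring]
    have := norm_sub_norm_le (1 - y) (-(y * e))
    rw [norm_neg] at this
    nlinarith [norm_nonneg (1 + y)]
  · rw [show 1 + y ^ 4 = 2 - -(e * (e - 2)) by rw [he]; ring]
    have := norm_sub_norm_le 2 (-(e * (e - 2)))
    rw [norm_neg, norm_mul] at this
    norm_num at this ⊢
    nlinarith [norm_nonneg e]
  · rw [show 1 + y ^ 5 = (1 + y) - -(y * e * (e - 2)) by rw [he]; ring]
    have := norm_sub_norm_le (1 + y) (-(y * e * (e - 2)))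
    rw [norm_neg, norm_mul _ (e - 2)] at this
    have hprod' : ‖y * e‖ * ‖e - 2‖ ≤ 1 / 10 * (21 / 10) :=
      mul_le_mul hye he2 (norm_nonneg _) (by norm_num)
    have : 19 / 20 ≤ ‖1 + y‖ := by nlinarith [norm_nonneg (1 + y)]
    linarith

lemma norm_oddDistinctGF_le_of_far (hτ : 0 < τ.re) (him : |τ.im| ≤ Real.pi)
    (hsec : 1000 * τ.re ≤ |τ.im|) (hfar : 1 / 10 ≤ ‖1 + (-Complex.exp (-τ)) ^ 2‖) :
    ‖oddDistinctGF (Complex.exp (-τ))‖ ≤ Real.exp (0.434 / τ.re + 5) := by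
  refine (norm_oddDistinctGF_le hτ (norm_exp_neg τ) {1, 2}).trans (Real.exp_le_exp.2 ?_)
  have hone := norm_lambertTerm_exp_neg_one_le_of_sector hτ him hsec
  have htwo := norm_lambertTerm_le_of_le (by norm_num) (norm_exp_neg_lt_one hτ).le hfar
  rw [Finset.sum_pair (by norm_num), Finset.sum_pair (by norm_num)]
  norm_num at hone htwo ⊢
  have hpi : Real.pi ^ 2 / 6 - 5 / 4 ≤ 54 / 125 := by nlinarith [Real.pi_lt_d4, Real.pi_pos]
  have hmain : (Real.pi ^ 2 / 6 - 5 / 4) / τ.re ≤ 54 / 125 / τ.re := by gcongr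
  have hsum : (217 : ℝ) / 500 / τ.re = 1 / 500 / τ.re + 54 / 125 / τ.re := by ring
  linarith

lemma norm_oddDistinctGF_le_of_near (hτ : 0 < τ.re) (him : |τ.im| ≤ Real.pi)
    (hsec : 1000 * τ.re ≤ |τ.im|) (hnear : ‖1 + (-Complex.exp (-τ)) ^ 2‖ ≤ 1 / 10) :
    ‖oddDistinctGF (Complex.exp (-τ))‖ ≤ Real.exp (0.434 / τ.re + 5) := by
  refine (norm_oddDistinctGF_le hτ (norm_exp_neg τ) {1, 3, 4, 5}).trans (Real.exp_le_exp.2 ?_)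
  have hq := (norm_exp_neg_lt_one hτ).le
  have hone := norm_lambertTerm_exp_neg_one_le_of_sector hτ him hsec
  have hrest (k : ℕ) (hk : k ∈ ({3, 4, 5} : Finset ℕ)) :
      ‖lambertTerm (Complex.exp (-τ)) k‖ ≤ 1 := by
    refine (norm_lambertTerm_le_of_le one_half_pos hq
      (half_le_norm_one_add_pow (by rwa [norm_neg]) hnear hk)).trans ?_
    fin_cases hk <;> norm_num
  have hsum := Finset.sum_le_sum hrest
  rw [Finset.sum_insert (by norm_num), Finset.sum_insert (by norm_num)]
  norm_num [Finset.sum_insert] at hone hsum ⊢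
  have hpi : Real.pi ^ 2 / 6 - 4369 / 3600 ≤ 54 / 125 := by nlinarith [Real.pi_lt_d4, Real.pi_pos]
  have hmain : (Real.pi ^ 2 / 6 - 4369 / 3600) / τ.re ≤ 54 / 125 / τ.re := by gcongr
  have hsum : (217 : ℝ) / 500 / τ.re = 1 / 500 / τ.re + 54 / 125 / τ.re := by ring
  linarith

lemma norm_oddDistinctGF_le_of_sector (hτ : 0 < τ.re) (him : |τ.im| ≤ Real.pi)
    (hsec : 1000 * τ.re ≤ |τ.im|) :
    ‖oddDistinctGF (Complex.exp (-τ))‖ ≤ Real.exp (0.434 / τ.re + 5) :=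
  (le_total _ _).elim (norm_oddDistinctGF_le_of_far hτ him hsec)
    (norm_oddDistinctGF_le_of_near hτ him hsec)

lemma norm_appellTerm_le (hz : ‖z‖ = 1) (hq : ‖q‖ < 1) (k : ℕ) :
    ‖appellTerm z q k‖ ≤ ‖q‖ ^ k * (4 / (1 - ‖q‖)) := by
  have hfrac {x : ℂ} (hx : ‖x‖ = 1) :
      ‖(x - 1) / (1 - x * q ^ (2 * (k + 1)))‖ ≤ 2 / (1 - ‖q‖) := by
    have hnum : ‖x - 1‖ ≤ 2 := (norm_sub_le _ _).trans (by rw [hx, norm_one]; norm_num)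
    have hden : 1 - ‖q‖ ≤ ‖1 - x * q ^ (2 * (k + 1))‖ := by
      have h := norm_sub_norm_le 1 (x * q ^ (2 * (k + 1)))
      rw [norm_one, norm_mul, hx, one_mul, norm_pow] at h
      linarith [pow_le_of_le_one (norm_nonneg q) hq.le (n := 2 * (k + 1)) (by omega)]
    rw [norm_div]
    exact div_le_div₀ zero_le_two hnum (sub_pos.2 hq) hden
  rw [appellTerm, norm_mul]
  refine mul_le_mul (by simpa using norm_partialThetaTerm_le hq 0 k) ?_ (norm_nonneg _)
    (by positivity)
  refine (norm_add_le _ _).trans ?_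
  linear_combination hfrac hz + hfrac (show ‖z⁻¹‖ = 1 by rw [norm_inv, hz, inv_one])

lemma norm_rankGF_le (hz : ‖z‖ = 1) (hq : ‖q‖ < 1) (hq0 : q ≠ 0) :
    ‖rankGF z q‖ ≤ ‖oddDistinctGF q‖ * (1 + 4 / (1 - ‖q‖) ^ 2) := by
  rw [rankGF_eq_oddDistinctGF_mul hz hq hq0, norm_mul]
  gcongr
  refine (norm_add_le _ _).trans ?_
  rw [norm_one]
  gcongr
  refine (tsum_of_norm_bounded ((hasSum_geometric_of_lt_one (norm_nonneg q) hq).mul_right _)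
    (norm_appellTerm_le hz hq)).trans_eq ?_
  have : 1 - ‖q‖ ≠ 0 := (sub_pos.2 hq).ne'
  field_simp

lemma norm_rankGF_le_of_sector (hz : ‖z‖ = 1) (hτ : 0 < τ.re) (hτ1 : τ.re ≤ 1)
    (him : |τ.im| ≤ Real.pi) (hsec : 1000 * τ.re ≤ |τ.im|) :
    ‖rankGF z (Complex.exp (-τ))‖ ≤ Real.exp (0.434 / τ.re + 5) * (1 + 16 / τ.re ^ 2) := by
  have hq := norm_exp_neg_lt_one hτ
  refine (norm_rankGF_le hz hq (Complex.exp_ne_zero _)).trans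
    (mul_le_mul (norm_oddDistinctGF_le_of_sector hτ him hsec) ?_ (by positivity) (by positivity))
  rw [norm_exp_neg] at hq ⊢
  have hhalf : τ.re / 2 ≤ 1 - Real.exp (-τ.re) := by
    have h := exp_neg_div_one_sub_exp_neg_le hτ
    rw [div_le_div_iff₀ (sub_pos.2 hq) hτ] at h
    nlinarith [Real.exp_pos (-τ.re)]
  rw [show 16 / τ.re ^ 2 = 4 / (τ.re / 2) ^ 2 by field_simp; norm_num]
  gcongr

end MinorArcs

/-! ### The theta function at the cusp -/

section ThetaTransformation

variable {τ : ℂ}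

/-- The elliptic variable at which the Jacobi theta function is the reciprocal of the product
`oddDistinctGF (exp (-τ))`. -/
noncomputable def thetaArg (τ : ℂ) : ℂ := 1 / 2 + Complex.I * τ / (2 * Real.pi)

/-- The modular variable at which the Jacobi theta function is the reciprocal of the product
`oddDistinctGF (exp (-τ))`. -/
noncomputable def thetaModulus (τ : ℂ) : ℂ := 2 * Complex.I * τ / Real.pi

lemma ofReal_pi_ne_zero : (Real.pi : ℂ) ≠ 0 := Complex.ofReal_ne_zero.2 Real.pi_ne_zero

lemma ne_zero_of_re_pos (hτ : 0 < τ.re) : τ ≠ 0 := by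
  rintro rfl
  exact hτ.false

lemma thetaModulus_im_pos (hτ : 0 < τ.re) : 0 < (thetaModulus τ).im := by
  rw [thetaModulus, show 2 * Complex.I * τ / Real.pi = (2 / Real.pi : ℝ) * (Complex.I * τ) by
    push_cast; ring, Complex.im_ofReal_mul, Complex.I_mul_im]
  positivity

lemma jacobiTheta₂_term_thetaArg (τ : ℂ) (n : ℤ) :
    jacobiTheta₂_term n (thetaArg τ) (thetaModulus τ) =
      (-1) ^ n * Complex.exp (-((2 * n ^ 2 + n) * τ)) := by
  have hpi := ofReal_pi_ne_zero
  rw [jacobiTheta₂_term, thetaArg, thetaModulus, ← Complex.exp_pi_mul_I, ← Complex.exp_int_mul,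
    ← Complex.exp_add]
  congr 1
  field_simp
  linear_combination (2 * τ * n ^ 2 + n * τ) * Complex.I_sq

lemma exp_neg_pow (τ : ℂ) (k : ℕ) : Complex.exp (-τ) ^ k = Complex.exp (-(k * τ)) := by
  rw [← Complex.exp_nat_mul, mul_neg]

lemma hasSum_jacobiTheta₂_term_natCast (hτ : 0 < τ.re) :
    HasSum (fun n : ℕ => jacobiTheta₂_term n (thetaArg τ) (thetaModulus τ))
      (1 - ∑' k, partialThetaTerm (Complex.exp (-τ)) 0 k) := by
  rw [← hasSum_nat_add_iff' 1]
  convert! (summable_partialThetaTerm (norm_exp_neg_lt_one hτ) 0).hasSum.neg.congr_fun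
    fun k => ?_ using 1
  · simp [jacobiTheta₂_term_thetaArg]
  · rw [jacobiTheta₂_term_thetaArg, partialThetaTerm, exp_neg_pow, zpow_natCast, pow_succ]
    push_cast
    ring_nf

lemma hasSum_jacobiTheta₂_term_neg_add_one (hτ : 0 < τ.re) :
    HasSum (fun n : ℕ => jacobiTheta₂_term (-((n : ℤ) + 1)) (thetaArg τ) (thetaModulus τ))
      (-Complex.exp (-τ) +
        Complex.exp (-τ) * ∑' k, partialThetaTerm (Complex.exp (-τ)) 1 k) := by
  rw [← hasSum_nat_add_iff' 1]
  convert! ((summable_partialThetaTerm (norm_exp_neg_lt_one hτ) 1).hasSum.mul_left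
    (Complex.exp (-τ))).congr_fun fun k => ?_ using 1
  · simp [jacobiTheta₂_term_thetaArg]
    ring_nf
  · have hsign : (-1 : ℂ) ^ (-(((k + 1 : ℕ) : ℤ) + 1)) = (-1) ^ k := by
      rw [show -(((k + 1 : ℕ) : ℤ) + 1) = -((k + 2 : ℕ) : ℤ) by push_cast; ring, zpow_neg,
        zpow_natCast, ← inv_pow, inv_neg_one, pow_add, neg_one_sq, mul_one]
    rw [jacobiTheta₂_term_thetaArg, partialThetaTerm, exp_neg_pow, mul_left_comm,
      ← Complex.exp_add, hsign]
    push_cast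
    ring_nf

lemma oddDistinctGF_mul_jacobiTheta₂ (hτ : 0 < τ.re) :
    oddDistinctGF (Complex.exp (-τ)) * jacobiTheta₂ (thetaArg τ) (thetaModulus τ) = 1 := by
  rw [(hasSum_jacobiTheta₂_term (thetaArg τ) (thetaModulus_im_pos hτ)).unique
    ((hasSum_jacobiTheta₂_term_natCast hτ).of_nat_of_neg_add_one
      (hasSum_jacobiTheta₂_term_neg_add_one hτ))]
  linear_combination oddDistinctGF_mul_theta (norm_exp_neg_lt_one hτ) (Complex.exp_ne_zero _)

/-- The Jacobi theta function of `oddDistinctGF_mul_jacobiTheta₂` at the modularly inverted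
variables. -/
noncomputable def dualTheta (τ : ℂ) : ℂ :=
  jacobiTheta₂ (thetaArg τ / thetaModulus τ) (-1 / thetaModulus τ)

/-- The `n`-th term of `dualTheta τ`. -/
noncomputable def dualThetaTerm (τ : ℂ) (n : ℤ) : ℂ :=
  Complex.exp ((Real.pi * n / 2 : ℝ) * Complex.I) *
    Complex.exp ((-(Real.pi ^ 2 / 2 * (n ^ 2 - n : ℤ)) : ℝ) * τ⁻¹)

lemma dualTheta_eq_tsum (hτ : τ ≠ 0) : dualTheta τ = ∑' n, dualThetaTerm τ n := by
  refine tsum_congr fun n => ?_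
  have hpi := ofReal_pi_ne_zero
  have hI := Complex.I_ne_zero
  rw [jacobiTheta₂_term, dualThetaTerm, thetaArg, thetaModulus, ← Complex.exp_add]
  congr 1
  push_cast
  field_simp
  ring_nf

lemma norm_dualThetaTerm (τ : ℂ) (n : ℤ) :
    ‖dualThetaTerm τ n‖ = Real.exp (-(Real.pi ^ 2 / 2 * (n ^ 2 - n : ℤ)) * (τ⁻¹).re) := by
  rw [dualThetaTerm, norm_mul, Complex.norm_exp_ofReal_mul_I, one_mul, Complex.norm_exp,
    Complex.re_ofReal_mul]

lemma oddDistinctGF_mul_dualTheta (hτ : 0 < τ.re) : oddDistinctGF (Complex.exp (-τ)) *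
    (1 / (2 * τ / Real.pi) ^ (1 / 2 : ℂ) *
      Complex.exp (-(Real.pi ^ 2 / (8 * τ)) - Real.pi * Complex.I / 4 + τ / 8) *
        dualTheta τ) = 1 := by
  have hτ0 := ne_zero_of_re_pos hτ
  have hpi := ofReal_pi_ne_zero
  have hI := Complex.I_ne_zero
  have hbase : -Complex.I * thetaModulus τ = 2 * τ / Real.pi := by
    rw [thetaModulus]
    field_simp
    linear_combination -Complex.I_sq
  have hexp : -Real.pi * Complex.I * thetaArg τ ^ 2 / thetaModulus τ =
      -(Real.pi ^ 2 / (8 * τ)) - Real.pi * Complex.I / 4 + τ / 8 := by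
    rw [thetaArg, thetaModulus]
    field_simp
    linear_combination -32 * τ ^ 2 * Complex.I_sq
  rw [← hbase, ← hexp, dualTheta, ← jacobiTheta₂_functional_equation]
  exact oddDistinctGF_mul_jacobiTheta₂ hτ

/-- The filter of horocyclic neighbourhoods of `τ = 0` in the right half-plane: it contains the
discs that are tangent to the imaginary axis at `0`. -/
noncomputable def cusp : Filter ℂ := comap (fun τ : ℂ => (τ⁻¹).re) atTop

lemma tendsto_inv_re_cusp : Tendsto (fun τ : ℂ => (τ⁻¹).re) cusp atTop := tendsto_comap

lemma re_pos_of_inv_re_pos (h : 0 < (τ⁻¹).re) : 0 < τ.re := by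
  rw [Complex.inv_re] at h
  by_contra! hle
  exact h.not_ge (div_nonpos_of_nonpos_of_nonneg hle (Complex.normSq_nonneg τ))

lemma eventually_cusp_re_pos : ∀ᶠ τ : ℂ in cusp, 0 < τ.re :=
  (tendsto_inv_re_cusp.eventually_gt_atTop 0).mono fun _ => re_pos_of_inv_re_pos

lemma abs_sub_one_le_sq_sub (n : ℤ) : |(n : ℝ)| - 1 ≤ (n ^ 2 - n : ℤ) := by
  have : |n| - 1 ≤ n ^ 2 - n := by
    rcases abs_cases n with ⟨h, _⟩ | ⟨h, _⟩ <;> rw [h] <;> nlinarith [sq_nonneg (n - 1)]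
  exact_mod_cast this

lemma sq_sub_nonneg (n : ℤ) : (0 : ℝ) ≤ (n ^ 2 - n : ℤ) := by
  have : 0 ≤ n ^ 2 - n := by linarith [Int.le_self_sq n]
  exact_mod_cast this

lemma summable_exp_one_sub_abs : Summable fun n : ℤ => Real.exp (1 - |(n : ℝ)|) := by
  have hnat : Summable fun n : ℕ => Real.exp (1 - n) := by
    simpa only [sub_eq_add_neg, Real.exp_add] using Real.summable_exp_neg_nat.mul_left (Real.exp 1)
  exact .of_nat_of_neg (by simpa using hnat) (by simpa using hnat)

lemma norm_dualThetaTerm_le (h : 1 ≤ (τ⁻¹).re) (n : ℤ) :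
    ‖dualThetaTerm τ n‖ ≤ Real.exp (1 - |(n : ℝ)|) := by
  rw [norm_dualThetaTerm, Real.exp_le_exp]
  have hpi : 1 ≤ Real.pi ^ 2 / 2 := by nlinarith [Real.pi_gt_three]
  have hmul : 1 ≤ Real.pi ^ 2 / 2 * (τ⁻¹).re := one_le_mul_of_one_le_of_one_le hpi h
  linear_combination abs_sub_one_le_sq_sub n +
    mul_le_mul_of_nonneg_left hmul (sq_sub_nonneg n)

lemma tendsto_dualThetaTerm (n : ℤ) : Tendsto (fun τ => dualThetaTerm τ n) cusp
    (𝓝 (if n = 0 then 1 else if n = 1 then Complex.I else 0)) := by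
  split_ifs with h0 h1
  · simp [dualThetaTerm, h0, tendsto_const_nhds]
  · have hI : Complex.exp (Real.pi / 2 * Complex.I) = Complex.I := Complex.exp_pi_div_two_mul_I
    simp [dualThetaTerm, h1, hI, tendsto_const_nhds]
  · rw [tendsto_zero_iff_norm_tendsto_zero]
    simp only [norm_dualThetaTerm]
    have hpos : 0 < n ^ 2 - n := by
      rcases lt_or_gt_of_ne h0 with h | h
      · nlinarith
      · nlinarith [show 2 ≤ n by omega]
    have : (0 : ℝ) < (n ^ 2 - n : ℤ) := by exact_mod_cast hpos
    exact Real.tendsto_exp_atBot.comp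
      (tendsto_inv_re_cusp.const_mul_atTop_of_neg (neg_neg_of_pos (by positivity)))

lemma tendsto_dualTheta : Tendsto dualTheta cusp (𝓝 (1 + Complex.I)) := by
  have hlim : ∑' n : ℤ, (if n = 0 then (1 : ℂ) else if n = 1 then Complex.I else 0) =
      1 + Complex.I := by
    rw [tsum_eq_sum (s := {0, 1}) fun n hn => by simp_all, Finset.sum_pair zero_ne_one]
    simp
  rw [← hlim]
  refine (tendsto_tsum_of_dominated_convergence summable_exp_one_sub_abs tendsto_dualThetaTerm
    ?_).congr' ?_
  · filter_upwards [tendsto_inv_re_cusp.eventually_ge_atTop 1] with τ h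
    exact norm_dualThetaTerm_le h
  · filter_upwards [eventually_cusp_re_pos] with τ hτ
    exact (dualTheta_eq_tsum (ne_zero_of_re_pos hτ)).symm

/-- The main term of `oddDistinctGF (exp (-τ))` as `τ` tends to the cusp `0`. -/
noncomputable def cuspMain (τ : ℂ) : ℂ :=
  (2 * τ / Real.pi) ^ (1 / 2 : ℂ) / Real.sqrt 2 * Complex.exp (Real.pi ^ 2 / (8 * τ) - τ / 8)

lemma exp_neg_pi_mul_I_div_four_mul :
    Complex.exp (-(Real.pi * Complex.I / 4)) * (1 + Complex.I) = Real.sqrt 2 := by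
  have hcast : -(Real.pi * Complex.I / 4) = (-(Real.pi / 4) : ℝ) * Complex.I := by
    push_cast
    ring
  rw [hcast, Complex.exp_mul_I, ← Complex.ofReal_cos, ← Complex.ofReal_sin, Real.cos_neg,
    Real.sin_neg, Real.cos_pi_div_four, Real.sin_pi_div_four]
  push_cast
  linear_combination (-(Real.sqrt 2 : ℂ) / 2) * Complex.I_sq

lemma oddDistinctGF_div_cuspMain (hτ : 0 < τ.re) :
    oddDistinctGF (Complex.exp (-τ)) / cuspMain τ =
      Real.sqrt 2 / (Complex.exp (-(Real.pi * Complex.I / 4)) * dualTheta τ) := by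
  have h := oddDistinctGF_mul_dualTheta hτ
  have hroot : (2 * τ / Real.pi) ^ (1 / 2 : ℂ) ≠ 0 := by
    rw [Complex.cpow_ne_zero_iff_of_exponent_ne_zero (by norm_num)]
    exact div_ne_zero (mul_ne_zero two_ne_zero (ne_zero_of_re_pos hτ)) ofReal_pi_ne_zero
  have hdual : dualTheta τ ≠ 0 := by
    intro h0
    simp [h0] at h
  have hsqrt : (Real.sqrt 2 : ℂ) ≠ 0 := by simp
  have hsplit : Complex.exp (-(Real.pi ^ 2 / (8 * τ)) - Real.pi * Complex.I / 4 + τ / 8) =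
      Complex.exp (-(Real.pi * Complex.I / 4)) *
        (Complex.exp (Real.pi ^ 2 / (8 * τ) - τ / 8))⁻¹ := by
    rw [← Complex.exp_neg, ← Complex.exp_add]
    ring_nf
  rw [hsplit] at h
  have := Complex.exp_ne_zero (-(Real.pi * Complex.I / 4))
  have := Complex.exp_ne_zero (Real.pi ^ 2 / (8 * τ) - τ / 8)
  rw [cuspMain]
  field_simp at h ⊢
  exact h

lemma tendsto_oddDistinctGF_div_cuspMain :
    Tendsto (fun τ => oddDistinctGF (Complex.exp (-τ)) / cuspMain τ) cusp (𝓝 1) := by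
  have hsqrt : (Real.sqrt 2 : ℂ) ≠ 0 := by simp
  have hden := tendsto_dualTheta.const_mul (Complex.exp (-(Real.pi * Complex.I / 4)))
  rw [exp_neg_pi_mul_I_div_four_mul] at hden
  have hlim := (tendsto_const_nhds (x := (Real.sqrt 2 : ℂ))).div hden hsqrt
  rw [div_self hsqrt] at hlim
  refine hlim.congr' ?_
  filter_upwards [eventually_cusp_re_pos] with τ hτ
  exact (oddDistinctGF_div_cuspMain hτ).symm

end ThetaTransformation

/-! ### The residue theorem on a rectangle -/

section RectangleIntegral

open MeasureTheory

variable {x₁ x₂ y₁ y₂ : ℝ} {f g : ℂ → ℂ} {p c : ℂ}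

/-- The counterclockwise contour integral of `f` along the boundary of `[x₁, x₂] × [y₁, y₂]`. -/
noncomputable def rectIntegral (f : ℂ → ℂ) (x₁ x₂ y₁ y₂ : ℝ) : ℂ :=
  (∫ x : ℝ in x₁..x₂, f (x + y₁ * Complex.I)) - (∫ x : ℝ in x₁..x₂, f (x + y₂ * Complex.I)) +
    Complex.I * (∫ y : ℝ in y₁..y₂, f (x₂ + y * Complex.I)) -
    Complex.I * (∫ y : ℝ in y₁..y₂, f (x₁ + y * Complex.I))

/-- Integrability of `f` along each side of `[x₁, x₂] × [y₁, y₂]`, so that `rectIntegral` has no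
junk value. -/
structure RectIntegrable (f : ℂ → ℂ) (x₁ x₂ y₁ y₂ : ℝ) : Prop where
  bottom : IntervalIntegrable (fun x : ℝ => f (x + y₁ * Complex.I)) volume x₁ x₂
  top : IntervalIntegrable (fun x : ℝ => f (x + y₂ * Complex.I)) volume x₁ x₂
  right : IntervalIntegrable (fun y : ℝ => f (x₂ + y * Complex.I)) volume y₁ y₂
  left : IntervalIntegrable (fun y : ℝ => f (x₁ + y * Complex.I)) volume y₁ y₂

/-- The four sides of the rectangle `[x₁, x₂] × [y₁, y₂]`. -/
def rectBoundary (x₁ x₂ y₁ y₂ : ℝ) : Set ℂ :=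
  {w | w ∈ Set.Icc x₁ x₂ ×ℂ Set.Icc y₁ y₂ ∧ (w.re = x₁ ∨ w.re = x₂ ∨ w.im = y₁ ∨ w.im = y₂)}

lemma rectIntegral_add (hf : RectIntegrable f x₁ x₂ y₁ y₂) (hg : RectIntegrable g x₁ x₂ y₁ y₂) :
    rectIntegral (fun w => f w + g w) x₁ x₂ y₁ y₂ =
      rectIntegral f x₁ x₂ y₁ y₂ + rectIntegral g x₁ x₂ y₁ y₂ := by
  simp only [rectIntegral]
  rw [intervalIntegral.integral_add hf.bottom hg.bottom,
    intervalIntegral.integral_add hf.top hg.top,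
    intervalIntegral.integral_add hf.right hg.right, intervalIntegral.integral_add hf.left hg.left]
  ring

lemma rectIntegrable_sum {ι : Type*} {S : Finset ι} {f : ι → ℂ → ℂ}
    (hf : ∀ i ∈ S, RectIntegrable (f i) x₁ x₂ y₁ y₂) :
    RectIntegrable (fun w => ∑ i ∈ S, f i w) x₁ x₂ y₁ y₂ := by
  constructor
  · simpa only [Finset.sum_fn] using IntervalIntegrable.sum S fun i hi => (hf i hi).bottom
  · simpa only [Finset.sum_fn] using IntervalIntegrable.sum S fun i hi => (hf i hi).top
  · simpa only [Finset.sum_fn] using IntervalIntegrable.sum S fun i hi => (hf i hi).right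
  · simpa only [Finset.sum_fn] using IntervalIntegrable.sum S fun i hi => (hf i hi).left

lemma rectIntegral_sum {ι : Type*} {S : Finset ι} {f : ι → ℂ → ℂ}
    (hf : ∀ i ∈ S, RectIntegrable (f i) x₁ x₂ y₁ y₂) :
    rectIntegral (fun w => ∑ i ∈ S, f i w) x₁ x₂ y₁ y₂ =
      ∑ i ∈ S, rectIntegral (f i) x₁ x₂ y₁ y₂ := by
  simp only [rectIntegral]
  rw [intervalIntegral.integral_finsetSum fun i hi => (hf i hi).bottom,
    intervalIntegral.integral_finsetSum fun i hi => (hf i hi).top,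
    intervalIntegral.integral_finsetSum fun i hi => (hf i hi).right,
    intervalIntegral.integral_finsetSum fun i hi => (hf i hi).left]
  simp only [Finset.sum_add_distrib, Finset.sum_sub_distrib, Finset.mul_sum]

lemma rectIntegral_congr (hx : x₁ ≤ x₂) (hy : y₁ ≤ y₂)
    (h : Set.EqOn f g (rectBoundary x₁ x₂ y₁ y₂)) :
    rectIntegral f x₁ x₂ y₁ y₂ = rectIntegral g x₁ x₂ y₁ y₂ := by
  simp only [rectIntegral]
  congr 1
  · congr 1
    · congr 1 <;> refine intervalIntegral.integral_congr fun x hx' => h ?_ <;>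
        rw [Set.uIcc_of_le hx] at hx' <;>
        simp [rectBoundary, Complex.mem_reProdIm, hx'.1, hx'.2, hy]
    · congr 1
      refine intervalIntegral.integral_congr fun y hy' => h ?_
      rw [Set.uIcc_of_le hy] at hy'
      simp [rectBoundary, Complex.mem_reProdIm, hx, hy'.1, hy'.2]
  · congr 1
    refine intervalIntegral.integral_congr fun y hy' => h ?_
    rw [Set.uIcc_of_le hy] at hy'
    simp [rectBoundary, Complex.mem_reProdIm, hx, hy'.1, hy'.2]

lemma rectIntegrable_of_continuousOn (hx : x₁ ≤ x₂) (hy : y₁ ≤ y₂)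
    (h : ContinuousOn f (rectBoundary x₁ x₂ y₁ y₂)) : RectIntegrable f x₁ x₂ y₁ y₂ := by
  constructor <;> refine (h.comp (by fun_prop) fun t ht => ?_).intervalIntegrable
  · rw [Set.uIcc_of_le hx] at ht
    simp [rectBoundary, Complex.mem_reProdIm, ht.1, ht.2, hy]
  · rw [Set.uIcc_of_le hx] at ht
    simp [rectBoundary, Complex.mem_reProdIm, ht.1, ht.2, hy]
  · rw [Set.uIcc_of_le hy] at ht
    simp [rectBoundary, Complex.mem_reProdIm, ht.1, ht.2, hx]
  · rw [Set.uIcc_of_le hy] at ht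
    simp [rectBoundary, Complex.mem_reProdIm, ht.1, ht.2, hx]

lemma notMem_rectBoundary (hre : p.re ∈ Set.Ioo x₁ x₂) (him : p.im ∈ Set.Ioo y₁ y₂) :
    p ∉ rectBoundary x₁ x₂ y₁ y₂ := by
  rintro ⟨-, h | h | h | h⟩
  · exact hre.1.ne' h
  · exact hre.2.ne h
  · exact him.1.ne' h
  · exact him.2.ne h

lemma rectIntegral_eq_zero (hx : x₁ ≤ x₂) (hy : y₁ ≤ y₂)
    (hf : DifferentiableOn ℂ f (Set.Icc x₁ x₂ ×ℂ Set.Icc y₁ y₂)) :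
    rectIntegral f x₁ x₂ y₁ y₂ = 0 := by
  have h := Complex.integral_boundary_rect_eq_zero_of_differentiableOn f
    (x₁ + y₁ * Complex.I) (x₂ + y₂ * Complex.I)
  simp only [Complex.add_re, Complex.ofReal_re, Complex.re_ofReal_mul, Complex.I_re, mul_zero,
    add_zero, Complex.add_im, Complex.ofReal_im, Complex.im_ofReal_mul, Complex.I_im, mul_one,
    zero_add, Set.uIcc_of_le hx, Set.uIcc_of_le hy, smul_eq_mul] at h
  exact h hf

lemma integral_div_affine_eq_log_sub_log {a b : ℝ} {u v : ℂ}
    (h : ∀ t ∈ Set.uIcc a b, u + t * v ∈ Complex.slitPlane) :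
    ∫ t : ℝ in a..b, v / (u + t * v) = Complex.log (u + b * v) - Complex.log (u + a * v) := by
  refine intervalIntegral.integral_eq_sub_of_hasDerivAt
    (f := fun t : ℝ => Complex.log (u + t * v)) (fun t ht => ?_) ?_
  · have hderiv : HasDerivAt (fun t : ℝ => u + t * v) v t := by
      simpa using! ((Complex.ofRealCLM.hasDerivAt (x := t)).mul_const v).const_add u
    exact hderiv.clog_real (h t ht)
  · exact ContinuousOn.intervalIntegrable (ContinuousOn.div (by fun_prop) (by fun_prop)
      fun t ht => Complex.slitPlane_ne_zero (h t ht))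

lemma log_neg_of_im_pos (h : 0 < p.im) :
    Complex.log (-p) = Complex.log p - Real.pi * Complex.I := by
  rw [Complex.log, Complex.log, Complex.arg_neg_eq_arg_sub_pi_of_im_pos h, norm_neg]
  push_cast
  ring

lemma log_neg_of_im_neg (h : p.im < 0) :
    Complex.log (-p) = Complex.log p + Real.pi * Complex.I := by
  rw [Complex.log, Complex.log, Complex.arg_neg_eq_arg_add_pi_of_im_neg h, norm_neg]
  push_cast
  ring

lemma rectIntegrable_div_sub (hre : p.re ∈ Set.Ioo x₁ x₂) (him : p.im ∈ Set.Ioo y₁ y₂) :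
    RectIntegrable (fun w => c / (w - p)) x₁ x₂ y₁ y₂ :=
  rectIntegrable_of_continuousOn (hre.1.trans hre.2).le (him.1.trans him.2).le
    (ContinuousOn.div (by fun_prop) (by fun_prop) fun _ hw =>
      sub_ne_zero.2 fun h => notMem_rectBoundary hre him (h ▸ hw))

lemma rectIntegral_one_div_sub (hre : p.re ∈ Set.Ioo x₁ x₂) (him : p.im ∈ Set.Ioo y₁ y₂) :
    rectIntegral (fun w => 1 / (w - p)) x₁ x₂ y₁ y₂ = 2 * Real.pi * Complex.I := by
  have hhor {y : ℝ} (hy : y ≠ p.im) : ∫ x : ℝ in x₁..x₂, 1 / ((x + y * Complex.I : ℂ) - p) =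
      Complex.log (x₂ + y * Complex.I - p) - Complex.log (x₁ + y * Complex.I - p) := by
    convert! integral_div_affine_eq_log_sub_log (u := y * Complex.I - p) (v := 1) (a := x₁)
      (b := x₂) fun t _ => ?_ using 3
    · ring_nf
    · ring_nf
    · ring_nf
    · right
      simpa using sub_ne_zero.2 hy
  have hright : Complex.I * ∫ y : ℝ in y₁..y₂, 1 / ((x₂ + y * Complex.I : ℂ) - p) =
      Complex.log (x₂ + y₂ * Complex.I - p) - Complex.log (x₂ + y₁ * Complex.I - p) := by
    rw [← intervalIntegral.integral_const_mul]
    convert! integral_div_affine_eq_log_sub_log (u := x₂ - p) (v := Complex.I) (a := y₁)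
      (b := y₂) fun t _ => ?_ using 3
    · ring_nf
    · ring_nf
    · ring_nf
    · left
      simpa using hre.2
  have hleft : Complex.I * ∫ y : ℝ in y₁..y₂, 1 / ((x₁ + y * Complex.I : ℂ) - p) =
      Complex.log (-(x₁ + y₂ * Complex.I - p)) - Complex.log (-(x₁ + y₁ * Complex.I - p)) := by
    rw [← intervalIntegral.integral_const_mul]
    convert! integral_div_affine_eq_log_sub_log (u := p - x₁) (v := -Complex.I) (a := y₁)
      (b := y₂) fun t _ => ?_ using 3
    · rw [mul_one_div, ← neg_div_neg_eq]
      ring_nf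
    · ring_nf
    · ring_nf
    · left
      simpa using hre.1
  rw [rectIntegral, hhor him.1.ne, hhor him.2.ne', hright, hleft,
    log_neg_of_im_pos (by simpa using him.2), log_neg_of_im_neg (by simpa using him.1)]
  ring

lemma rectIntegral_div_sub (c : ℂ) (hre : p.re ∈ Set.Ioo x₁ x₂) (him : p.im ∈ Set.Ioo y₁ y₂) :
    rectIntegral (fun w => c / (w - p)) x₁ x₂ y₁ y₂ = 2 * Real.pi * Complex.I * c := by
  rw [← rectIntegral_one_div_sub hre him]
  simp only [rectIntegral, div_eq_mul_one_div c, intervalIntegral.integral_const_mul]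
  ring

lemma exists_differentiableOn_eq_add_div {V : Set ℂ} (hV : V ∈ 𝓝 p)
    (hf : DifferentiableOn ℂ f (V \ {p}))
    (hc : Tendsto (fun w => (w - p) * f w) (𝓝[≠] p) (𝓝 c)) :
    ∃ g : ℂ → ℂ, DifferentiableOn ℂ g V ∧ ∀ w ≠ p, f w = g w + c / (w - p) := by
  set h := Function.update (fun w => (w - p) * f w) p c with hh
  have hdiff : DifferentiableOn ℂ h V := by
    rw [← Complex.differentiableOn_compl_singleton_and_continuousAt_iff hV]
    refine ⟨?_, continuousAt_update_same.2 hc⟩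
    refine ((differentiableOn_id.sub_const p).mul hf).congr fun w hw => ?_
    exact Function.update_of_ne hw.2 _ _
  refine ⟨dslope h p, (Complex.differentiableOn_dslope hV).2 hdiff, fun w hw => ?_⟩
  have hne := sub_ne_zero.2 hw
  rw [dslope_of_ne _ hw, slope_def_field, hh, Function.update_self, Function.update_of_ne hw]
  field_simp
  ring

lemma tendsto_sub_mul_of_eq_add_div {a b : ℂ} (hpa : p ≠ a)
    (hfg : ∀ w ≠ a, f w = g w + b / (w - a))
    (hf : Tendsto (fun w => (w - p) * f w) (𝓝[≠] p) (𝓝 c)) :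
    Tendsto (fun w => (w - p) * g w) (𝓝[≠] p) (𝓝 c) := by
  have hzero : Tendsto (fun w => (w - p) * (b / (w - a))) (𝓝[≠] p) (𝓝 0) := by
    have hcont : ContinuousAt (fun w => (w - p) * (b / (w - a))) p :=
      ContinuousAt.mul (by fun_prop)
        (ContinuousAt.div (by fun_prop) (by fun_prop) (sub_ne_zero.2 hpa))
    simpa using hcont.tendsto.mono_left nhdsWithin_le_nhds
  have hlim := hf.sub hzero
  rw [sub_zero] at hlim
  refine hlim.congr' ?_
  filter_upwards [eventually_nhdsWithin_of_eventually_nhds (isOpen_ne.mem_nhds hpa)] with w hw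
  rw [hfg w hw]
  ring

lemma exists_differentiableOn_eq_add_sum_div {U : Set ℂ} (hU : IsOpen U) (c : ℂ → ℂ)
    (S : Finset ℂ) (hSU : ↑S ⊆ U) (hf : DifferentiableOn ℂ f (U \ S))
    (hc : ∀ p ∈ S, Tendsto (fun w => (w - p) * f w) (𝓝[≠] p) (𝓝 (c p))) :
    ∃ g : ℂ → ℂ, DifferentiableOn ℂ g U ∧ ∀ w ∉ S, f w = g w + ∑ p ∈ S, c p / (w - p) := by
  induction S using Finset.induction_on generalizing f with
  | empty => exact ⟨f, by simpa using hf, by simp⟩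
  | insert a S ha ih =>
    rw [Finset.coe_insert, Set.insert_subset_iff] at hSU
    have hnhds : U \ S ∈ 𝓝 a := (hU.sdiff S.finite_toSet.isClosed).mem_nhds ⟨hSU.1, by simpa⟩
    rw [Finset.coe_insert, Set.insert_eq, Set.union_comm, ← Set.sdiff_sdiff] at hf
    obtain ⟨h, hh, hfh⟩ :=
      exists_differentiableOn_eq_add_div hnhds hf (hc a (Finset.mem_insert_self a S))
    obtain ⟨g, hg, hhg⟩ := ih hSU.2 hh fun p hp => tendsto_sub_mul_of_eq_add_div
      (ne_of_mem_of_not_mem hp ha) hfh (hc p (Finset.mem_insert_of_mem hp))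
    refine ⟨g, hg, fun w hw => ?_⟩
    rw [Finset.mem_insert, not_or] at hw
    rw [hfh w hw.1, hhg w hw.2, Finset.sum_insert ha]
    ring

theorem rectIntegral_eq_sum_residues {U : Set ℂ} (hU : IsOpen U) (c : ℂ → ℂ) (S : Finset ℂ)
    (hx : x₁ ≤ x₂) (hy : y₁ ≤ y₂) (hsub : Set.Icc x₁ x₂ ×ℂ Set.Icc y₁ y₂ ⊆ U)
    (hS : ∀ p ∈ S, p.re ∈ Set.Ioo x₁ x₂ ∧ p.im ∈ Set.Ioo y₁ y₂)
    (hf : DifferentiableOn ℂ f (U \ S))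
    (hc : ∀ p ∈ S, Tendsto (fun w => (w - p) * f w) (𝓝[≠] p) (𝓝 (c p))) :
    rectIntegral f x₁ x₂ y₁ y₂ = 2 * Real.pi * Complex.I * ∑ p ∈ S, c p := by
  obtain ⟨g, hg, hfg⟩ := exists_differentiableOn_eq_add_sum_div hU c S (fun p hp => hsub
    ⟨Set.Ioo_subset_Icc_self (hS p hp).1, Set.Ioo_subset_Icc_self (hS p hp).2⟩) hf hc
  have hg' := hg.mono hsub
  have hpole (p : ℂ) (hp : p ∈ S) : RectIntegrable (fun w => c p / (w - p)) x₁ x₂ y₁ y₂ :=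
    rectIntegrable_div_sub (hS p hp).1 (hS p hp).2
  calc rectIntegral f x₁ x₂ y₁ y₂
      = rectIntegral (fun w => g w + ∑ p ∈ S, c p / (w - p)) x₁ x₂ y₁ y₂ :=
        rectIntegral_congr hx hy fun w hw => hfg w fun hwS =>
          notMem_rectBoundary (hS w hwS).1 (hS w hwS).2 hw
    _ = ∑ p ∈ S, rectIntegral (fun w => c p / (w - p)) x₁ x₂ y₁ y₂ := by
        rw [rectIntegral_add (rectIntegrable_of_continuousOn hx hy
          (hg'.continuousOn.mono fun _ hw => hw.1)) (rectIntegrable_sum hpole),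
          rectIntegral_eq_zero hx hy hg', zero_add, rectIntegral_sum hpole]
    _ = 2 * Real.pi * Complex.I * ∑ p ∈ S, c p := by
        rw [Finset.mul_sum]
        exact Finset.sum_congr rfl fun p hp => rectIntegral_div_sub (c p) (hS p hp).1 (hS p hp).2

end RectangleIntegral

/-! ### The Appell–Lerch sum as a sum of residues -/

section AppellKernel

variable {φ : ℝ} {τ w : ℂ}

/-- The function whose values at the integers `n`, multiplied by `(-1) ^ n`, are the terms of the
Appell–Lerch sum at `z = exp (2 * φ * I)` and `q = exp (-τ)`. -/
noncomputable def appellKernel (φ : ℝ) (τ w : ℂ) : ℂ :=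
  Complex.exp (-(2 * τ * w ^ 2)) / Complex.sinh (τ * w - φ * Complex.I)

lemma exp_sub_one_div_one_sub_exp (b u : ℂ) :
    (Complex.exp (2 * b * Complex.I) - 1) /
        (1 - Complex.exp (2 * b * Complex.I) * Complex.exp (-(2 * u))) =
      Complex.I * Complex.sin b * (Complex.exp u / Complex.sinh (u - b * Complex.I)) := by
  have hnum : Complex.exp (2 * b * Complex.I) - 1 =
      2 * (Complex.I * Complex.sin b) * Complex.exp (b * Complex.I) := by
    rw [mul_left_comm, Complex.two_sin, mul_comm (_ - _), ← mul_assoc Complex.I, Complex.I_mul_I,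
      neg_one_mul, neg_sub, sub_mul, ← Complex.exp_add, ← Complex.exp_add, ← Complex.exp_zero]
    ring_nf
  have hden : 1 - Complex.exp (2 * b * Complex.I) * Complex.exp (-(2 * u)) =
      2 * Complex.sinh (u - b * Complex.I) * Complex.exp (b * Complex.I - u) := by
    rw [Complex.two_sinh, sub_mul, ← Complex.exp_add, ← Complex.exp_add, ← Complex.exp_add,
      ← Complex.exp_zero]
    ring_nf
  rw [hnum, hden, show b * Complex.I = (b * Complex.I - u) + u by ring, Complex.exp_add,
    add_sub_cancel_right]
  have := Complex.exp_ne_zero (b * Complex.I - u)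
  field_simp

lemma partialThetaTerm_exp_neg_mul_exp (τ : ℂ) (k : ℕ) :
    partialThetaTerm (Complex.exp (-τ)) 0 k * Complex.exp (τ * (k + 1)) =
      (-1) ^ k * Complex.exp (-(2 * τ * (k + 1) ^ 2)) := by
  rw [partialThetaTerm, exp_neg_pow, mul_assoc, ← Complex.exp_add]
  push_cast
  ring_nf

lemma appellTerm_eq_appellKernel_add (φ : ℝ) (τ : ℂ) (k : ℕ) :
    appellTerm (Complex.exp (2 * φ * Complex.I)) (Complex.exp (-τ)) k =
      -(Complex.I * Complex.sin φ) * ((-1) ^ ((k : ℤ) + 1) * appellKernel φ τ ((k : ℤ) + 1 : ℤ) +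
        (-1) ^ (-((k : ℤ) + 1)) * appellKernel φ τ (-((k : ℤ) + 1) : ℤ)) := by
  have hpow : Complex.exp (-τ) ^ (2 * (k + 1)) = Complex.exp (-(2 * (τ * (k + 1)))) := by
    rw [exp_neg_pow]
    push_cast
    ring_nf
  have hinv : (Complex.exp (2 * φ * Complex.I))⁻¹ = Complex.exp (2 * (-φ : ℂ) * Complex.I) := by
    rw [← Complex.exp_neg]
    ring_nf
  have hsinh : Complex.sinh (τ * (k + 1) - -φ * Complex.I) =
      -Complex.sinh (τ * -(k + 1) - φ * Complex.I) := by
    rw [← Complex.sinh_neg]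
    ring_nf
  have hsign : (-1 : ℂ) ^ ((k : ℤ) + 1) = -(-1) ^ k := by
    rw [zpow_add_one₀ (by simp), zpow_natCast, mul_neg_one]
  have hsign_neg : (-1 : ℂ) ^ (-((k : ℤ) + 1)) = -(-1) ^ k := by
    rw [zpow_neg, hsign, inv_neg, ← inv_pow, inv_neg_one]
  rw [appellTerm, hinv, hpow, exp_sub_one_div_one_sub_exp, exp_sub_one_div_one_sub_exp, hsinh,
    hsign, hsign_neg, Complex.sin_neg, appellKernel, appellKernel]
  push_cast
  rw [neg_sq]
  linear_combination (Complex.I * Complex.sin φ *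
    (1 / Complex.sinh (τ * (k + 1) - φ * Complex.I) +
      1 / Complex.sinh (τ * -(k + 1) - φ * Complex.I))) * partialThetaTerm_exp_neg_mul_exp τ k

lemma sum_Icc_neg_add_one {M : Type*} [AddCommMonoid M] (f : ℤ → M) (N : ℕ) :
    ∑ n ∈ Finset.Icc (-((N + 1 : ℕ) : ℤ)) (N + 1 : ℕ), f n =
      ∑ n ∈ Finset.Icc (-(N : ℤ)) N, f n + (f (N + 1) + f (-(N + 1))) := by
  have hIcc : Finset.Icc (-((N + 1 : ℕ) : ℤ)) (N + 1 : ℕ) =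
      insert ((N : ℤ) + 1) (insert (-((N : ℤ) + 1)) (Finset.Icc (-(N : ℤ)) N)) := by
    ext x
    simp only [Finset.mem_insert, Finset.mem_Icc]
    lia
  have hleft : -((N : ℤ) + 1) ∉ Finset.Icc (-(N : ℤ)) N := by simp
  have hright : (N : ℤ) + 1 ∉ insert (-((N : ℤ) + 1)) (Finset.Icc (-(N : ℤ)) N) := by
    simp only [Finset.mem_insert, Finset.mem_Icc]
    lia
  rw [hIcc, Finset.sum_insert hright, Finset.sum_insert hleft, ← add_assoc, add_comm]

lemma one_add_sum_appellTerm (hφ : Real.sin φ ≠ 0) (τ : ℂ) (N : ℕ) :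
    1 + ∑ k ∈ Finset.range N,
        appellTerm (Complex.exp (2 * φ * Complex.I)) (Complex.exp (-τ)) k =
      -(Complex.I * Complex.sin φ) *
        ∑ n ∈ Finset.Icc (-(N : ℤ)) N, (-1) ^ n * appellKernel φ τ n := by
  induction N with
  | zero =>
    have hsin : Complex.sin φ ≠ 0 := by exact_mod_cast hφ
    have : Complex.I ≠ 0 := Complex.I_ne_zero
    simp [appellKernel, Complex.sinh_mul_I]
    field_simp
    rw [Complex.I_sq, neg_neg]
  | succ N ih =>
    rw [Finset.sum_range_succ, ← add_assoc, ih, sum_Icc_neg_add_one,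
      appellTerm_eq_appellKernel_add]
    ring

lemma norm_exp_two_mul_mul_I (φ : ℝ) : ‖Complex.exp (2 * φ * Complex.I)‖ = 1 := by
  exact_mod_cast Complex.norm_exp_ofReal_mul_I (2 * φ)

lemma tendsto_rankGF_partial (hφ : Real.sin φ ≠ 0) (hτ : 0 < τ.re) :
    Tendsto (fun N : ℕ => oddDistinctGF (Complex.exp (-τ)) * (-(Complex.I * Complex.sin φ) *
        ∑ n ∈ Finset.Icc (-(N : ℤ)) N, (-1) ^ n * appellKernel φ τ n)) atTop
      (𝓝 (rankGF (Complex.exp (2 * φ * Complex.I)) (Complex.exp (-τ)))) := by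
  have hz := norm_exp_two_mul_mul_I φ
  have hq := norm_exp_neg_lt_one hτ
  simp only [← one_add_sum_appellTerm hφ, rankGF_eq_oddDistinctGF_mul hz hq (Complex.exp_ne_zero _)]
  exact ((hasSum_appellTerm hz hq).summable.hasSum.tendsto_sum_nat.const_add 1).const_mul _

lemma exists_int_of_sinh_eq_zero (h : Complex.sinh w = 0) :
    ∃ k : ℤ, w = k * Real.pi * Complex.I := by
  rw [← neg_eq_zero, ← Complex.sinh_neg, ← mul_eq_zero_iff_right Complex.I_ne_zero,
    ← Complex.sin_mul_I, Complex.sin_eq_zero_iff] at h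
  obtain ⟨k, hk⟩ := h
  exact ⟨k, by linear_combination Complex.I * hk + w * Complex.I_sq⟩

lemma exists_int_of_sin_pi_mul_eq_zero (h : Complex.sin (Real.pi * w) = 0) : ∃ n : ℤ, w = n := by
  obtain ⟨n, hn⟩ := Complex.sin_eq_zero_iff.1 h
  exact ⟨n, mul_left_cancel₀ ofReal_pi_ne_zero (hn.trans (mul_comm _ _))⟩

lemma cos_pi_mul_intCast (n : ℤ) : Complex.cos (Real.pi * n) = (-1) ^ n := by
  rw [mul_comm, ← Complex.ofReal_intCast, ← Complex.ofReal_mul, ← Complex.ofReal_cos,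
    Real.cos_int_mul_pi]
  push_cast
  rfl

lemma tendsto_sub_mul_div_of_hasDerivAt {f h : ℂ → ℂ} {p h' : ℂ} (hf : ContinuousAt f p)
    (hp : h p = 0) (hh : HasDerivAt h h' p) (hh' : h' ≠ 0) :
    Tendsto (fun w => (w - p) * (f w / h w)) (𝓝[≠] p) (𝓝 (f p / h')) := by
  refine ((hf.tendsto.mono_left nhdsWithin_le_nhds).div
    (hasDerivAt_iff_tendsto_slope.1 hh) hh').congr fun w => ?_
  rw [Pi.div_apply, slope_def_field, hp, sub_zero, div_div_eq_mul_div, mul_comm, mul_div_assoc]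

/-- The zero of `w ↦ sinh (τ * w - φ * I)` nearest to the real axis, a pole of `appellKernel`. -/
noncomputable def appellPole (φ : ℝ) (τ : ℂ) : ℂ := φ * Complex.I / τ

/-- The integrand of the residue computation of the Appell–Lerch sum: the factor `π / sin (π * w)`
produces the signs `(-1) ^ n` at the integers. -/
noncomputable def appellIntegrand (φ : ℝ) (τ w : ℂ) : ℂ :=
  appellKernel φ τ w * (Real.pi / Complex.sin (Real.pi * w))

/-- The residue of `appellIntegrand` at `appellPole`. -/
noncomputable def appellResidue (φ : ℝ) (τ : ℂ) : ℂ :=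
  Complex.exp (-(2 * τ * appellPole φ τ ^ 2)) *
    (Real.pi / Complex.sin (Real.pi * appellPole φ τ)) / τ

lemma inv_re_pos (hτ : 0 < τ.re) : 0 < (τ⁻¹).re := by
  rw [Complex.inv_re]
  exact div_pos hτ (Complex.normSq_pos.2 (ne_zero_of_re_pos hτ))

lemma im_ofReal_mul_I_div (a : ℝ) (τ : ℂ) : (a * Complex.I / τ).im = a * (τ⁻¹).re := by
  rw [mul_div_assoc, Complex.im_ofReal_mul, div_eq_mul_inv, Complex.I_mul_im]

lemma mul_appellPole (hτ : τ ≠ 0) : τ * appellPole φ τ = φ * Complex.I :=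
  mul_div_cancel₀ _ hτ

lemma exists_int_of_sinh_mul_sub_eq_zero (hτ : τ ≠ 0)
    (h : Complex.sinh (τ * w - φ * Complex.I) = 0) :
    ∃ k : ℤ, w = appellPole (φ + k * Real.pi) τ := by
  obtain ⟨k, hk⟩ := exists_int_of_sinh_eq_zero h
  refine ⟨k, ?_⟩
  rw [appellPole, eq_div_iff hτ]
  push_cast
  linear_combination hk

lemma appellPole_ne_intCast (hτ : 0 < τ.re) (hφ : φ ≠ 0) (n : ℤ) : appellPole φ τ ≠ n := by
  intro h
  have him := congrArg Complex.im h
  rw [appellPole, im_ofReal_mul_I_div, Complex.intCast_im] at him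
  exact mul_ne_zero hφ (inv_re_pos hτ).ne' him

lemma sinh_mul_intCast_sub_ne_zero (hτ : 0 < τ.re) (hφ : Real.sin φ ≠ 0) (n : ℤ) :
    Complex.sinh (τ * n - φ * Complex.I) ≠ 0 := by
  intro h
  obtain ⟨k, hk⟩ := exists_int_of_sinh_mul_sub_eq_zero (ne_zero_of_re_pos hτ) h
  refine appellPole_ne_intCast hτ (fun h0 => hφ ?_) n hk.symm
  exact Real.sin_eq_zero_iff.2 ⟨-k, by push_cast; linear_combination -h0⟩

lemma tendsto_sub_mul_appellIntegrand_appellPole (hτ : 0 < τ.re) (hφ : φ ≠ 0) :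
    Tendsto (fun w => (w - appellPole φ τ) * appellIntegrand φ τ w) (𝓝[≠] appellPole φ τ)
      (𝓝 (appellResidue φ τ)) := by
  have hτ0 := ne_zero_of_re_pos hτ
  have hsin : Complex.sin (Real.pi * appellPole φ τ) ≠ 0 := fun h =>
    let ⟨n, hn⟩ := exists_int_of_sin_pi_mul_eq_zero h
    appellPole_ne_intCast hτ hφ n hn
  have hzero : τ * appellPole φ τ - φ * Complex.I = 0 := sub_eq_zero.2 (mul_appellPole hτ0)
  have hderiv : HasDerivAt (fun w => Complex.sinh (τ * w - φ * Complex.I)) τ (appellPole φ τ) := by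
    simpa [hzero] using (((hasDerivAt_id (appellPole φ τ)).const_mul τ).sub_const
      (φ * Complex.I)).csinh
  refine (tendsto_sub_mul_div_of_hasDerivAt
    (f := fun w => Complex.exp (-(2 * τ * w ^ 2)) * (Real.pi / Complex.sin (Real.pi * w)))
    (by fun_prop (disch := assumption)) (by rw [hzero, Complex.sinh_zero]) hderiv hτ0).congr
    fun w => ?_
  rw [appellIntegrand, appellKernel]
  ring

lemma tendsto_sub_mul_appellIntegrand_intCast (hτ : 0 < τ.re) (hφ : Real.sin φ ≠ 0) (n : ℤ) :
    Tendsto (fun w => (w - n) * appellIntegrand φ τ w) (𝓝[≠] (n : ℂ))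
      (𝓝 (appellKernel φ τ n / Complex.cos (Real.pi * n))) := by
  have hcos : Complex.cos (Real.pi * n) ≠ 0 := by
    rw [cos_pi_mul_intCast]
    exact zpow_ne_zero _ (by simp)
  have hderiv : HasDerivAt (fun w : ℂ => Complex.sin (Real.pi * w))
      (Real.pi * Complex.cos (Real.pi * n)) n := by
    simpa [mul_comm] using ((hasDerivAt_id (n : ℂ)).const_mul (Real.pi : ℂ)).csin
  have hsinh := sinh_mul_intCast_sub_ne_zero hτ hφ n
  have hlim := tendsto_sub_mul_div_of_hasDerivAt (f := fun w => appellKernel φ τ w * Real.pi)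
    (h := fun w : ℂ => Complex.sin (Real.pi * w)) (p := n)
    (by unfold appellKernel; fun_prop (disch := assumption))
    (Complex.sin_eq_zero_iff.2 ⟨n, mul_comm _ _⟩) hderiv (mul_ne_zero ofReal_pi_ne_zero hcos)
  rw [mul_comm, mul_div_mul_left _ _ ofReal_pi_ne_zero] at hlim
  refine hlim.congr fun w => ?_
  rw [appellIntegrand, mul_div_assoc]

/-- The poles of `appellIntegrand` in a rectangle of half-width `N + 1 / 2`. -/
noncomputable def appellPoles (φ : ℝ) (τ : ℂ) (N : ℕ) : Finset ℂ :=
  insert (appellPole φ τ) ((Finset.Icc (-(N : ℤ)) N).image (↑))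

lemma differentiableOn_appellIntegrand (hτ : 0 < τ.re) (N : ℕ) :
    DifferentiableOn ℂ (appellIntegrand φ τ)
      ({w | |w.re| < N + 1 ∧ (φ - Real.pi) * (τ⁻¹).re < w.im ∧
        w.im < (φ + Real.pi) * (τ⁻¹).re} \ appellPoles φ τ N) := by
  rintro w ⟨⟨hre, hlow, hupp⟩, hw⟩
  have hx := inv_re_pos hτ
  rw [appellPoles, Finset.mem_coe, Finset.mem_insert, not_or] at hw
  have hsinh : Complex.sinh (τ * w - φ * Complex.I) ≠ 0 := by
    intro h
    obtain ⟨k, rfl⟩ := exists_int_of_sinh_mul_sub_eq_zero (ne_zero_of_re_pos hτ) h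
    rw [appellPole, im_ofReal_mul_I_div, mul_lt_mul_iff_left₀ hx] at hlow hupp
    have hk1 : (-1 : ℝ) < k := by nlinarith [Real.pi_pos]
    have hk2 : (k : ℝ) < 1 := by nlinarith [Real.pi_pos]
    norm_cast at hk1 hk2
    obtain rfl : k = 0 := by lia
    simp at hw
  have hsin : Complex.sin (Real.pi * w) ≠ 0 := by
    intro h
    obtain ⟨n, rfl⟩ := exists_int_of_sin_pi_mul_eq_zero h
    rw [Complex.intCast_re, abs_lt] at hre
    norm_cast at hre
    refine hw.2 (Finset.mem_image.2 ⟨n, ?_, rfl⟩)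
    rw [Finset.mem_Icc]
    lia
  unfold appellIntegrand appellKernel
  exact DifferentiableAt.differentiableWithinAt (by fun_prop (disch := assumption))

lemma abs_re_lt_and_abs_im_lt_of_mem_appellPoles (hφ : 0 < φ) (hφ' : φ < Real.pi / 4)
    (hτ : 0 < τ.re) {N : ℕ} (hN : |(appellPole φ τ).re| < N + 1 / 2) {p : ℂ}
    (hp : p ∈ appellPoles φ τ N) : |p.re| < N + 1 / 2 ∧ |p.im| < Real.pi / 4 * (τ⁻¹).re := by
  have hx := inv_re_pos hτ
  rcases Finset.mem_insert.1 hp with rfl | hp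
  · refine ⟨hN, ?_⟩
    rw [appellPole, im_ofReal_mul_I_div, abs_of_pos (by positivity)]
    gcongr
  · obtain ⟨n, hn, rfl⟩ := Finset.mem_image.1 hp
    have hn' : |(n : ℝ)| ≤ N := by
      exact_mod_cast abs_le.2 (Finset.mem_Icc.1 hn)
    rw [Complex.intCast_re, Complex.intCast_im, abs_zero]
    exact ⟨hn'.trans_lt (lt_add_of_pos_right _ one_half_pos), by positivity⟩

lemma rectIntegral_appellIntegrand (hφ : 0 < φ) (hφ' : φ < Real.pi / 4) (hτ : 0 < τ.re) {N : ℕ}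
    (hN : |(appellPole φ τ).re| < N + 1 / 2) :
    rectIntegral (appellIntegrand φ τ) (-(N + 1 / 2)) (N + 1 / 2)
        (-(Real.pi / 4 * (τ⁻¹).re)) (Real.pi / 4 * (τ⁻¹).re) =
      2 * Real.pi * Complex.I *
        (appellResidue φ τ + ∑ n ∈ Finset.Icc (-(N : ℤ)) N, (-1) ^ n * appellKernel φ τ n) := by
  have hx := inv_re_pos hτ
  have hY : 0 < Real.pi / 4 * (τ⁻¹).re := by positivity
  have hsin : Real.sin φ ≠ 0 := (Real.sin_pos_of_pos_of_lt_pi hφ (by linarith)).ne'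
  have hpole := appellPole_ne_intCast hτ hφ.ne'
  have hmem := fun p => abs_re_lt_and_abs_im_lt_of_mem_appellPoles hφ hφ' hτ hN (p := p)
  have hopen : IsOpen {w : ℂ | |w.re| < N + 1 ∧ (φ - Real.pi) * (τ⁻¹).re < w.im ∧
      w.im < (φ + Real.pi) * (τ⁻¹).re} := by
    refine .and (isOpen_lt ?_ ?_) (.and (isOpen_lt ?_ ?_) (isOpen_lt ?_ ?_)) <;> fun_prop
  rw [rectIntegral_eq_sum_residues hopen (fun p => if p = appellPole φ τ then appellResidue φ τ
      else appellKernel φ τ p / Complex.cos (Real.pi * p)) (appellPoles φ τ N) (by linarith)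
    (by linarith) ?_ (fun p hp => ⟨abs_lt.1 (hmem p hp).1, abs_lt.1 (hmem p hp).2⟩)
    (differentiableOn_appellIntegrand hτ N) ?_]
  · have hnot : appellPole φ τ ∉ (Finset.Icc (-(N : ℤ)) N).image ((↑) : ℤ → ℂ) := by
      simp [Ne.symm (hpole _)]
    rw [appellPoles, Finset.sum_insert hnot, if_pos rfl, Finset.sum_image Int.cast_injective.injOn]
    congr 2
    refine Finset.sum_congr rfl fun n _ => ?_
    rw [if_neg (hpole n).symm, cos_pi_mul_intCast, div_eq_mul_inv, ← inv_zpow, inv_neg_one,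
      mul_comm]
  · rintro w ⟨hw, hw'⟩
    refine ⟨?_, ?_, ?_⟩
    · linarith [abs_le.2 hw]
    · nlinarith [hw'.1, Real.pi_pos]
    · nlinarith [hw'.2]
  · intro p hp
    rcases Finset.mem_insert.1 hp with rfl | hp
    · simpa using tendsto_sub_mul_appellIntegrand_appellPole hτ hφ.ne'
    · obtain ⟨n, -, rfl⟩ := Finset.mem_image.1 hp
      rw [if_neg (hpole n).symm]
      exact tendsto_sub_mul_appellIntegrand_intCast hτ hsin n

end AppellKernel

section SinBounds

lemma norm_sinh_sq (z : ℂ) : ‖Complex.sinh z‖ ^ 2 = Real.sinh z.re ^ 2 + Real.sin z.im ^ 2 := by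
  have hz : Complex.sinh z = (Real.sinh z.re * Real.cos z.im : ℝ) +
      (Real.cosh z.re * Real.sin z.im : ℝ) * Complex.I := by
    conv_lhs => rw [← Complex.re_add_im z]
    rw [Complex.sinh_add, Complex.sinh_mul_I, Complex.cosh_mul_I]
    push_cast
    ring
  rw [hz, ← Complex.normSq_eq_norm_sq, Complex.normSq_add_mul_I, mul_pow, mul_pow, Real.cosh_sq]
  linear_combination Real.sinh z.re ^ 2 * Real.sin_sq_add_cos_sq z.im

lemma abs_sinh_re_le_norm_sinh (z : ℂ) : |Real.sinh z.re| ≤ ‖Complex.sinh z‖ :=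
  abs_le_of_sq_le_sq (by rw [norm_sinh_sq]; exact le_add_of_nonneg_right (sq_nonneg _))
    (norm_nonneg _)

lemma abs_sin_im_le_norm_sinh (z : ℂ) : |Real.sin z.im| ≤ ‖Complex.sinh z‖ :=
  abs_le_of_sq_le_sq (by rw [norm_sinh_sq]; exact le_add_of_nonneg_left (sq_nonneg _))
    (norm_nonneg _)

lemma norm_sin_eq_norm_sinh_mul_I (z : ℂ) : ‖Complex.sin z‖ = ‖Complex.sinh (z * Complex.I)‖ := by
  rw [Complex.sinh_mul_I, norm_mul, Complex.norm_I, mul_one]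

lemma abs_sinh_im_le_norm_sin (z : ℂ) : |Real.sinh z.im| ≤ ‖Complex.sin z‖ := by
  simpa [norm_sin_eq_norm_sinh_mul_I, Real.sinh_neg] using
    abs_sinh_re_le_norm_sinh (z * Complex.I)

lemma abs_sin_re_le_norm_sin (z : ℂ) : |Real.sin z.re| ≤ ‖Complex.sin z‖ := by
  simpa [norm_sin_eq_norm_sinh_mul_I] using abs_sin_im_le_norm_sinh (z * Complex.I)

lemma abs_re_le_norm_sinh (z : ℂ) : |z.re| ≤ ‖Complex.sinh z‖ :=
  (Real.self_le_sinh_iff.2 (abs_nonneg _)).trans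
    ((Real.abs_sinh _).symm.trans_le (abs_sinh_re_le_norm_sinh z))

lemma exp_div_four_le_sinh {y : ℝ} (hy : 1 ≤ y) : Real.exp y / 4 ≤ Real.sinh y := by
  have hexp : 2 ≤ Real.exp y := by linarith [Real.add_one_le_exp y]
  have hexp_neg : Real.exp (-y) ≤ 1 := Real.exp_le_one_iff.2 (by linarith)
  rw [Real.sinh_eq]
  linarith

lemma exists_le_norm_sinh_of_sector (K : ℝ) {c : ℝ} (hc : Real.sin c ≠ 0) :
    ∃ ε > 0, ∀ τ : ℂ, 0 < τ.re → |τ.im| ≤ K * τ.re → ∀ s : ℝ,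
      ε ≤ ‖Complex.sinh (τ * s + c * Complex.I)‖ := by
  have hc' := abs_pos.2 hc
  obtain ⟨δ, hδ, hsin⟩ := Metric.eventually_nhds_iff.1
    (Real.continuous_sin.abs.continuousAt.eventually_const_lt (half_lt_self hc'))
  refine ⟨min (|Real.sin c| / 2) (δ / (|K| + 1)), by positivity, fun τ hτ him s => ?_⟩
  rcases lt_or_ge |τ.re * s| (δ / (|K| + 1)) with hs | hs
  · refine (min_le_left _ _).trans (le_trans ?_ (abs_sin_im_le_norm_sinh _))
    refine (hsin (y := _) ?_).le
    rw [lt_div_iff₀ (by positivity), abs_mul, abs_of_pos hτ] at hs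
    have hims : |τ.im| * |s| ≤ |K| * τ.re * |s| := by
      gcongr
      exact him.trans (by gcongr; exact le_abs_self K)
    have him_eq : (τ * s + c * Complex.I).im = τ.im * s + c := by simp
    rw [him_eq, Real.dist_eq, add_sub_cancel_right, abs_mul]
    nlinarith [mul_nonneg hτ.le (abs_nonneg s)]
  · refine (min_le_right _ _).trans (hs.trans (le_trans (le_of_eq ?_) (abs_re_le_norm_sinh _)))
    simp

end SinBounds

section RectangleBounds

variable {φ : ℝ} {τ : ℂ}

lemma norm_exp_neg_two_mul_sq_add_appellPole (hτ : τ ≠ 0) (s b : ℝ) :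
    ‖Complex.exp (-(2 * τ * (s + appellPole b τ) ^ 2))‖ =
      Real.exp (2 * b ^ 2 * (τ⁻¹).re) * Real.exp (-(2 * τ.re) * s ^ 2) := by
  have hsplit : -(2 * τ * (s + appellPole b τ) ^ 2) = (-2 * s ^ 2 : ℝ) * τ +
      (-4 * b * s : ℝ) * Complex.I + (2 * b ^ 2 : ℝ) * τ⁻¹ := by
    rw [appellPole]
    push_cast
    field_simp
    linear_combination -(2 * (b : ℂ) ^ 2) * Complex.I_sq
  rw [hsplit, Complex.norm_exp, ← Real.exp_add]
  simp only [Complex.add_re, Complex.re_ofReal_mul, Complex.I_re]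
  ring_nf

lemma norm_appellIntegrand_add_appellPole_le (hτ : 0 < τ.re) {ε b s : ℝ} (hε : 0 < ε)
    (hb : 1 ≤ Real.pi * |b| * (τ⁻¹).re)
    (hsinh : ε ≤ ‖Complex.sinh (τ * s + (b - φ : ℝ) * Complex.I)‖) :
    ‖appellIntegrand φ τ (s + appellPole b τ)‖ ≤
      4 * Real.pi / ε * Real.exp (-((Real.pi * |b| - 2 * b ^ 2) * (τ⁻¹).re)) *
        Real.exp (-(2 * τ.re) * s ^ 2) := by
  have hx := inv_re_pos hτ
  have hτ0 := ne_zero_of_re_pos hτ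
  have harg : τ * (s + appellPole b τ) - φ * Complex.I =
      τ * s + (b - φ : ℝ) * Complex.I := by
    rw [mul_add, mul_appellPole hτ0]
    push_cast
    ring
  have hsin : Real.exp (Real.pi * |b| * (τ⁻¹).re) / 4 ≤
      ‖Complex.sin (Real.pi * (s + appellPole b τ))‖ := by
    refine (exp_div_four_le_sinh hb).trans (le_trans (le_of_eq ?_) (abs_sinh_im_le_norm_sin _))
    rw [Real.abs_sinh, Complex.im_ofReal_mul, Complex.add_im, Complex.ofReal_im, zero_add,
      appellPole, im_ofReal_mul_I_div, abs_mul, abs_mul, abs_of_pos hx, abs_of_pos Real.pi_pos,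
      mul_assoc]
  rw [← harg] at hsinh
  rw [appellIntegrand, appellKernel, norm_mul, norm_div, norm_div, Complex.norm_real,
    Real.norm_of_nonneg Real.pi_pos.le, norm_exp_neg_two_mul_sq_add_appellPole hτ0]
  calc _ ≤ Real.exp (2 * b ^ 2 * (τ⁻¹).re) * Real.exp (-(2 * τ.re) * s ^ 2) / ε *
        (Real.pi / (Real.exp (Real.pi * |b| * (τ⁻¹).re) / 4)) := by gcongr
    _ = _ := by
        rw [sub_mul, neg_sub, Real.exp_sub]
        field_simp

lemma norm_integral_le_of_gaussian {E : Type*} [NormedAddCommGroup E] [NormedSpace ℝ E]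
    {f : ℝ → E} {K b c u v : ℝ} (hb : 0 < b) (huv : u ≤ v)
    (hf : ∀ y, ‖f y‖ ≤ K * Real.exp (-b * (y - c) ^ 2)) :
    ‖∫ y in u..v, f y‖ ≤ K * √(Real.pi / b) := by
  have hint : MeasureTheory.Integrable (fun y : ℝ => K * Real.exp (-b * (y - c) ^ 2)) :=
    ((integrable_exp_neg_mul_sq hb).comp_sub_right c).const_mul K
  calc ‖∫ y in u..v, f y‖ ≤ ∫ y in u..v, K * Real.exp (-b * (y - c) ^ 2) :=
        intervalIntegral.norm_integral_le_of_norm_le huv (.of_forall fun y _ => hf y)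
          hint.intervalIntegrable
    _ ≤ ∫ y, K * Real.exp (-b * (y - c) ^ 2) := by
        rw [intervalIntegral.integral_of_le huv]
        exact MeasureTheory.setIntegral_le_integral hint
          (.of_forall fun y => (norm_nonneg _).trans (hf y))
    _ = K * √(Real.pi / b) := by
        rw [MeasureTheory.integral_const_mul,
          MeasureTheory.integral_sub_right_eq_self (fun y => Real.exp (-b * y ^ 2)) c,
          integral_gaussian]

lemma norm_integral_appellIntegrand_horizontal_le (hτ : 0 < τ.re) {ε b R : ℝ} (hε : 0 < ε)
    (hb : 1 ≤ Real.pi * |b| * (τ⁻¹).re)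
    (hsinh : ∀ s : ℝ, ε ≤ ‖Complex.sinh (τ * s + (b - φ : ℝ) * Complex.I)‖) (hR : 0 ≤ R) :
    ‖∫ y in (-R)..R, appellIntegrand φ τ (y + (b * (τ⁻¹).re : ℝ) * Complex.I)‖ ≤
      4 * Real.pi / ε * Real.exp (-((Real.pi * |b| - 2 * b ^ 2) * (τ⁻¹).re)) *
        √(Real.pi / (2 * τ.re)) := by
  refine norm_integral_le_of_gaussian (c := (appellPole b τ).re) (by positivity) (by linarith)
    fun y => ?_
  have hshift : (y + (b * (τ⁻¹).re : ℝ) * Complex.I : ℂ) =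
      (y - (appellPole b τ).re : ℝ) + appellPole b τ := by
    have him : (appellPole b τ).im = b * (τ⁻¹).re := im_ofReal_mul_I_div b τ
    rw [← him, Complex.ofReal_sub]
    linear_combination Complex.re_add_im (appellPole b τ)
  rw [hshift]
  exact norm_appellIntegrand_add_appellPole_le hτ hε hb (hsinh _)

lemma norm_exp_neg_two_mul_sq_le (hτ : 0 ≤ τ.re) {r y Y : ℝ} (hy : |y| ≤ Y) :
    ‖Complex.exp (-(2 * τ * (r + y * Complex.I) ^ 2))‖ ≤
      Real.exp (-2 * (τ.re * (r ^ 2 - Y ^ 2) - 2 * |τ.im| * |r| * Y)) := by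
  have hre : (-(2 * τ * (r + y * Complex.I) ^ 2)).re =
      -2 * (τ.re * (r ^ 2 - y ^ 2) - 2 * (τ.im * r * y)) := by
    simp [sq]
    ring
  have hY : y ^ 2 ≤ Y ^ 2 := sq_le_sq' (abs_le.1 hy).1 (abs_le.1 hy).2
  have hcross : τ.im * r * y ≤ |τ.im| * |r| * Y := by
    refine (le_abs_self _).trans ?_
    rw [abs_mul, abs_mul]
    gcongr
  rw [Complex.norm_exp, hre]
  exact Real.exp_le_exp.2 (by nlinarith)

lemma norm_appellIntegrand_vertical_le (hτ : 0 ≤ τ.re) {r y Y : ℝ} (hy : |y| ≤ Y)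
    (hsin : |Real.sin (Real.pi * r)| = 1) (hr : |τ.im| * Y + 1 ≤ τ.re * |r|) :
    ‖appellIntegrand φ τ (r + y * Complex.I)‖ ≤
      Real.pi * Real.exp (-2 * (τ.re * (r ^ 2 - Y ^ 2) - 2 * |τ.im| * |r| * Y)) := by
  have hsin' : 1 ≤ ‖Complex.sin (Real.pi * (r + y * Complex.I))‖ := by
    refine le_trans ?_ (abs_sin_re_le_norm_sin _)
    simpa using hsin.ge
  have hsinh : 1 ≤ ‖Complex.sinh (τ * (r + y * Complex.I) - φ * Complex.I)‖ := by
    refine le_trans ?_ (abs_re_le_norm_sinh _)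
    have hre : (τ * (r + y * Complex.I) - φ * Complex.I).re = τ.re * r - τ.im * y := by simp
    have hy' : |τ.im * y| ≤ |τ.im| * Y := by
      rw [abs_mul]
      gcongr
    have hr' : |τ.re * r| = τ.re * |r| := by rw [abs_mul, abs_of_nonneg hτ]
    rw [hre]
    linarith [abs_sub_abs_le_abs_sub (τ.re * r) (τ.im * y)]
  rw [appellIntegrand, appellKernel, norm_mul, norm_div, norm_div, Complex.norm_real,
    Real.norm_of_nonneg Real.pi_pos.le]
  calc _ ≤ Real.exp (-2 * (τ.re * (r ^ 2 - Y ^ 2) - 2 * |τ.im| * |r| * Y)) / 1 *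
        (Real.pi / 1) := by
        gcongr
        exact norm_exp_neg_two_mul_sq_le hτ hy
    _ = _ := by ring

lemma norm_integral_appellIntegrand_vertical_le (hτ : 0 ≤ τ.re) {r Y : ℝ} (hY : 0 ≤ Y)
    (hsin : |Real.sin (Real.pi * r)| = 1) (hr : |τ.im| * Y + 1 ≤ τ.re * |r|) :
    ‖∫ y in (-Y)..Y, appellIntegrand φ τ (r + y * Complex.I)‖ ≤
      Real.pi * Real.exp (-2 * (τ.re * (r ^ 2 - Y ^ 2) - 2 * |τ.im| * |r| * Y)) * (2 * Y) := by
  refine (intervalIntegral.norm_integral_le_of_norm_le_const fun y hy =>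
    norm_appellIntegrand_vertical_le hτ (abs_le.2 ?_) hsin hr).trans_eq ?_
  · rw [Set.uIoc_of_le (by linarith)] at hy
    exact ⟨hy.1.le, hy.2⟩
  · rw [sub_neg_eq_add, ← two_mul, abs_of_nonneg (mul_nonneg zero_le_two hY)]

lemma norm_rectIntegral_le {f : ℂ → ℂ} {x₁ x₂ y₁ y₂ H V : ℝ}
    (hbot : ‖∫ x in x₁..x₂, f (x + y₁ * Complex.I)‖ ≤ H)
    (htop : ‖∫ x in x₁..x₂, f (x + y₂ * Complex.I)‖ ≤ H)
    (hright : ‖∫ y in y₁..y₂, f (x₂ + y * Complex.I)‖ ≤ V)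
    (hleft : ‖∫ y in y₁..y₂, f (x₁ + y * Complex.I)‖ ≤ V) :
    ‖rectIntegral f x₁ x₂ y₁ y₂‖ ≤ 2 * (H + V) := by
  rw [rectIntegral]
  refine (norm_sub_le _ _).trans ((add_le_add_left
    ((norm_add_le _ _).trans (add_le_add_left (norm_sub_le _ _) _)) _).trans ?_)
  rw [norm_mul, norm_mul, Complex.norm_I, one_mul, one_mul]
  linarith

lemma norm_rectIntegral_appellIntegrand_le (hτ : 0 < τ.re) (hx : 1 ≤ (τ⁻¹).re) {ε : ℝ}
    (hε : 0 < ε)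
    (hsinh : ∀ s : ℝ, ε ≤ ‖Complex.sinh (τ * s + (Real.pi / 4 - φ : ℝ) * Complex.I)‖)
    (hsinh' : ∀ s : ℝ, ε ≤ ‖Complex.sinh (τ * s + (-(Real.pi / 4) - φ : ℝ) * Complex.I)‖)
    {R Y : ℝ} (hR : 0 ≤ R) (hsin : |Real.sin (Real.pi * R)| = 1)
    (hY : Y = Real.pi / 4 * (τ⁻¹).re) (hRY : |τ.im| * Y + 1 ≤ τ.re * R) :
    ‖rectIntegral (appellIntegrand φ τ) (-R) R (-Y) Y‖ ≤
      2 * (4 * Real.pi / ε * Real.exp (-(Real.pi ^ 2 / 8 * (τ⁻¹).re)) * √(Real.pi / (2 * τ.re)) +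
        Real.pi * Real.exp (-2 * (τ.re * (R ^ 2 - Y ^ 2) - 2 * |τ.im| * R * Y)) * (2 * Y)) := by
  have hY0 : 0 ≤ Y := by rw [hY]; positivity
  have hpi : |Real.pi / 4| = Real.pi / 4 := abs_of_pos (by positivity)
  have hb : 1 ≤ Real.pi * (Real.pi / 4) * (τ⁻¹).re := by nlinarith [Real.pi_gt_three]
  have hexp : Real.pi * (Real.pi / 4) - 2 * (Real.pi / 4) ^ 2 = Real.pi ^ 2 / 8 := by ring
  refine norm_rectIntegral_le ?_ ?_ ?_ ?_
  · simpa only [abs_neg, neg_sq, neg_mul, hpi, hexp, hY] using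
      norm_integral_appellIntegrand_horizontal_le (b := -(Real.pi / 4)) hτ hε
        (by rwa [abs_neg, hpi]) hsinh' hR
  · simpa only [hpi, hexp, hY] using
      norm_integral_appellIntegrand_horizontal_le (b := Real.pi / 4) hτ hε (by rwa [hpi]) hsinh hR
  · simpa only [abs_of_nonneg hR] using
      norm_integral_appellIntegrand_vertical_le (r := R) hτ.le hY0 hsin (by rwa [abs_of_nonneg hR])
  · simpa only [abs_neg, neg_sq, abs_of_nonneg hR] using
      norm_integral_appellIntegrand_vertical_le (r := -R) hτ.le hY0
        (by rwa [mul_neg, Real.sin_neg, abs_neg]) (by rwa [abs_neg, abs_of_nonneg hR])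

end RectangleBounds

section MajorArcs

variable {φ : ℝ} {τ : ℂ}

lemma tendsto_vertical_bound {t : ℝ} (ht : 0 < t) (a Y : ℝ) :
    Tendsto (fun R : ℝ => Real.pi * Real.exp (-2 * (t * (R ^ 2 - Y ^ 2) - 2 * a * R * Y)) *
      (2 * Y)) atTop (𝓝 0) := by
  have hquad : Tendsto (fun R : ℝ => t * (R ^ 2 - Y ^ 2) - 2 * a * R * Y) atTop atTop :=
    (tendsto_atTop_add_const_right _ (-(t * Y ^ 2)) (tendsto_id.atTop_mul_atTop₀
      (tendsto_atTop_add_const_right _ (-(2 * a * Y)) (tendsto_id.const_mul_atTop ht)))).congr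
      fun R => by simp only [id]; ring
  simpa using ((Real.tendsto_exp_atBot.comp
    (hquad.const_mul_atTop_of_neg (by norm_num : (-2 : ℝ) < 0))).const_mul Real.pi).mul_const
    (2 * Y)

lemma abs_sin_pi_mul_add_half (N : ℕ) : |Real.sin (Real.pi * (N + 1 / 2))| = 1 := by
  rw [show Real.pi * ((N : ℝ) + 1 / 2) = Real.pi / 2 + N * Real.pi by ring,
    Real.sin_add_nat_mul_pi]
  simp

lemma norm_rankGF_sub_residue_le (hφ : 0 < φ) (hφ' : φ < Real.pi / 4) (hτ : 0 < τ.re)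
    (hx : 1 ≤ (τ⁻¹).re) {ε : ℝ} (hε : 0 < ε)
    (hsinh : ∀ s : ℝ, ε ≤ ‖Complex.sinh (τ * s + (Real.pi / 4 - φ : ℝ) * Complex.I)‖)
    (hsinh' : ∀ s : ℝ, ε ≤ ‖Complex.sinh (τ * s + (-(Real.pi / 4) - φ : ℝ) * Complex.I)‖) :
    ‖rankGF (Complex.exp (2 * φ * Complex.I)) (Complex.exp (-τ)) -
        oddDistinctGF (Complex.exp (-τ)) * (Complex.I * Complex.sin φ * appellResidue φ τ)‖ ≤
      ‖oddDistinctGF (Complex.exp (-τ))‖ *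
        (4 / ε * Real.exp (-(Real.pi ^ 2 / 8 * (τ⁻¹).re)) * √(Real.pi / (2 * τ.re))) := by
  have hsin : Real.sin φ ≠ 0 :=
    (Real.sin_pos_of_pos_of_lt_pi hφ (by linarith [Real.pi_pos])).ne'
  set P := oddDistinctGF (Complex.exp (-τ))
  set Y := Real.pi / 4 * (τ⁻¹).re with hY
  set H := 4 * Real.pi / ε * Real.exp (-(Real.pi ^ 2 / 8 * (τ⁻¹).re)) * √(Real.pi / (2 * τ.re))
    with hH
  have hR : Tendsto (fun N : ℕ => (N : ℝ) + 1 / 2) atTop atTop :=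
    tendsto_atTop_add_const_right _ _ tendsto_natCast_atTop_atTop
  have hbound := ((((tendsto_vertical_bound hτ |τ.im| Y).comp hR).const_add H).const_mul
    2).const_mul (‖P‖ / (2 * Real.pi))
  have hlimit : ‖P‖ / (2 * Real.pi) * (2 * (H + 0)) =
      ‖P‖ * (4 / ε * Real.exp (-(Real.pi ^ 2 / 8 * (τ⁻¹).re)) * √(Real.pi / (2 * τ.re))) := by
    rw [hH]
    field_simp
    ring
  rw [hlimit] at hbound
  refine le_of_tendsto_of_tendsto ((tendsto_rankGF_partial hsin hτ).sub_const _).norm hbound ?_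
  filter_upwards [hR.eventually_gt_atTop |(appellPole φ τ).re|,
    (hR.const_mul_atTop hτ).eventually_ge_atTop (|τ.im| * Y + 1)] with N hN hNY
  have hrect := norm_rectIntegral_appellIntegrand_le (φ := φ) hτ hx hε hsinh hsinh'
    (by positivity) (abs_sin_pi_mul_add_half N) hY hNY
  have hdiff : P * (-(Complex.I * Complex.sin φ) *
        ∑ n ∈ Finset.Icc (-(N : ℤ)) N, (-1) ^ n * appellKernel φ τ n) -
        P * (Complex.I * Complex.sin φ * appellResidue φ τ) =
      P / (2 * Real.pi : ℝ) * -(Real.sin φ : ℂ) *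
        rectIntegral (appellIntegrand φ τ) (-(N + 1 / 2)) (N + 1 / 2) (-Y) Y := by
    rw [rectIntegral_appellIntegrand hφ hφ' hτ hN]
    have := ofReal_pi_ne_zero
    push_cast
    field_simp
    ring
  rw [hdiff, norm_mul, norm_mul, norm_div, norm_neg, Complex.norm_real, Complex.norm_real,
    Real.norm_of_nonneg Real.two_pi_pos.le]
  refine mul_le_mul (mul_le_of_le_one_right (by positivity) (Real.abs_sin_le_one φ)) hrect
    (norm_nonneg _) (by positivity)

/-- The exponential rate of `rankGF (exp (2 * φ * I)) (exp (-τ))` at the cusp. -/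
noncomputable def growthRate (φ : ℝ) : ℝ := 2 * (Real.pi / 4 - φ) ^ 2

/-- The main term of `rankGF (exp (2 * φ * I)) (exp (-τ))` at the cusp. -/
noncomputable def rankMain (φ : ℝ) (τ : ℂ) : ℂ :=
  (2 * τ / Real.pi) ^ (1 / 2 : ℂ) / √2 * (2 * Real.pi * Complex.sin φ / τ) *
    Complex.exp (growthRate φ / τ - τ / 8)

/-- The quotient of the residue contribution by `rankMain`. -/
noncomputable def rankMainCorrection (φ : ℝ) (τ : ℂ) : ℂ :=
  oddDistinctGF (Complex.exp (-τ)) / cuspMain τ /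
    (1 - Complex.exp (-(2 * Real.pi * φ : ℝ) * τ⁻¹))

lemma cuspMain_ne_zero (hτ : τ ≠ 0) : cuspMain τ ≠ 0 := by
  have hbase : (2 * τ / Real.pi : ℂ) ≠ 0 :=
    div_ne_zero (mul_ne_zero two_ne_zero hτ) ofReal_pi_ne_zero
  have hsqrt : ((√2 : ℝ) : ℂ) ≠ 0 := by simp
  exact mul_ne_zero (div_ne_zero ((Complex.cpow_ne_zero_iff).2 (.inl hbase)) hsqrt)
    (Complex.exp_ne_zero _)

lemma sin_pi_mul_appellPole (φ : ℝ) (τ : ℂ) : Complex.sin (Real.pi * appellPole φ τ) =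
    Complex.I * (Complex.exp (Real.pi * φ / τ) *
      (1 - Complex.exp (-(2 * Real.pi * φ : ℝ) * τ⁻¹)) / 2) := by
  have harg : Real.pi * appellPole φ τ = Real.pi * φ / τ * Complex.I := by
    rw [appellPole]
    ring
  rw [harg, Complex.sin_mul_I, Complex.sinh, mul_sub, ← Complex.exp_add, mul_one]
  push_cast
  ring_nf

lemma exp_growthRate_div_sub (φ : ℝ) (τ : ℂ) :
    Complex.exp (growthRate φ / τ - τ / 8) =
      Complex.exp (Real.pi ^ 2 / (8 * τ) - τ / 8) * Complex.exp (2 * φ ^ 2 / τ) /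
        Complex.exp (Real.pi * φ / τ) := by
  rw [← Complex.exp_add, ← Complex.exp_sub, growthRate]
  push_cast
  ring_nf

lemma oddDistinctGF_mul_residue_eq (hτ : τ ≠ 0) :
    oddDistinctGF (Complex.exp (-τ)) * (Complex.I * Complex.sin φ * appellResidue φ τ) =
      rankMain φ τ * rankMainCorrection φ τ := by
  have hsq : -(2 * τ * appellPole φ τ ^ 2) = 2 * φ ^ 2 / τ := by
    rw [appellPole]
    field_simp
    rw [Complex.I_sq, mul_neg_one, neg_neg]
  have hcusp := cuspMain_ne_zero hτ
  rw [rankMainCorrection, appellResidue, sin_pi_mul_appellPole, rankMain, exp_growthRate_div_sub,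
    hsq, ← div_mul_cancel₀ (oddDistinctGF (Complex.exp (-τ))) hcusp,
    mul_div_cancel_right₀ _ hcusp]
  nth_rewrite 2 [cuspMain]
  generalize oddDistinctGF (Complex.exp (-τ)) / cuspMain τ = A
  generalize 1 - Complex.exp (-(2 * Real.pi * φ : ℝ) * τ⁻¹) = D
  have := Complex.exp_ne_zero (Real.pi * φ / τ)
  have := Complex.I_ne_zero
  rcases eq_or_ne D 0 with rfl | hD
  · simp
  · field_simp

lemma tendsto_rankMainCorrection (hφ : 0 < φ) :
    Tendsto (rankMainCorrection φ) cusp (𝓝 1) := by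
  have hexp : Tendsto (fun τ : ℂ => Complex.exp (-(2 * Real.pi * φ : ℝ) * τ⁻¹)) cusp (𝓝 0) := by
    rw [tendsto_zero_iff_norm_tendsto_zero]
    simp only [Complex.norm_exp, ← Complex.ofReal_neg, Complex.re_ofReal_mul]
    exact Real.tendsto_exp_atBot.comp
      (tendsto_inv_re_cusp.const_mul_atTop_of_neg (neg_lt_zero.2 (by positivity)))
  have hlim := tendsto_oddDistinctGF_div_cuspMain.div (hexp.const_sub 1) (by simp)
  rwa [sub_zero, div_one] at hlim

lemma norm_two_mul_div_pi_cpow_half (τ : ℂ) :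
    ‖(2 * τ / Real.pi : ℂ) ^ (1 / 2 : ℂ)‖ = √(2 * ‖τ‖ / Real.pi) := by
  rw [show (1 / 2 : ℂ) = (1 / 2 : ℝ) by push_cast; rfl, Complex.norm_cpow_real,
    Real.sqrt_eq_rpow, norm_div, norm_mul, Complex.norm_real,
    Real.norm_of_nonneg Real.pi_pos.le, Complex.norm_two]

lemma norm_cuspMain_le (hτ : 0 ≤ τ.re) :
    ‖cuspMain τ‖ ≤ √(2 * ‖τ‖ / Real.pi) * Real.exp (Real.pi ^ 2 / 8 * (τ⁻¹).re) := by
  have hre : (Real.pi ^ 2 / (8 * τ) - τ / 8 : ℂ).re =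
      Real.pi ^ 2 / 8 * (τ⁻¹).re - 1 / 8 * τ.re := by
    rw [← Complex.re_ofReal_mul, ← Complex.re_ofReal_mul, ← Complex.sub_re]
    push_cast
    ring_nf
  rw [cuspMain, norm_mul, norm_div, Complex.norm_exp, norm_two_mul_div_pi_cpow_half, hre,
    Complex.norm_real, Real.norm_of_nonneg (Real.sqrt_nonneg _)]
  gcongr
  · exact div_le_self (Real.sqrt_nonneg _) (Real.one_le_sqrt.2 one_le_two)
  · linarith

lemma sqrt_mul_sqrt_le_of_sector {K : ℝ} (hτ : 0 < τ.re) (hsec : |τ.im| ≤ K * τ.re) :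
    √(2 * ‖τ‖ / Real.pi) * √(Real.pi / (2 * τ.re)) ≤ √(1 + K) := by
  rw [← Real.sqrt_mul (by positivity)]
  apply Real.sqrt_le_sqrt
  have hnorm := Complex.norm_le_abs_re_add_abs_im τ
  rw [abs_of_pos hτ] at hnorm
  field_simp
  linarith

lemma exists_eventually_norm_rankGF_sub_rankMain_le (hφ : 0 < φ) (hφ' : φ < Real.pi / 4)
    (K : ℝ) : ∃ C, ∀ᶠ τ : ℂ in cusp, |τ.im| ≤ K * τ.re →
      ‖rankGF (Complex.exp (2 * φ * Complex.I)) (Complex.exp (-τ)) -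
        rankMain φ τ * rankMainCorrection φ τ‖ ≤ C := by
  obtain ⟨ε₁, hε₁, hsinh₁⟩ := exists_le_norm_sinh_of_sector K (c := Real.pi / 4 - φ)
    (Real.sin_pos_of_pos_of_lt_pi (by linarith) (by linarith [Real.pi_pos])).ne'
  obtain ⟨ε₂, hε₂, hsinh₂⟩ := exists_le_norm_sinh_of_sector K (c := -(Real.pi / 4) - φ)
    (Real.sin_neg_of_neg_of_neg_pi_lt (by linarith [Real.pi_pos])
      (by linarith [Real.pi_pos])).ne
  have hε : 0 < min ε₁ ε₂ := lt_min hε₁ hε₂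
  refine ⟨8 / min ε₁ ε₂ * √(1 + K), ?_⟩
  filter_upwards [tendsto_oddDistinctGF_div_cuspMain.norm.eventually_le_const
      (by simp : ‖(1 : ℂ)‖ < 2), tendsto_inv_re_cusp.eventually_ge_atTop 1,
    eventually_cusp_re_pos] with τ hquot hx hτ hsec
  have hτ0 := ne_zero_of_re_pos hτ
  have hP : ‖oddDistinctGF (Complex.exp (-τ))‖ ≤
      2 * (√(2 * ‖τ‖ / Real.pi) * Real.exp (Real.pi ^ 2 / 8 * (τ⁻¹).re)) := by
    rw [norm_div, div_le_iff₀ (norm_pos_iff.2 (cuspMain_ne_zero hτ0))] at hquot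
    exact hquot.trans (by gcongr; exact norm_cuspMain_le hτ.le)
  rw [← oddDistinctGF_mul_residue_eq hτ0]
  refine (norm_rankGF_sub_residue_le hφ hφ' hτ hx hε
    (fun s => (min_le_left _ _).trans (hsinh₁ τ hτ hsec s))
    (fun s => (min_le_right _ _).trans (hsinh₂ τ hτ hsec s))).trans ?_
  calc _ ≤ 2 * (√(2 * ‖τ‖ / Real.pi) * Real.exp (Real.pi ^ 2 / 8 * (τ⁻¹).re)) *
        (4 / min ε₁ ε₂ * Real.exp (-(Real.pi ^ 2 / 8 * (τ⁻¹).re)) * √(Real.pi / (2 * τ.re))) := by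
        gcongr
    _ = 8 / min ε₁ ε₂ * (√(2 * ‖τ‖ / Real.pi) * √(Real.pi / (2 * τ.re))) := by
        rw [Real.exp_neg]
        field_simp
        ring
    _ ≤ 8 / min ε₁ ε₂ * √(1 + K) := by
        gcongr
        exact sqrt_mul_sqrt_le_of_sector hτ hsec

end MajorArcs

/-! ### The circle method -/

section CircleMethod

variable {z : ℂ} {t : ℝ}

/-- The point `t + iθ` of the vertical line over `t`; the circle `|q| = exp (-t)` is the image of
`|θ| ≤ π` under `τ ↦ exp (-τ)`. -/
noncomputable def circlePoint (t θ : ℝ) : ℂ := t + θ * Complex.I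

@[simp] lemma circlePoint_re (t θ : ℝ) : (circlePoint t θ).re = t := by simp [circlePoint]

@[simp] lemma circlePoint_im (t θ : ℝ) : (circlePoint t θ).im = θ := by simp [circlePoint]

@[fun_prop] lemma continuous_circlePoint (t : ℝ) : Continuous (circlePoint t) := by
  unfold circlePoint
  fun_prop

/-- The integrand `R2(z; exp (-τ)) exp (nτ)` whose integral over the circle extracts
`rankSum z n`. -/
noncomputable def circleIntegrand (z : ℂ) (n : ℕ) (t θ : ℝ) : ℂ :=
  rankGF z (Complex.exp (-circlePoint t θ)) * Complex.exp (n * circlePoint t θ)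

lemma norm_exp_natCast_mul_circlePoint (n : ℕ) (t θ : ℝ) :
    ‖Complex.exp (n * circlePoint t θ)‖ = Real.exp (n * t) := by
  rw [Complex.norm_exp, ← Complex.ofReal_natCast, Complex.re_ofReal_mul, circlePoint_re]

lemma norm_exp_neg_circlePoint (t θ : ℝ) :
    ‖Complex.exp (-circlePoint t θ)‖ = Real.exp (-t) := by
  rw [norm_exp_neg, circlePoint_re]

lemma hasSum_rankSum_circlePoint (hz : ‖z‖ = 1) (ht : 0 < t) (θ : ℝ) :
    HasSum (fun k => rankSum z k * Complex.exp (-circlePoint t θ) ^ k)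
      (rankGF z (Complex.exp (-circlePoint t θ))) :=
  hasSum_rankSum hz (norm_exp_neg_lt_one (by rwa [circlePoint_re]))

lemma norm_rankSum_mul_circlePoint (z : ℂ) (k : ℕ) (t θ : ℝ) :
    ‖rankSum z k * Complex.exp (-circlePoint t θ) ^ k‖ = ‖rankSum z k‖ * Real.exp (-t) ^ k := by
  rw [norm_mul, norm_pow, norm_exp_neg_circlePoint]

lemma summable_norm_rankSum_mul_exp (hz : ‖z‖ = 1) (ht : 0 < t) :
    Summable (fun k => ‖rankSum z k‖ * Real.exp (-t) ^ k) :=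
  (hasSum_rankSum_circlePoint hz ht 0).summable.norm.congr fun k =>
    norm_rankSum_mul_circlePoint z k t 0

lemma continuous_circleIntegrand (hz : ‖z‖ = 1) (ht : 0 < t) (n : ℕ) :
    Continuous (circleIntegrand z n t) := by
  have hgf : Continuous fun θ => rankGF z (Complex.exp (-circlePoint t θ)) := by
    simp only [← (hasSum_rankSum_circlePoint hz ht _).tsum_eq]
    exact continuous_tsum (fun k => by fun_prop) (summable_norm_rankSum_mul_exp hz ht)
      fun k θ => (norm_rankSum_mul_circlePoint z k t θ).le
  exact hgf.mul (by fun_prop)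

lemma integral_exp_int_mul_I (m : ℤ) :
    ∫ θ in (-Real.pi)..Real.pi, Complex.exp (m * Complex.I * θ) =
      if m = 0 then (2 * Real.pi : ℂ) else 0 := by
  split_ifs with hm
  · simp [hm, two_mul]
  · have hends : Complex.exp (m * Complex.I * Real.pi) =
        Complex.exp (m * Complex.I * (-Real.pi : ℝ)) :=
      Complex.exp_eq_exp_iff_exists_int.2 ⟨m, by push_cast; ring⟩
    rw [integral_exp_mul_complex (mul_ne_zero (Int.cast_ne_zero.2 hm) Complex.I_ne_zero), hends,
      sub_self, zero_div]

lemma integral_rankSum_mul_circlePoint (z : ℂ) (n k : ℕ) (t : ℝ) :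
    ∫ θ in (-Real.pi)..Real.pi, rankSum z k * Complex.exp (-circlePoint t θ) ^ k *
      Complex.exp (n * circlePoint t θ) = if k = n then 2 * Real.pi * rankSum z n else 0 := by
  have hsplit (θ : ℝ) : rankSum z k * Complex.exp (-circlePoint t θ) ^ k *
      Complex.exp (n * circlePoint t θ) = rankSum z k * Complex.exp ((n - k : ℤ) * t) *
        Complex.exp ((n - k : ℤ) * Complex.I * θ) := by
    rw [mul_assoc, mul_assoc, exp_neg_pow, ← Complex.exp_add, ← Complex.exp_add, circlePoint]
    push_cast
    ring_nf
  simp only [hsplit]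
  rw [intervalIntegral.integral_const_mul, integral_exp_int_mul_I]
  rcases eq_or_ne k n with rfl | hkn
  · simp [mul_comm]
  · rw [if_neg hkn, if_neg (by omega), mul_zero]

lemma integral_circleIntegrand (hz : ‖z‖ = 1) (ht : 0 < t) (n : ℕ) :
    ∫ θ in (-Real.pi)..Real.pi, circleIntegrand z n t θ = 2 * Real.pi * rankSum z n := by
  have hsum := intervalIntegral.hasSum_integral_of_dominated_convergence
    (μ := MeasureTheory.volume) (a := -Real.pi) (b := Real.pi)
    (F := fun k θ => rankSum z k * Complex.exp (-circlePoint t θ) ^ k *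
      Complex.exp (n * circlePoint t θ)) (f := circleIntegrand z n t)
    (fun k _ => ‖rankSum z k‖ * Real.exp (-t) ^ k * Real.exp (n * t))
    (fun k => (by fun_prop : Continuous _).aestronglyMeasurable)
    (fun k => .of_forall fun θ _ => by
      rw [norm_mul, norm_rankSum_mul_circlePoint, norm_exp_natCast_mul_circlePoint])
    (.of_forall fun θ _ => (summable_norm_rankSum_mul_exp hz ht).mul_right _)
    intervalIntegrable_const
    (.of_forall fun θ _ => (hasSum_rankSum_circlePoint hz ht θ).mul_right _)
  simp only [integral_rankSum_mul_circlePoint] at hsum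
  exact hsum.unique (hasSum_ite_eq n _)

end CircleMethod

section SaddlePoint

variable {φ X u v K : ℝ}

lemma circlePoint_mul (t u : ℝ) : circlePoint t (t * u) = t * circlePoint 1 u := by
  rw [circlePoint, circlePoint]
  push_cast
  ring

lemma circlePoint_one_ne_zero (u : ℝ) : circlePoint 1 u ≠ 0 :=
  ne_zero_of_re_pos (by rw [circlePoint_re]; exact one_pos)

/-- The profile of the integrand on the major arc. Under the scaling `v ^ 2 = X * u ^ 2` the slope
`u` tends to `0` as `X → ∞` for fixed `v`, and the profile becomes the Gaussian `exp (-v ^ 2)`. -/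
noncomputable def arcProfile (u v : ℝ) : ℂ :=
  circlePoint 1 u ^ (1 / 2 : ℂ) / circlePoint 1 u * Complex.exp (-(v ^ 2 / circlePoint 1 u))

/-- The size of the integrand at the saddle point `τ = growthRate φ / X`. -/
noncomputable def saddleHeight (φ X : ℝ) : ℝ :=
  2 * √Real.pi * Real.sin φ / √(growthRate φ / X) * Real.exp (2 * X)

lemma growthRate_pos (hφ : φ ≠ Real.pi / 4) : 0 < growthRate φ := by
  have := sub_ne_zero.2 hφ.symm
  unfold growthRate
  positivity

lemma saddleHeight_pos (hsin : 0 < Real.sin φ) (hβ : 0 < growthRate φ) (hX : 0 < X) :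
    0 < saddleHeight φ X := by
  have := Real.sqrt_pos.2 (div_pos hβ hX)
  unfold saddleHeight
  positivity

lemma ofReal_mul_cpow_half {a : ℝ} (ha : 0 < a) {w : ℂ} (hw : w ≠ 0) :
    ((a : ℂ) * w) ^ (1 / 2 : ℂ) = √a * w ^ (1 / 2 : ℂ) := by
  rw [Complex.cpow_def_of_ne_zero (mul_ne_zero (Complex.ofReal_ne_zero.2 ha.ne') hw),
    Complex.cpow_def_of_ne_zero hw, Complex.log_ofReal_mul ha hw, add_mul, Complex.exp_add,
    Real.sqrt_eq_rpow, Real.rpow_def_of_pos ha]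
  push_cast
  rfl

lemma sqrt_two_mul_div_pi_mul (φ : ℝ) {t : ℝ} (ht : 0 < t) :
    √(2 * t / Real.pi) / √2 * (2 * Real.pi * Real.sin φ / t) =
      2 * √Real.pi * Real.sin φ / √t := by
  rw [mul_div_assoc, Real.sqrt_mul zero_le_two, Real.sqrt_div ht.le]
  have := Real.sqrt_pos.2 ht
  have := Real.sqrt_pos.2 Real.pi_pos
  field_simp
  rw [Real.sq_sqrt ht.le, Real.sq_sqrt Real.pi_pos.le]
  ring

lemma exp_div_circlePoint_mul_exp {β : ℝ} (hβ : β ≠ 0) (hX : X ≠ 0) {n : ℕ}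
    (hn : (n : ℝ) = X ^ 2 / β + 1 / 8) (hv : v ^ 2 = X * u ^ 2) :
    Complex.exp (β / circlePoint (β / X) (β / X * u) - circlePoint (β / X) (β / X * u) / 8) *
      Complex.exp (n * circlePoint (β / X) (β / X * u)) =
    Complex.exp (2 * X) * Complex.exp (-(v ^ 2 / circlePoint 1 u)) := by
  have hnC : (n : ℂ) = X ^ 2 / β + 1 / 8 := by
    rw [← Complex.ofReal_natCast, hn]
    push_cast
    rfl
  have hvC : (v : ℂ) ^ 2 = X * u ^ 2 := by exact_mod_cast hv
  have : (β : ℂ) ≠ 0 := Complex.ofReal_ne_zero.2 hβ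
  have : (X : ℂ) ≠ 0 := Complex.ofReal_ne_zero.2 hX
  have hz := circlePoint_one_ne_zero u
  rw [circlePoint_mul, ← Complex.exp_add, ← Complex.exp_add, hnC, hvC]
  push_cast
  congr 1
  field_simp
  rw [circlePoint]
  push_cast
  linear_combination 8 * (X : ℂ) ^ 2 * u ^ 2 * Complex.I_sq

lemma rankMain_mul_exp (hβ : 0 < growthRate φ) (hX : 0 < X) {n : ℕ}
    (hn : (n : ℝ) = X ^ 2 / growthRate φ + 1 / 8) (hv : v ^ 2 = X * u ^ 2) :
    rankMain φ (circlePoint (growthRate φ / X) (growthRate φ / X * u)) *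
        Complex.exp (n * circlePoint (growthRate φ / X) (growthRate φ / X * u)) =
      saddleHeight φ X * arcProfile u v := by
  have ht := div_pos hβ hX
  have hz := circlePoint_one_ne_zero u
  rw [rankMain, mul_assoc _ (Complex.exp _), exp_div_circlePoint_mul_exp hβ.ne' hX.ne' hn hv,
    saddleHeight, ← sqrt_two_mul_div_pi_mul φ ht, arcProfile, circlePoint_mul,
    show 2 * ((growthRate φ / X : ℝ) * circlePoint 1 u) / Real.pi =
      (2 * (growthRate φ / X) / Real.pi : ℝ) * circlePoint 1 u by push_cast; ring,
    ofReal_mul_cpow_half (by positivity) hz]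
  push_cast
  have : (growthRate φ / X : ℂ) ≠ 0 := by exact_mod_cast ht.ne'
  field_simp

lemma normSq_circlePoint_one_le (hu : |u| ≤ K) :
    Complex.normSq (circlePoint 1 u) ≤ 1 + K ^ 2 := by
  rw [Complex.normSq_apply, circlePoint_re, circlePoint_im]
  linear_combination sq_le_sq' (neg_le_of_abs_le hu) (le_of_abs_le hu)

lemma le_inv_re_circlePoint_one (hu : |u| ≤ K) :
    1 / (1 + K ^ 2) ≤ ((circlePoint 1 u)⁻¹).re := by
  rw [Complex.inv_re, circlePoint_re]
  exact one_div_le_one_div_of_le (Complex.normSq_pos.2 (circlePoint_one_ne_zero u))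
    (normSq_circlePoint_one_le hu)

lemma le_inv_re_circlePoint {β : ℝ} (hβ : 0 < β) (hX : 0 < X) (hu : |u| ≤ K) :
    X / β * (1 / (1 + K ^ 2)) ≤ ((circlePoint (β / X) (β / X * u))⁻¹).re := by
  rw [circlePoint_mul, mul_inv, ← Complex.ofReal_inv, Complex.re_ofReal_mul, inv_div]
  gcongr
  exact le_inv_re_circlePoint_one hu

lemma tendsto_circlePoint_cusp {ι : Type*} {l : Filter ι} {β : ℝ} (hβ : 0 < β) {x s : ι → ℝ}
    (hx : Tendsto x l atTop) (hs : ∀ᶠ i in l, |s i| ≤ K) :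
    Tendsto (fun i => circlePoint (β / x i) (β / x i * s i)) l cusp := by
  have hlower := (hx.atTop_div_const hβ).atTop_mul_const (by positivity : 0 < 1 / (1 + K ^ 2))
  refine tendsto_comap_iff.2 (tendsto_atTop_mono' _ ?_ hlower)
  filter_upwards [hs, hx.eventually_gt_atTop 0] with i hi hxi
  exact le_inv_re_circlePoint hβ hxi hi

lemma eventually_forall_circlePoint_of_cusp {β : ℝ} (hβ : 0 < β) (K : ℝ) {p : ℂ → Prop}
    (hp : ∀ᶠ τ in cusp, p τ) :
    ∀ᶠ X : ℝ in atTop, ∀ u : ℝ, |u| ≤ K → p (circlePoint (β / X) (β / X * u)) := by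
  have hfst : Tendsto Prod.fst ((atTop : Filter ℝ) ×ˢ 𝓟 {u : ℝ | |u| ≤ K}) atTop := tendsto_fst
  have hsnd : ∀ᶠ y : ℝ × ℝ in atTop ×ˢ 𝓟 {u : ℝ | |u| ≤ K}, |y.2| ≤ K :=
    tendsto_snd (eventually_principal.2 fun _ hu => hu)
  exact (eventually_prod_principal_iff.1
    ((tendsto_circlePoint_cusp hβ hfst hsnd).eventually hp)).mono fun _ h u hu => h u hu

lemma norm_arcProfile_le (hu : |u| ≤ K) (v : ℝ) :
    ‖arcProfile u v‖ ≤ Real.exp (-(1 / (1 + K ^ 2)) * v ^ 2) := by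
  have hnorm : 1 ≤ ‖circlePoint 1 u‖ := by
    simpa using Complex.abs_re_le_norm (circlePoint 1 u)
  have hcpow : ‖circlePoint 1 u ^ (1 / 2 : ℂ)‖ ≤ ‖circlePoint 1 u‖ := by
    rw [show (1 / 2 : ℂ) = (1 / 2 : ℝ) by push_cast; rfl, Complex.norm_cpow_real]
    exact Real.rpow_le_self_of_one_le hnorm (by norm_num)
  have hre : (-(v ^ 2 / circlePoint 1 u) : ℂ).re = -((circlePoint 1 u)⁻¹).re * v ^ 2 := by
    rw [div_eq_mul_inv, ← Complex.ofReal_pow, ← mul_neg, Complex.re_ofReal_mul, Complex.neg_re,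
      mul_comm]
  rw [arcProfile, norm_mul, norm_div, Complex.norm_exp, hre]
  refine (mul_le_of_le_one_left (Real.exp_pos _).le
    (div_le_one_of_le₀ hcpow (norm_nonneg _))).trans ?_
  gcongr
  exact le_inv_re_circlePoint_one hu

lemma tendsto_arcProfile (v : ℝ) :
    Tendsto (fun u => arcProfile u v) (𝓝 0) (𝓝 (Real.exp (-v ^ 2) : ℝ)) := by
  have hz : ContinuousAt (circlePoint 1) 0 := (continuous_circlePoint 1).continuousAt
  have hz0 := circlePoint_one_ne_zero 0
  have hslit : circlePoint 1 0 ∈ Complex.slitPlane := .inl (by simp)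
  have hcont : ContinuousAt (fun u => arcProfile u v) 0 :=
    ((hz.cpow continuousAt_const hslit).div hz hz0).mul
      (continuousAt_const.div hz hz0).neg.cexp
  simpa [arcProfile, circlePoint] using hcont.tendsto

lemma norm_exp_natCast_mul_circlePoint_le {β : ℝ} (hβ : 0 < β) (hβX : β ≤ X) {n : ℕ}
    (hn : (n : ℝ) = X ^ 2 / β + 1 / 8) (θ : ℝ) :
    ‖Complex.exp (n * circlePoint (β / X) θ)‖ ≤ Real.exp (X + 1) := by
  have hX := hβ.trans_le hβX
  have hre : n * (β / X) = X + β / X / 8 := by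
    rw [hn]
    field_simp
  have := div_le_one_of_le₀ hβX hX.le
  rw [norm_exp_natCast_mul_circlePoint, hre]
  gcongr
  linarith

lemma le_saddleHeight (hsin : 0 ≤ Real.sin φ) (hβ : 0 < growthRate φ)
    (hβX : growthRate φ ≤ X) :
    2 * √Real.pi * Real.sin φ * Real.exp (2 * X) ≤ saddleHeight φ X := by
  have hX := hβ.trans_le hβX
  rw [saddleHeight]
  gcongr
  exact le_div_self (by positivity) (Real.sqrt_pos.2 (div_pos hβ hX))
    (Real.sqrt_le_one.2 (div_le_one_of_le₀ hβX hX.le))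

end SaddlePoint

section MajorArcIntegral

variable {φ K : ℝ}

lemma sin_pos_of_lt_pi_div_four (hφ : 0 < φ) (hφ' : φ < Real.pi / 4) : 0 < Real.sin φ :=
  Real.sin_pos_of_pos_of_lt_pi hφ (by linarith [Real.pi_pos])

lemma exists_eventually_norm_circleIntegrand_sub_le (hφ : 0 < φ) (hφ' : φ < Real.pi / 4) (K : ℝ) :
    ∃ C, ∀ᶠ X : ℝ in atTop, ∀ (n : ℕ) (u v : ℝ), (n : ℝ) = X ^ 2 / growthRate φ + 1 / 8 →
      |u| ≤ K → v ^ 2 = X * u ^ 2 →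
      ‖circleIntegrand (Complex.exp (2 * φ * Complex.I)) n (growthRate φ / X)
          (growthRate φ / X * u) / saddleHeight φ X -
        arcProfile u v * rankMainCorrection φ
          (circlePoint (growthRate φ / X) (growthRate φ / X * u))‖ ≤ C * Real.exp (-X) := by
  obtain ⟨C, hC⟩ := exists_eventually_norm_rankGF_sub_rankMain_le hφ hφ' K
  have hsin := sin_pos_of_lt_pi_div_four hφ hφ'
  have hβ := growthRate_pos hφ'.ne
  refine ⟨C * Real.exp 1 / (2 * √Real.pi * Real.sin φ), ?_⟩
  filter_upwards [eventually_forall_circlePoint_of_cusp hβ K hC,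
    eventually_ge_atTop (growthRate φ)] with X hmain hβX n u v hn hu hv
  have hX := hβ.trans_le hβX
  have ht := div_pos hβ hX
  have hheight := saddleHeight_pos hsin hβ hX
  have happrox := hmain u hu (by
    rw [circlePoint_re, circlePoint_im, abs_mul, abs_of_pos ht, mul_comm]
    gcongr)
  have hfactor := rankMain_mul_exp hβ hX hn hv
  set τ := circlePoint (growthRate φ / X) (growthRate φ / X * u) with hτ
  have hdiff : circleIntegrand (Complex.exp (2 * φ * Complex.I)) n (growthRate φ / X)
        (growthRate φ / X * u) / saddleHeight φ X - arcProfile u v * rankMainCorrection φ τ =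
      (rankGF (Complex.exp (2 * φ * Complex.I)) (Complex.exp (-τ)) -
        rankMain φ τ * rankMainCorrection φ τ) * Complex.exp (n * τ) / saddleHeight φ X := by
    have : (saddleHeight φ X : ℂ) ≠ 0 := Complex.ofReal_ne_zero.2 hheight.ne'
    rw [circleIntegrand, ← hτ, sub_mul, mul_right_comm (rankMain φ τ), hfactor]
    field_simp
  rw [hdiff, norm_div, norm_mul, Complex.norm_real, Real.norm_of_nonneg hheight.le]
  have hC0 := (norm_nonneg _).trans happrox
  calc _ ≤ C * Real.exp (X + 1) / (2 * √Real.pi * Real.sin φ * Real.exp (2 * X)) := by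
        gcongr
        · exact norm_exp_natCast_mul_circlePoint_le hβ hβX hn _
        · exact le_saddleHeight hsin.le hβ hβX
    _ = _ := by
        rw [show 2 * X = X + X by ring, Real.exp_add, Real.exp_add, Real.exp_neg]
        field_simp

/-- The value of the large parameter `X` for which `growthRate φ / X` is the saddle point of the
integrand extracting `rankSum (exp (2 * φ * I)) n`. -/
noncomputable def saddleParam (φ : ℝ) (n : ℕ) : ℝ := (Real.pi / 4 - φ) * √(8 * n - 1) / 2

lemma tendsto_saddleParam (hφ : φ < Real.pi / 4) : Tendsto (saddleParam φ) atTop atTop := by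
  have hsqrt := Real.tendsto_sqrt_atTop.comp (tendsto_atTop_add_const_right _ (-1)
    ((tendsto_natCast_atTop_atTop (R := ℝ)).const_mul_atTop (by norm_num : (0 : ℝ) < 8)))
  exact (hsqrt.const_mul_atTop (sub_pos.2 hφ)).atTop_div_const two_pos

lemma natCast_eq_saddleParam_sq_div (hφ : φ ≠ Real.pi / 4) {n : ℕ} (hn : n ≠ 0) :
    (n : ℝ) = saddleParam φ n ^ 2 / growthRate φ + 1 / 8 := by
  have : (1 : ℝ) ≤ n := by exact_mod_cast Nat.one_le_iff_ne_zero.2 hn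
  have := sub_ne_zero.2 hφ.symm
  rw [saddleParam, growthRate, div_pow, mul_pow, Real.sq_sqrt (by linarith)]
  generalize Real.pi / 4 - φ = d at *
  field_simp
  ring

lemma tendsto_pow_mul_exp_neg_mul (k : ℕ) {c : ℝ} (hc : 0 < c) :
    Tendsto (fun X : ℝ => X ^ k * Real.exp (-c * X)) atTop (𝓝 0) := by
  simpa only [Real.rpow_natCast] using tendsto_rpow_mul_exp_neg_mul_atTop_nhds_zero k c hc

lemma eventually_mul_exp_neg_le_inv_one_add_sq (C K : ℝ) :
    ∀ᶠ X : ℝ in atTop, ∀ v : ℝ, |v| ≤ K * √X → C * Real.exp (-X) ≤ (1 + v ^ 2)⁻¹ := by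
  have hdecay : Tendsto (fun X : ℝ => |C| * Real.exp (-X) * (1 + K ^ 2 * X)) atTop (𝓝 0) := by
    have hlim := ((tendsto_pow_mul_exp_neg_mul 0 one_pos).const_mul |C|).add
      ((tendsto_pow_mul_exp_neg_mul 1 one_pos).const_mul (|C| * K ^ 2))
    rw [mul_zero, mul_zero, add_zero] at hlim
    exact hlim.congr fun X => by ring_nf
  filter_upwards [hdecay.eventually_le_const one_pos, eventually_ge_atTop 0] with X hX hX0 v hv
  have hsq : v ^ 2 ≤ K ^ 2 * X := by
    rw [← sq_abs, ← Real.sq_sqrt hX0, ← mul_pow]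
    gcongr
  rw [← one_div, le_div_iff₀ (by positivity)]
  exact (by gcongr; exact le_abs_self C : _ ≤ |C| * Real.exp (-X) * (1 + K ^ 2 * X)).trans hX

/-- The integrand on the major arc `|θ| ≤ K * (growthRate φ / X)`, normalised by its size at the
saddle point, as a function of `v = √X * θ / (growthRate φ / X)`. -/
noncomputable def scaledMajorArc (φ K : ℝ) (n : ℕ) : ℝ → ℂ :=
  (Set.Ioc (-(K * √(saddleParam φ n))) (K * √(saddleParam φ n))).indicator fun v =>
    circleIntegrand (Complex.exp (2 * φ * Complex.I)) n (growthRate φ / saddleParam φ n)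
      (growthRate φ / saddleParam φ n * (v / √(saddleParam φ n))) / saddleHeight φ (saddleParam φ n)

lemma sq_eq_mul_div_sqrt_sq {X : ℝ} (hX : 0 < X) (v : ℝ) : v ^ 2 = X * (v / √X) ^ 2 := by
  rw [div_pow, Real.sq_sqrt hX.le, mul_div_cancel₀ _ hX.ne']

lemma tendsto_scaledMajorArc (hφ : 0 < φ) (hφ' : φ < Real.pi / 4) (hK : 0 < K) (v : ℝ) :
    Tendsto (fun n => scaledMajorArc φ K n v) atTop (𝓝 (Real.exp (-v ^ 2) : ℝ)) := by
  have hX := tendsto_saddleParam hφ'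
  have hsqrt := Real.tendsto_sqrt_atTop.comp hX
  have hu : Tendsto (fun n => v / √(saddleParam φ n)) atTop (𝓝 0) := hsqrt.const_div_atTop v
  have huK : ∀ᶠ n in atTop, |v / √(saddleParam φ n)| ≤ K :=
    (abs_zero (α := ℝ) ▸ hu.abs).eventually_le_const hK
  have hlim := ((tendsto_arcProfile v).comp hu).mul ((tendsto_rankMainCorrection hφ).comp
    (tendsto_circlePoint_cusp (growthRate_pos hφ'.ne) hX huK))
  obtain ⟨C, hC⟩ := exists_eventually_norm_circleIntegrand_sub_le hφ hφ' K
  have herr := (Real.tendsto_exp_neg_atTop_nhds_zero.comp hX).const_mul C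
  rw [mul_zero] at herr
  have hdiff : Tendsto (fun n => scaledMajorArc φ K n v -
      arcProfile (v / √(saddleParam φ n)) v * rankMainCorrection φ
        (circlePoint (growthRate φ / saddleParam φ n)
          (growthRate φ / saddleParam φ n * (v / √(saddleParam φ n))))) atTop (𝓝 0) := by
    refine squeeze_zero_norm' ?_ herr
    filter_upwards [hX.eventually hC, huK, eventually_ne_atTop 0, hX.eventually_gt_atTop 0,
      (hsqrt.const_mul_atTop hK).eventually_gt_atTop |v|] with n happrox hun hn hXn hvn
    have hmem : v ∈ Set.Ioc (-(K * √(saddleParam φ n))) (K * √(saddleParam φ n)) :=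
      ⟨(abs_lt.1 hvn).1, (abs_lt.1 hvn).2.le⟩
    rw [scaledMajorArc, Set.indicator_of_mem hmem]
    exact happrox n _ v (natCast_eq_saddleParam_sq_div hφ'.ne hn) hun (sq_eq_mul_div_sqrt_sq hXn v)
  have hsum := hdiff.add hlim
  rw [zero_add, mul_one] at hsum
  exact hsum.congr fun n => sub_add_cancel _ _

lemma eventually_norm_scaledMajorArc_le (hφ : 0 < φ) (hφ' : φ < Real.pi / 4) (K : ℝ) :
    ∀ᶠ n in atTop, ∀ v, ‖scaledMajorArc φ K n v‖ ≤
      2 * Real.exp (-(1 / (1 + K ^ 2)) * v ^ 2) + (1 + v ^ 2)⁻¹ := by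
  have hX := tendsto_saddleParam hφ'
  obtain ⟨C, hC⟩ := exists_eventually_norm_circleIntegrand_sub_le hφ hφ' K
  have hcorr := (tendsto_rankMainCorrection hφ).norm.eventually_le_const (by simp : ‖(1 : ℂ)‖ < 2)
  filter_upwards [hX.eventually hC, eventually_ne_atTop 0, hX.eventually_gt_atTop 0,
    hX.eventually (eventually_forall_circlePoint_of_cusp (growthRate_pos hφ'.ne) K hcorr),
    hX.eventually (eventually_mul_exp_neg_le_inv_one_add_sq C K)]
    with n happrox hn hXn hcorrn hdecay v
  by_cases hv : v ∈ Set.Ioc (-(K * √(saddleParam φ n))) (K * √(saddleParam φ n))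
  · have hvK : |v| ≤ K * √(saddleParam φ n) := abs_le.2 ⟨hv.1.le, hv.2⟩
    have hu : |v / √(saddleParam φ n)| ≤ K := by
      have hsqrt := Real.sqrt_pos.2 hXn
      rwa [abs_div, abs_of_pos hsqrt, div_le_iff₀ hsqrt]
    have hmain := mul_le_mul (hcorrn _ hu) (norm_arcProfile_le hu v) (norm_nonneg _) zero_le_two
    rw [← norm_mul, mul_comm] at hmain
    have herr := (happrox n _ v (natCast_eq_saddleParam_sq_div hφ'.ne hn) hu
      (sq_eq_mul_div_sqrt_sq hXn v)).trans (hdecay v hvK)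
    rw [scaledMajorArc, Set.indicator_of_mem hv, add_comm]
    exact (norm_le_norm_sub_add _ _).trans (add_le_add herr hmain)
  · rw [scaledMajorArc, Set.indicator_of_notMem hv, norm_zero]
    positivity

lemma tendsto_integral_scaledMajorArc (hφ : 0 < φ) (hφ' : φ < Real.pi / 4) (hK : 0 < K) :
    Tendsto (fun n => ∫ v, scaledMajorArc φ K n v) atTop (𝓝 (√Real.pi : ℝ)) := by
  have hgauss : ∫ v : ℝ, ((Real.exp (-v ^ 2) : ℝ) : ℂ) = (√Real.pi : ℝ) := by
    rw [integral_complex_ofReal]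
    simpa using integral_gaussian 1
  rw [← hgauss]
  refine MeasureTheory.tendsto_integral_filter_of_dominated_convergence
    (fun v => 2 * Real.exp (-(1 / (1 + K ^ 2)) * v ^ 2) + (1 + v ^ 2)⁻¹) ?_
    ((eventually_norm_scaledMajorArc_le hφ hφ' K).mono fun _ hn => .of_forall hn)
    (((integrable_exp_neg_mul_sq (by positivity)).const_mul 2).add integrable_inv_one_add_sq)
    (.of_forall (tendsto_scaledMajorArc hφ hφ' hK))
  filter_upwards [(tendsto_saddleParam hφ').eventually_gt_atTop 0] with n hXn
  have := continuous_circleIntegrand (norm_exp_two_mul_mul_I φ)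
    (div_pos (growthRate_pos hφ'.ne) hXn) n
  exact (by fun_prop : Continuous _).aestronglyMeasurable.indicator measurableSet_Ioc

end MajorArcIntegral

section Assembly

variable {φ K : ℝ}

/-- The size of the integral over the major arc, up to the Gaussian factor `√π`. -/
noncomputable def majorArcSize (φ X : ℝ) : ℝ :=
  2 * √Real.pi * Real.sin φ * √(growthRate φ) / X * Real.exp (2 * X)

lemma majorArcSize_pos (hsin : 0 < Real.sin φ) (hβ : 0 < growthRate φ) {X : ℝ} (hX : 0 < X) :
    0 < majorArcSize φ X := by
  unfold majorArcSize
  positivity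

lemma div_sqrt_mul_saddleHeight (hβ : 0 < growthRate φ) {X : ℝ} (hX : 0 < X) :
    growthRate φ / X / √X * saddleHeight φ X = majorArcSize φ X := by
  rw [saddleHeight, majorArcSize, Real.sqrt_div hβ.le]
  have := Real.sqrt_pos.2 hX
  have := Real.sqrt_pos.2 hβ
  field_simp
  rw [Real.sq_sqrt hβ.le, mul_comm]

lemma integral_majorArc (hφ : 0 < φ) (hφ' : φ < Real.pi / 4) (hK : 0 < K) {n : ℕ}
    (hX : 0 < saddleParam φ n) :
    ∫ θ in (-(K * (growthRate φ / saddleParam φ n)))..(K * (growthRate φ / saddleParam φ n)),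
        circleIntegrand (Complex.exp (2 * φ * Complex.I)) n (growthRate φ / saddleParam φ n) θ =
      majorArcSize φ (saddleParam φ n) * ∫ v, scaledMajorArc φ K n v := by
  have hβ := growthRate_pos hφ'.ne
  have hheight := saddleHeight_pos (sin_pos_of_lt_pi_div_four hφ hφ') hβ hX
  simp only [scaledMajorArc]
  rw [← div_sqrt_mul_saddleHeight hβ hX, MeasureTheory.integral_indicator measurableSet_Ioc]
  generalize saddleParam φ n = X at hX hheight ⊢
  have := Real.sqrt_pos.2 hX
  have hbound : K * (growthRate φ / X) = growthRate φ / X / √X * (K * √X) := by field_simp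
  have hscale (v : ℝ) : growthRate φ / X * (v / √X) = growthRate φ / X / √X * v := by ring
  have : (saddleHeight φ X : ℂ) ≠ 0 := Complex.ofReal_ne_zero.2 hheight.ne'
  rw [← intervalIntegral.integral_of_le (neg_le_self (by positivity)),
    intervalIntegral.integral_div, hbound, ← mul_neg,
    ← intervalIntegral.smul_integral_comp_mul_left, Complex.real_smul, Complex.ofReal_mul,
    mul_assoc _ (saddleHeight φ X : ℂ), mul_div_cancel₀ _ this]
  simp only [hscale]

lemma norm_integral_sub_integral_le {E : Type*} [NormedAddCommGroup E] [NormedSpace ℝ E]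
    {f : ℝ → E} (hf : Continuous f) {r R C : ℝ} (hr : 0 ≤ r) (hrR : r ≤ R)
    (hC : ∀ x, r ≤ |x| → |x| ≤ R → ‖f x‖ ≤ C) :
    ‖(∫ x in (-R)..R, f x) - ∫ x in (-r)..r, f x‖ ≤ C * (2 * (R - r)) := by
  have hint (a b : ℝ) : IntervalIntegrable f MeasureTheory.volume a b := hf.intervalIntegrable a b
  have hleft : ‖∫ x in (-R)..(-r), f x‖ ≤ C * |-r - -R| := by
    refine intervalIntegral.norm_integral_le_of_norm_le_const fun x hx => ?_
    rw [Set.uIoc_of_le (neg_le_neg hrR)] at hx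
    have habs : |x| = -x := abs_of_nonpos (by linarith [hx.2])
    exact hC x (by linarith [hx.2]) (by linarith [hx.1])
  have hright : ‖∫ x in r..R, f x‖ ≤ C * |R - r| := by
    refine intervalIntegral.norm_integral_le_of_norm_le_const fun x hx => ?_
    rw [Set.uIoc_of_le hrR] at hx
    rw [← abs_of_nonneg (hr.trans hx.1.le)] at hx
    exact hC x hx.1.le hx.2
  rw [neg_sub_neg] at hleft
  rw [abs_of_nonneg (sub_nonneg.2 hrR)] at hleft hright
  rw [← intervalIntegral.integral_add_adjacent_intervals (hint (-R) r) (hint r R),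
    ← intervalIntegral.integral_add_adjacent_intervals (hint (-R) (-r)) (hint (-r) r),
    add_sub_right_comm, add_sub_cancel_right]
  refine (norm_add_le _ _).trans ?_
  linarith

lemma lt_growthRate (hφ : φ ≤ Real.pi / 10) : 0.443 < growthRate φ := by
  unfold growthRate
  nlinarith [Real.pi_gt_d2]

lemma norm_circleIntegrand_le_of_minorArc {z : ℂ} (hz : ‖z‖ = 1) {β X : ℝ} (hβ : 0.443 < β)
    (hβX : β ≤ X) {n : ℕ} (hn : (n : ℝ) = X ^ 2 / β + 1 / 8) {θ : ℝ}
    (hθ : 1000 * (β / X) ≤ |θ|) (hθ' : |θ| ≤ Real.pi) :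
    ‖circleIntegrand z n (β / X) θ‖ ≤
      Real.exp (0.98 * X + 5) * (1 + 16 / (β / X) ^ 2) * Real.exp (X + 1) := by
  have hβ0 : 0 < β := by linarith
  have hX := hβ0.trans_le hβX
  -- The minor arcs are negligible because `0.434`, their exponential rate, is less than `β`.
  have hexp : 0.434 / (β / X) ≤ 0.98 * X := by
    rw [div_div_eq_mul_div, div_le_iff₀ hβ0]
    nlinarith
  have hgf := norm_rankGF_le_of_sector (τ := circlePoint (β / X) θ) hz
    (by rw [circlePoint_re]; positivity)
    (by rw [circlePoint_re]; exact div_le_one_of_le₀ hβX hX.le)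
    (by rwa [circlePoint_im]) (by rwa [circlePoint_re, circlePoint_im])
  rw [circlePoint_re] at hgf
  rw [circleIntegrand, norm_mul]
  refine mul_le_mul (hgf.trans ?_) (norm_exp_natCast_mul_circlePoint_le hβ0 hβX hn θ)
    (norm_nonneg _) (by positivity)
  gcongr

lemma norm_integral_minorArc_le {z : ℂ} (hz : ‖z‖ = 1) {β X : ℝ} (hβ : 0.443 < β)
    (hβX : 1000 * β ≤ X) {n : ℕ} (hn : (n : ℝ) = X ^ 2 / β + 1 / 8) :
    ‖(∫ θ in (-Real.pi)..Real.pi, circleIntegrand z n (β / X) θ) -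
        ∫ θ in (-(1000 * (β / X)))..(1000 * (β / X)), circleIntegrand z n (β / X) θ‖ ≤
      Real.exp (0.98 * X + 5) * (1 + 16 / (β / X) ^ 2) * Real.exp (X + 1) * (2 * Real.pi) := by
  have hX : 0 < X := by linarith
  have ht : 0 < β / X := div_pos (by linarith) hX
  have hπ : 1000 * (β / X) ≤ Real.pi := by
    rw [← mul_div_assoc]
    exact (div_le_one_of_le₀ hβX hX.le).trans (by linarith [Real.pi_gt_three])
  refine (norm_integral_sub_integral_le (continuous_circleIntegrand hz ht n) (by positivity) hπ
    fun θ => norm_circleIntegrand_le_of_minorArc hz hβ (by linarith) hn).trans ?_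
  gcongr
  linarith

lemma minorArc_bound_div_majorArcSize (hsin : 0 < Real.sin φ) (hβ : 0 < growthRate φ) {X : ℝ}
    (hX : 0 < X) :
    Real.exp (0.98 * X + 5) * (1 + 16 / (growthRate φ / X) ^ 2) * Real.exp (X + 1) *
        (2 * Real.pi) / majorArcSize φ X =
      Real.exp 6 * √Real.pi / (Real.sin φ * √(growthRate φ)) *
        (X ^ 1 * Real.exp (-0.02 * X) +
          16 / growthRate φ ^ 2 * (X ^ 3 * Real.exp (-0.02 * X))) := by
  have hexp : Real.exp (0.98 * X + 5) * Real.exp (X + 1) =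
      Real.exp 6 * Real.exp (-0.02 * X) * Real.exp (2 * X) := by
    rw [← Real.exp_add, ← Real.exp_add, ← Real.exp_add]
    ring_nf
  have := Real.sqrt_pos.2 hβ
  have := Real.sqrt_pos.2 Real.pi_pos
  rw [mul_right_comm (Real.exp _), hexp, majorArcSize]
  field_simp
  rw [Real.sq_sqrt Real.pi_pos.le]

lemma tendsto_minorArc_div_majorArcSize (hφ : 0 < φ) (hφ' : φ ≤ Real.pi / 10) :
    Tendsto (fun n : ℕ =>
      ((∫ θ in (-Real.pi)..Real.pi, circleIntegrand (Complex.exp (2 * φ * Complex.I)) n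
          (growthRate φ / saddleParam φ n) θ) -
        ∫ θ in (-(1000 * (growthRate φ / saddleParam φ n)))..
          (1000 * (growthRate φ / saddleParam φ n)),
          circleIntegrand (Complex.exp (2 * φ * Complex.I)) n
            (growthRate φ / saddleParam φ n) θ) / majorArcSize φ (saddleParam φ n))
      atTop (𝓝 0) := by
  have hφ'' : φ < Real.pi / 4 := by linarith [Real.pi_pos]
  have hβ := growthRate_pos hφ''.ne
  have hsin := sin_pos_of_lt_pi_div_four hφ hφ''
  have hX := tendsto_saddleParam hφ''
  have hlim := ((tendsto_pow_mul_exp_neg_mul 1 (by norm_num : (0 : ℝ) < 0.02)).add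
    ((tendsto_pow_mul_exp_neg_mul 3 (by norm_num : (0 : ℝ) < 0.02)).const_mul
      (16 / growthRate φ ^ 2))).const_mul
        (Real.exp 6 * √Real.pi / (Real.sin φ * √(growthRate φ)))
  rw [mul_zero, add_zero, mul_zero] at hlim
  refine squeeze_zero_norm' ?_ (hlim.comp hX)
  filter_upwards [hX.eventually_ge_atTop (1000 * growthRate φ), eventually_ne_atTop 0] with n hXn hn
  have hX0 : 0 < saddleParam φ n := by linarith
  have hsize := majorArcSize_pos hsin hβ hX0
  rw [norm_div, Complex.norm_real, Real.norm_of_nonneg hsize.le, Function.comp_apply,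
    ← minorArc_bound_div_majorArcSize hsin hβ hX0]
  gcongr
  exact norm_integral_minorArc_le (norm_exp_two_mul_mul_I φ) (lt_growthRate hφ') hXn
    (natCast_eq_saddleParam_sq_div hφ''.ne hn)

lemma tendsto_rankSum_div_majorArcSize (hφ : 0 < φ) (hφ' : φ ≤ Real.pi / 10) :
    Tendsto (fun n : ℕ => 2 * Real.pi * rankSum (Complex.exp (2 * φ * Complex.I)) n /
      majorArcSize φ (saddleParam φ n)) atTop (𝓝 (√Real.pi : ℝ)) := by
  have hφ'' : φ < Real.pi / 4 := by linarith [Real.pi_pos]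
  have hβ := growthRate_pos hφ''.ne
  have hsum := (tendsto_minorArc_div_majorArcSize hφ hφ').add
    (tendsto_integral_scaledMajorArc hφ hφ'' (by norm_num : (0 : ℝ) < 1000))
  rw [zero_add] at hsum
  refine hsum.congr' ?_
  filter_upwards [(tendsto_saddleParam hφ'').eventually_gt_atTop 0] with n hXn
  have hsize : (majorArcSize φ (saddleParam φ n) : ℂ) ≠ 0 := Complex.ofReal_ne_zero.2
    (majorArcSize_pos (sin_pos_of_lt_pi_div_four hφ hφ'') hβ hXn).ne'
  rw [integral_circleIntegrand (norm_exp_two_mul_mul_I φ) (div_pos hβ hXn),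
    integral_majorArc hφ hφ'' (by norm_num) hXn]
  field_simp
  ring

lemma tendsto_exp_div_cosh : Tendsto (fun x => Real.exp x / Real.cosh x) atTop (𝓝 2) := by
  have hexp : Tendsto (fun x : ℝ => Real.exp (-2 * x)) atTop (𝓝 0) := by
    simpa only [pow_zero, one_mul] using tendsto_pow_mul_exp_neg_mul 0 two_pos
  have hlim : Tendsto (fun x : ℝ => 2 / (1 + Real.exp (-2 * x))) atTop (𝓝 (2 / (1 + 0))) :=
    tendsto_const_nhds.div (hexp.const_add 1) (by norm_num)
  rw [add_zero, div_one] at hlim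
  refine hlim.congr fun x => ?_
  have hsplit : Real.exp (-x) = Real.exp x * Real.exp (-2 * x) := by
    rw [← Real.exp_add]
    ring_nf
  rw [Real.cosh_eq, hsplit]
  field_simp

lemma majorArcSize_saddleParam (hφ : φ < Real.pi / 4) (n : ℕ) :
    majorArcSize φ (saddleParam φ n) = 4 * √2 * √Real.pi * Real.sin φ / √(8 * n - 1) *
      Real.exp ((Real.pi / 4 - φ) * √(8 * n - 1)) := by
  have hd := sub_pos.2 hφ
  have hsqrt : √(growthRate φ) = √2 * (Real.pi / 4 - φ) := by
    rw [growthRate, Real.sqrt_mul zero_le_two, Real.sqrt_sq hd.le]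
  rw [majorArcSize, saddleParam, hsqrt]
  generalize Real.pi / 4 - φ = d at hd ⊢
  rw [show 2 * (d * √(8 * n - 1) / 2) = d * √(8 * n - 1) by ring]
  field_simp
  ring

lemma exp_div_cosh_div_majorArcSize (hφ : φ < Real.pi / 4) (hsin : Real.sin φ ≠ 0) (n : ℕ) :
    2 * Real.pi / majorArcSize φ (saddleParam φ n) *
        (Real.exp (2 * saddleParam φ n) / Real.cosh (2 * saddleParam φ n)) *
        (√Real.pi / (2 * Real.pi)) =
      √(8 * n - 1) / (4 * √2 * Real.sin φ * Real.cosh ((Real.pi / 4 - φ) * √(8 * n - 1))) := by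
  have hX : 2 * saddleParam φ n = (Real.pi / 4 - φ) * √(8 * n - 1) := by
    rw [saddleParam]
    ring
  have := Real.sqrt_pos.2 Real.pi_pos
  rw [majorArcSize_saddleParam hφ, hX]
  field_simp

theorem tendsto_rankSum_mul_sqrt_div_cosh (hφ : 0 < φ) (hφ' : φ ≤ Real.pi / 10) :
    Tendsto (fun n : ℕ => rankSum (Complex.exp (2 * φ * Complex.I)) n * (√(8 * n - 1) : ℝ) /
      (4 * √2 * Real.sin φ * Real.cosh ((Real.pi / 4 - φ) * √(8 * n - 1)) : ℝ)) atTop (𝓝 1) := by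
  have hφ'' : φ < Real.pi / 4 := by linarith [Real.pi_pos]
  have hsin := sin_pos_of_lt_pi_div_four hφ hφ''
  have hX := tendsto_saddleParam hφ''
  have hcosh := (Complex.continuous_ofReal.tendsto 2).comp
    (tendsto_exp_div_cosh.comp (hX.const_mul_atTop two_pos))
  have hlim := ((tendsto_rankSum_div_majorArcSize hφ hφ').mul hcosh).mul_const
    ((√Real.pi / (2 * Real.pi) : ℝ) : ℂ)
  have hone : (√Real.pi : ℂ) * (2 : ℝ) * (√Real.pi / (2 * Real.pi) : ℝ) = 1 := by
    norm_cast
    have := Real.pi_pos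
    field_simp
    exact Real.sq_sqrt this.le
  rw [hone] at hlim
  refine hlim.congr fun n => ?_
  have hsize := congrArg Complex.ofReal (exp_div_cosh_div_majorArcSize hφ'' hsin.ne' n)
  simp only [Function.comp_apply]
  push_cast at hsize ⊢
  linear_combination rankSum (Complex.exp (2 * φ * Complex.I)) n * hsize

lemma sin_pi_div_ten : Real.sin (Real.pi / 10) = (√5 - 1) / 4 := by
  have hsqrt : 1 < √5 := Real.lt_sqrt_of_sq_lt (by norm_num)
  refine (sq_eq_sq₀ (Real.sin_nonneg_of_nonneg_of_le_pi (by positivity)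
    (by linarith [Real.pi_pos])) (by linarith)).1 ?_
  rw [Real.sin_sq_eq_half_sub, show 2 * (Real.pi / 10) = Real.pi / 5 by ring,
    Real.cos_pi_div_five]
  linear_combination -Real.sq_sqrt (by norm_num : (0 : ℝ) ≤ 5) / 16

lemma four_mul_sqrt_two_mul_sin_pi_div_ten :
    4 * √2 * Real.sin (Real.pi / 10) = √2 * (√5 - 1) := by
  rw [sin_pi_div_ten]
  ring

theorem Acoef_one_tenth_asymptotic_general (a : ℤ) (c : ℕ) (ha : 0 < a) (hac : 10 * a ≤ c) :
    Tendsto (fun n : ℕ => Acoef a c n * (√(8 * n - 1) : ℝ) /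
      (4 * √2 * Real.sin (Real.pi * a / c) *
        Real.cosh (Real.pi * (1 / 4 - a / c) * √(8 * n - 1)) : ℝ)) atTop (𝓝 1) := by
  have hc : (0 : ℝ) < c := by exact_mod_cast (by linarith : (0 : ℤ) < c)
  have : (0 : ℝ) < a := by exact_mod_cast ha
  have hacR : 10 * (a : ℝ) ≤ c := by exact_mod_cast hac
  have hle : Real.pi * a / c ≤ Real.pi / 10 := by
    rw [div_le_div_iff₀ hc (by norm_num)]
    nlinarith [Real.pi_pos]
  refine (tendsto_rankSum_mul_sqrt_div_cosh (φ := Real.pi * a / c) (by positivity) hle).congr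
    fun n => ?_
  rw [Acoef_eq_rankSum a (by exact_mod_cast hc.ne'),
    show Real.pi / 4 - Real.pi * a / c = Real.pi * (1 / 4 - a / c) by ring]

end Assembly

theorem Acoef_one_tenth_asymptotic :
    Filter.Tendsto
      (fun n : ℕ =>
        Acoef 1 10 n * ((Real.sqrt (8 * (n : ℝ) - 1) : ℝ) : ℂ) /
          (((Real.sqrt 2 * (Real.sqrt 5 - 1) : ℝ) : ℂ) *
            ((Real.cosh (3 * Real.pi * Real.sqrt (8 * (n : ℝ) - 1) / 20) : ℝ) : ℂ)))
      Filter.atTop (nhds 1) := by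
  refine (Acoef_one_tenth_asymptotic_general 1 10 one_pos le_rfl).congr fun n => ?_
  rw [Int.cast_one, Nat.cast_ofNat, mul_one, four_mul_sqrt_two_mul_sin_pi_div_ten,
    show Real.pi * (1 / 4 - 1 / 10) * √(8 * n - 1) = 3 * Real.pi * √(8 * n - 1) / 20 by ring,
    Complex.ofReal_mul]
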